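/- arXiv:1501.07724 — 2 statements merged into one kernel-verified Lean document; each statement's English description precedes it below -/
import Mathlib

section
/- Let p be a prime and let ℤ/p act smoothly (by diffeomorphisms) on the standard smooth sphere S^n with n odd, and suppose the fixed point set (S^n)^{ℤ/p} is homeomorphic to a sphere S^k of odd dimension k. Then S^n admits a nowhere-vanishing equivariant vector field, i.e. a continuous section v of the tangent bundle of S^n with v(x) ≠ 0 for all x and d(g·)_x(v(x)) = v(g·x) for every g ∈ ℤ/p and x ∈ S^n, where d(g·)_x denotes the differential at x of the diffeomorphism given by the action of g. -/
open Set unitInterval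

namespace PaperTC

variable {G X : Type*}

/-- The orbit of `x` under the action `act`. -/
def orbit (act : G → X → X) (x : X) : Set X := {y | ∃ g, act g x = y}

/-- The fixed point set of the action `act`. -/
def fixedSet (act : G → X → X) : Set X := {x | ∀ g, act g x = x}

/-- The fixed point set of a subset `S` of the acting group. -/
def fixedSetOf (act : G → X → X) (S : Set G) : Set X := {x | ∀ g ∈ S, act g x = x}

/-- `minCover P` is the least `k ≥ 1` satisfying `P k`, as an element of `ℕ∞`
(equal to `∞` if there is no such `k`). -/
noncomputable def minCover (P : ℕ → Prop) : ℕ∞ :=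
  sInf {k : ℕ∞ | ∃ m : ℕ, k = m ∧ 1 ≤ m ∧ P m}

section Plain

variable (Y : Type*) [TopologicalSpace Y]

/-- `Y × Y` can be covered by `k` open sets each admitting a motion planner. -/
def TCcover (k : ℕ) : Prop :=
  ∃ U : Fin k → Set (Y × Y),
    (∀ i, IsOpen (U i)) ∧ (⋃ i, U i) = univ ∧
    ∀ i, ∃ s : Y × Y → C(I, Y),
      ContinuousOn s (U i) ∧ ∀ p ∈ U i, s p 0 = p.1 ∧ s p 1 = p.2

/-- Topological complexity (non-reduced, possibly infinite). -/
noncomputable def TC : ℕ∞ := minCover (TCcover Y)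

/-- `Y` can be covered by `k` open sets, each of which can be deformed within `Y`
to a point. -/
def catCover (k : ℕ) : Prop :=
  ∃ U : Fin k → Set Y,
    (∀ i, IsOpen (U i)) ∧ (⋃ i, U i) = univ ∧
    ∀ i, ∃ H : Y × I → Y,
      ContinuousOn H (U i ×ˢ (univ : Set I)) ∧ (∀ x ∈ U i, H (x, 0) = x) ∧
      ∃ y₀, ∀ x ∈ U i, H (x, 1) = y₀

/-- Non-reduced Lusternik–Schnirelmann category. -/
noncomputable def cat : ℕ∞ := minCover (catCover Y)

end Plain

section Equivariant

variable [TopologicalSpace X] (act : G → X → X)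

/-- `X × X` can be covered by `k` invariant open sets each admitting an
equivariant motion planner. -/
def eqTCcover (k : ℕ) : Prop :=
  ∃ U : Fin k → Set (X × X),
    (∀ i, IsOpen (U i)) ∧ (⋃ i, U i) = univ ∧
    ∀ i, (∀ g p, p ∈ U i → (act g p.1, act g p.2) ∈ U i) ∧
      ∃ s : X × X → C(I, X),
        ContinuousOn s (U i) ∧
        (∀ p ∈ U i, s p 0 = p.1 ∧ s p 1 = p.2) ∧
        (∀ g p, p ∈ U i → ∀ t : I, s (act g p.1, act g p.2) t = act g (s p t))

/-- Equivariant topological complexity `TC_G` of Colman and Grant. -/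
noncomputable def eqTC : ℕ∞ := minCover (eqTCcover act)

/-- `X × X` can be covered by `k` `(G × G)`-invariant open sets, each admitting a
`(G × G)`-equivariant section of `π^G : P X ×_{X/G} P X → X × X`; such a section is
recorded by a pair of paths `s₁ p`, `s₂ p`, with the orbit of the endpoint of the first
equal to the orbit of the starting point of the second. -/
def invTCcover (k : ℕ) : Prop :=
  ∃ U : Fin k → Set (X × X),
    (∀ i, IsOpen (U i)) ∧ (⋃ i, U i) = univ ∧
    ∀ i, (∀ g₁ g₂ : G, ∀ p, p ∈ U i → (act g₁ p.1, act g₂ p.2) ∈ U i) ∧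
      ∃ s₁ s₂ : X × X → C(I, X),
        ContinuousOn s₁ (U i) ∧ ContinuousOn s₂ (U i) ∧
        (∀ p ∈ U i, s₁ p 0 = p.1 ∧ s₂ p 1 = p.2 ∧
          orbit act (s₁ p 1) = orbit act (s₂ p 0)) ∧
        (∀ g₁ g₂ : G, ∀ p, p ∈ U i → ∀ t : I,
          s₁ (act g₁ p.1, act g₂ p.2) t = act g₁ (s₁ p t) ∧
          s₂ (act g₁ p.1, act g₂ p.2) t = act g₂ (s₂ p t))

/-- Invariant topological complexity `TC^G` of Lubawski and Marzantowicz. -/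
noncomputable def invTC : ℕ∞ := minCover (invTCcover act)

/-- The invariant open set `U` is `G`-compressible into `A`: the inclusion `U ↪ X` is
`G`-equivariantly homotopic to a `G`-map with values in `A`. -/
def GCompressible (A : Set X) (U : Set X) : Prop :=
  (∀ g x, x ∈ U → act g x ∈ U) ∧
  ∃ H : X × I → X,
    ContinuousOn H (U ×ˢ (univ : Set I)) ∧ (∀ x ∈ U, H (x, 0) = x) ∧
    (∀ g x, x ∈ U → ∀ t : I, H (act g x, t) = act g (H (x, t))) ∧
    (∀ x ∈ U, H (x, 1) ∈ A)

/-- A `G`-categorical set: compressible into a single orbit. -/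
def GCategorical (U : Set X) : Prop :=
  ∃ x₀ : X, GCompressible act (orbit act x₀) U

/-- `X` can be covered by `k` open `G`-categorical sets. -/
def catGCover (k : ℕ) : Prop :=
  ∃ U : Fin k → Set X,
    (∀ i, IsOpen (U i)) ∧ (⋃ i, U i) = univ ∧ ∀ i, GCategorical act (U i)

/-- Equivariant Lusternik–Schnirelmann category `cat_G`. -/
noncomputable def catG : ℕ∞ := minCover (catGCover act)

/-- `X` can be covered by `k` open sets `G`-compressible into `{star}`. -/
def pointedCatGCover (star : X) (k : ℕ) : Prop :=
  ∃ U : Fin k → Set X,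
    (∀ i, IsOpen (U i)) ∧ (⋃ i, U i) = univ ∧
    ∀ i, GCompressible act {star} (U i)

/-- The pointed equivariant category `_{{⋆}}cat_G(X)`. -/
noncomputable def pointedCatG (star : X) : ℕ∞ := minCover (pointedCatGCover act star)

/-- `X` is `G`-contractible: the identity is `G`-homotopic to a map with values in a
single orbit. -/
def GContractible : Prop :=
  ∃ H : X × I → X,
    Continuous H ∧ (∀ x, H (x, 0) = x) ∧
    (∀ g x, ∀ t : I, H (act g x, t) = act g (H (x, t))) ∧
    ∃ x₀ : X, ∀ x, H (x, 1) ∈ orbit act x₀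

end Equivariant

/-- The orbit space `X/G` with the quotient topology. -/
abbrev OrbitSpace (act : G → X → X) : Type _ := Quot (fun x y => ∃ g, act g x = y)

end PaperTC
namespace PaperTC

/-- The unit sphere `S^n ⊆ ℝ^{n+1}` (with the Euclidean metric). -/
abbrev Sph (n : ℕ) : Set (EuclideanSpace ℝ (Fin (n + 1))) := Metric.sphere 0 1

/-- The action of `G` on the unit sphere `S^n` obtained by restricting an orthogonal
representation of `G` on `ℝ^{n+1}`. -/
noncomputable def sphereAct {G : Type*} [Monoid G] {n : ℕ}
    (ρ : G →* (EuclideanSpace ℝ (Fin (n + 1)) ≃ₗᵢ[ℝ] EuclideanSpace ℝ (Fin (n + 1)))) :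
    G → ↥(Sph n) → ↥(Sph n) := fun g x =>
  ⟨ρ g x, mem_sphere_zero_iff_norm.mpr (by
    rw [(ρ g).norm_map]; exact mem_sphere_zero_iff_norm.mp x.2)⟩

end PaperTC

open PaperTC Manifold

open Set unitInterval
open PaperTC Manifold

namespace EqVF

open Topology Filter MeasureTheory Metric

section Tools

variable {H : Type*} [NormedAddCommGroup H] [InnerProductSpace ℝ H] [FiniteDimensional ℝ H]

lemma exists_cutoff {C O : Set H} (hC : IsCompact C) (hO : IsOpen O) (hCO : C ⊆ O) :
    ∃ χ : H → ℝ, ContDiff ℝ 1 χ ∧ (∀ x, 0 ≤ χ x) ∧ (∀ x, χ x ≤ 1) ∧ HasCompactSupport χ ∧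
      tsupport χ ⊆ O ∧ ∃ O', IsOpen O' ∧ C ⊆ O' ∧ O' ⊆ O ∧ ∀ x ∈ O', χ x = 1 := by
  obtain ⟨T, hT, hCT, hTO⟩ := exists_compact_between hC hO hCO
  obtain ⟨f, h1, h2, h3⟩ := exists_contMDiffMap_one_nhds_of_subset_interior (n := (1 : ℕ∞))
    𝓘(ℝ, H) hC.isClosed hCT
  have hsupp : tsupport f ⊆ T := by
    apply closure_minimal _ hT.isClosed
    intro x hx
    by_contra hxT
    exact hx (h2 x hxT)
  rw [eventually_nhdsSet_iff_exists] at h1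
  obtain ⟨O', ho, hC', h1⟩ := h1
  refine ⟨f, ?_, fun x => (h3 x).1, fun x => (h3 x).2, ?_, hsupp.trans hTO,
    O' ∩ O, ho.inter hO, subset_inter hC' hCO, inter_subset_right, fun x hx => h1 x hx.1⟩
  · exact_mod_cast f.contMDiff.contDiff
  · exact HasCompactSupport.of_support_subset_isCompact hT (subset_tsupport _ |>.trans hsupp)

lemma bij_of_lip {u : H → H} {c : NNReal} (hc : c < 1) (hu : LipschitzWith c u) :
    Function.Bijective (fun x => x + u x) := by
  have h : ApproximatesLinearOn (fun x => x + u x)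
      ((ContinuousLinearEquiv.refl ℝ H : H ≃L[ℝ] H) : H →L[ℝ] H) univ c := by
    rw [ApproximatesLinearOn.approximatesLinearOn_iff_lipschitzOnWith, lipschitzOnWith_univ]
    convert hu using 1
    ext x; simp
  have hc' : Subsingleton H ∨ c < ‖((ContinuousLinearEquiv.refl ℝ H).symm : H →L[ℝ] H)‖₊⁻¹ := by
    rcases subsingleton_or_nontrivial H with hs | hs
    · exact Or.inl hs
    · right
      have : ‖((ContinuousLinearEquiv.refl ℝ H).symm : H →L[ℝ] H)‖₊ = 1 := by
        have := ContinuousLinearMap.norm_id (𝕜 := ℝ) (E := H)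
        exact NNReal.eq this
      rw [this]; simpa using hc
  exact ⟨injOn_univ.1 (h.injOn hc'), h.surjective hc'⟩

/-- polynomial families -/
def IsPolyFam (g : ℝ → H → ℝ) : Prop :=
  ∃ p : Polynomial C(H, ℝ), ∀ a x, g a x = (p.eval (ContinuousMap.const H a)) x

lemma IsPolyFam.const {c : H → ℝ} (hc : Continuous c) : IsPolyFam (fun _ x => c x) :=
  ⟨Polynomial.C ⟨c, hc⟩, by simp⟩

lemma IsPolyFam.var : IsPolyFam (fun a (_ : H) => a) :=
  ⟨Polynomial.X, by simp⟩

lemma IsPolyFam.add {f g : ℝ → H → ℝ} (hf : IsPolyFam f) (hg : IsPolyFam g) :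
    IsPolyFam (fun a x => f a x + g a x) := by
  obtain ⟨p, hp⟩ := hf
  obtain ⟨q, hq⟩ := hg
  exact ⟨p + q, by simp [hp, hq]⟩

lemma IsPolyFam.mul {f g : ℝ → H → ℝ} (hf : IsPolyFam f) (hg : IsPolyFam g) :
    IsPolyFam (fun a x => f a x * g a x) := by
  obtain ⟨p, hp⟩ := hf
  obtain ⟨q, hq⟩ := hg
  exact ⟨p * q, by simp [hp, hq]⟩

lemma IsPolyFam.sum {ι : Type*} (s : Finset ι) {f : ι → ℝ → H → ℝ}
    (hf : ∀ i ∈ s, IsPolyFam (f i)) : IsPolyFam (fun a x => ∑ i ∈ s, f i a x) := by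
  classical
  induction s using Finset.induction_on with
  | empty => simpa using IsPolyFam.const (H := H) continuous_const
  | insert i s hi ih =>
    simp only [Finset.sum_insert hi]
    exact (hf i (by simp)).add (ih fun j hj => hf j (by simp [hj]))

lemma IsPolyFam.prod {ι : Type*} (s : Finset ι) {f : ι → ℝ → H → ℝ}
    (hf : ∀ i ∈ s, IsPolyFam (f i)) : IsPolyFam (fun a x => ∏ i ∈ s, f i a x) := by
  classical
  induction s using Finset.induction_on with
  | empty => simpa using IsPolyFam.const (H := H) continuous_const
  | insert i s hi ih =>
    simp only [Finset.prod_insert hi]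
    exact (hf i (by simp)).mul (ih fun j hj => hf j (by simp [hj]))

lemma IsPolyFam.pow {f : ℝ → H → ℝ} (hf : IsPolyFam f) (k : ℕ) :
    IsPolyFam (fun a x => f a x ^ k) := by
  simpa using IsPolyFam.prod (Finset.range k) (f := fun _ => f) (fun _ _ => hf)

lemma IsPolyFam.polyEval {f : ℝ → H → ℝ} (hf : IsPolyFam f) (q : Polynomial ℝ) :
    IsPolyFam (fun a x => q.eval (f a x)) := by
  simp only [Polynomial.eval_eq_sum_range]
  exact IsPolyFam.sum _ fun i _ => (IsPolyFam.const continuous_const).mul (hf.pow i)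

lemma IsPolyFam.det {A : H → H →L[ℝ] H} (hA : Continuous A) :
    IsPolyFam (fun a x => (a • ContinuousLinearMap.id ℝ H + A x).det) := by
  let b := (stdOrthonormalBasis ℝ H).toBasis
  have : ∀ a x, (a • ContinuousLinearMap.id ℝ H + A x).det =
      ∑ τ : Equiv.Perm (Fin (Module.finrank ℝ H)), ((Equiv.Perm.sign τ : ℤ) : ℝ) * ∏ i,
        (a * (1 : Matrix _ _ ℝ) (τ i) i + LinearMap.toMatrix b b (A x : H →ₗ[ℝ] H) (τ i) i) := by
    intro a x
    rw [ContinuousLinearMap.det, ← LinearMap.det_toMatrix b, Matrix.det_apply']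
    simp
  simp only [this]
  refine IsPolyFam.sum _ fun τ _ => (IsPolyFam.const continuous_const).mul ?_
  refine IsPolyFam.prod _ fun i _ => (IsPolyFam.var.mul (IsPolyFam.const continuous_const)).add ?_
  apply IsPolyFam.const
  simp only [LinearMap.toMatrix_apply]
  have h1 : Continuous fun x => A x (b i) := by fun_prop
  exact ((LinearMap.continuous_of_finiteDimensional (b.coord (τ i)))).comp h1

variable [MeasurableSpace H] [BorelSpace H]

lemma IsPolyFam.integral {g : ℝ → H → ℝ} (hg : IsPolyFam g) (R : ℝ) :
    ∃ q : Polynomial ℝ, ∀ a, ∫ x in ball (0 : H) R, g a x = q.eval a := by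
  obtain ⟨p, hp⟩ := hg
  refine ⟨∑ k ∈ Finset.range (p.natDegree + 1),
    Polynomial.C (∫ x in ball (0 : H) R, p.coeff k x) * Polynomial.X ^ k, fun a => ?_⟩
  rw [Polynomial.eval_finsetSum]
  simp only [hp, Polynomial.eval_eq_sum_range (p := p)]
  simp only [ContinuousMap.coe_sum, Finset.sum_apply, ContinuousMap.mul_apply,
    ContinuousMap.pow_apply, ContinuousMap.const_apply]
  rw [integral_finsetSum]
  · simp [integral_mul_const]
  · intro i _
    have : Continuous fun x => p.coeff i x * a ^ i := by fun_prop
    exact (this.continuousOn.integrableOn_compact (isCompact_closedBall 0 R)).mono_set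
      ball_subset_closedBall

lemma degree_aux {u : H → H} (hu : ContDiff ℝ 1 u) (hus : HasCompactSupport u) (R : ℝ)
    (q : Polynomial ℝ) : ∀ᶠ a : ℝ in atTop,
    Function.Bijective (fun x => a • x + u x) ∧
    ∫ x in ball (0 : H) R, (a • ContinuousLinearMap.id ℝ H + fderiv ℝ u x).det *
      q.eval (‖a • x + u x‖ ^ 2) =
    ∫ y in (fun x => a • x + u x) '' ball (0 : H) R, q.eval (‖y‖ ^ 2) := by
  obtain ⟨C, hC⟩ := hu.lipschitzWith_of_hasCompactSupport hus (by norm_num)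
  have hdet : ∀ᶠ t in 𝓝 (0 : ℝ), ∀ x ∈ closedBall (0 : H) R,
      0 < (ContinuousLinearMap.id ℝ H + t • fderiv ℝ u x).det := by
    apply (isCompact_closedBall (0 : H) R).eventually_forall_of_forall_eventually
    intro x _
    have hcont : Continuous fun z : ℝ × H =>
        (ContinuousLinearMap.id ℝ H + z.1 • fderiv ℝ u z.2).det := by
      apply ContinuousLinearMap.continuous_det.comp
      have := hu.continuous_fderiv (by norm_num)
      fun_prop
    apply hcont.continuousAt.eventually_const_lt
    simp [ContinuousLinearMap.det]
  have hinv := tendsto_inv_atTop_zero (𝕜 := ℝ)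
  filter_upwards [hinv.eventually hdet, eventually_gt_atTop (0 : ℝ), eventually_gt_atTop (C : ℝ)]
    with a h1 ha haC
  have hbij : Function.Bijective (fun x => a • x + u x) := by
    have hl : LipschitzWith (‖a⁻¹‖₊ * C) (fun x => a⁻¹ • u x) :=
      (lipschitzWith_smul a⁻¹).comp hC
    have hlt : ‖a⁻¹‖₊ * C < 1 := by
      rw [← NNReal.coe_lt_coe]
      simp only [NNReal.coe_mul, coe_nnnorm, norm_inv, Real.norm_eq_abs, abs_of_pos ha]
      rw [inv_mul_lt_iff₀ ha]; simpa using haC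
    have hb := bij_of_lip hlt hl
    have h2 : Function.Bijective (fun x : H => a • x) :=
      (MulAction.bijective₀ ha.ne')
    convert h2.comp hb using 1
    ext x; simp [smul_smul, ha.ne']
  refine ⟨hbij, ?_⟩
  have hder : ∀ x ∈ ball (0 : H) R, HasFDerivWithinAt (fun x => a • x + u x)
      (a • ContinuousLinearMap.id ℝ H + fderiv ℝ u x) (ball 0 R) x := by
    intro x _
    exact (((hasFDerivAt_id x).const_smul a).add
      ((hu.differentiable (by norm_num)) x).hasFDerivAt).hasFDerivWithinAt
  rw [integral_image_eq_integral_abs_det_fderiv_smul volume measurableSet_ball hder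
    hbij.1.injOn]
  apply setIntegral_congr_fun measurableSet_ball
  intro x hx
  have h3 : (a • ContinuousLinearMap.id ℝ H + fderiv ℝ u x) =
      a • (ContinuousLinearMap.id ℝ H + a⁻¹ • fderiv ℝ u x) := by
    rw [smul_add, smul_smul, mul_inv_cancel₀ ha.ne', one_smul]
  have hpos : 0 < (a • ContinuousLinearMap.id ℝ H + fderiv ℝ u x).det := by
    rw [h3]
    have := h1 x (ball_subset_closedBall hx)
    simp only [ContinuousLinearMap.det, ContinuousLinearMap.toLinearMap_smul, LinearMap.det_smul] at this ⊢
    positivity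
  simp only [abs_of_pos hpos, smul_eq_mul]

lemma degree_poly {u v : H → H} (hu : ContDiff ℝ 1 u) (hus : HasCompactSupport u)
    (hv : ContDiff ℝ 1 v) (hvs : HasCompactSupport v) (R : ℝ)
    (huv : ∀ x ∉ ball (0 : H) R, u x = v x) (q : Polynomial ℝ) :
    ∫ x in ball (0 : H) R, (fderiv ℝ u x).det * q.eval (‖u x‖ ^ 2) =
    ∫ x in ball (0 : H) R, (fderiv ℝ v x).det * q.eval (‖v x‖ ^ 2) := by
  have key : ∀ w : H → H, ContDiff ℝ 1 w → ∃ Q : Polynomial ℝ, ∀ a,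
      ∫ x in ball (0 : H) R, (a • ContinuousLinearMap.id ℝ H + fderiv ℝ w x).det *
      q.eval (‖a • x + w x‖ ^ 2) = Q.eval a := by
    intro w hw
    have hc := hw.continuous
    have h1 : IsPolyFam fun a x => ‖a • x + w x‖ ^ 2 := by
      have : ∀ a x, ‖a • x + w x‖ ^ 2 = (a * (a * ‖x‖ ^ 2) + a * (2 * inner ℝ x (w x))) + ‖w x‖ ^ 2 := by
        intro a x
        rw [norm_add_sq_real, inner_smul_left, norm_smul, mul_pow, Real.norm_eq_abs, sq_abs]
        simp only [conj_trivial]; ring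
      simp only [this]
      refine IsPolyFam.add (IsPolyFam.add (IsPolyFam.var.mul (IsPolyFam.var.mul ?_))
        (IsPolyFam.var.mul ?_)) ?_ <;> apply IsPolyFam.const <;> fun_prop
    exact ((IsPolyFam.det (hw.continuous_fderiv (by norm_num))).mul (h1.polyEval q)).integral R
  obtain ⟨Q1, h1⟩ := key u hu
  obtain ⟨Q2, h2⟩ := key v hv
  have heq : Q1 = Q2 := by
    apply Polynomial.eq_of_infinite_eval_eq
    have hev : ∀ᶠ a in atTop, Q1.eval a = Q2.eval a := by
      filter_upwards [degree_aux hu hus R q, degree_aux hv hvs R q] with a ha hb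
      rw [← h1, ← h2, ha.2, hb.2]
      have himg : (fun x => a • x + u x) '' ball (0 : H) R =
          (fun x => a • x + v x) '' ball (0 : H) R := by
        have e1 := image_compl_eq ha.1 (s := ball (0 : H) R)
        have e2 := image_compl_eq hb.1 (s := ball (0 : H) R)
        have e3 : (fun x => a • x + u x) '' (ball (0 : H) R)ᶜ =
          (fun x => a • x + v x) '' (ball (0 : H) R)ᶜ := by
          apply image_congr
          intro x hx
          show a • x + u x = a • x + v x
          rw [huv x hx]
        rw [e1, e2] at e3
        exact compl_injective e3
      rw [himg]
    obtain ⟨a0, ha0⟩ := eventually_atTop.1 hev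
    exact (Ici_infinite a0).mono fun a ha => ha0 a ha
  have e1 := h1 0
  have e2 := h2 0
  simp only [zero_smul, zero_add] at e1 e2
  rw [e1, e2, heq]

lemma degree_poly' {u v : H → H} (hu : ContDiff ℝ 1 u) (hv : ContDiff ℝ 1 v) (R : ℝ)
    (huv : ∀ x ∉ ball (0 : H) R, u x = v x) (q : Polynomial ℝ) :
    ∫ x in ball (0 : H) R, (fderiv ℝ u x).det * q.eval (‖u x‖ ^ 2) =
    ∫ x in ball (0 : H) R, (fderiv ℝ v x).det * q.eval (‖v x‖ ^ 2) := by
  obtain ⟨χ, hχ, -, -, hχs, -, O, hO, hCO, -, hχ1⟩ := exists_cutoff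
    (isCompact_closedBall (0 : H) R) isOpen_univ (subset_univ _)
  have key := degree_poly (hχ.smul hu) (hχs.smul_right) (hχ.smul hv) (hχs.smul_right) R
    (fun x hx => by simp [huv x hx]) q
  have h : ∀ w : H → H, ∫ x in ball (0 : H) R, (fderiv ℝ (fun x => χ x • w x) x).det *
      q.eval (‖χ x • w x‖ ^ 2) =
      ∫ x in ball (0 : H) R, (fderiv ℝ w x).det * q.eval (‖w x‖ ^ 2) := by
    intro w
    apply setIntegral_congr_fun measurableSet_ball
    intro x hx
    have hx' : x ∈ O := hCO (ball_subset_closedBall hx)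
    have : (fun x => χ x • w x) =ᶠ[𝓝 x] w := by
      filter_upwards [hO.mem_nhds hx'] with y hy
      simp [hχ1 y hy]
    simp only [this.fderiv_eq, hχ1 x hx', one_smul]
  exact (h u).symm.trans (key.trans (h v))

/-- If all zeros of `f` have positive determinant and `f` agrees outside a ball with a nowhere
vanishing map then `f` has no zeros. -/
lemma no_zero_of_pos {f f₁ : H → H} (hf : ContDiff ℝ 1 f) (hf₁ : ContDiff ℝ 1 f₁) (R : ℝ)
    (hff : ∀ x ∉ ball (0 : H) R, f x = f₁ x) (h₁ : ∀ x, f₁ x ≠ 0) {τ : ℝ}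
    (hpos : ∀ x, f x = 0 → 0 < τ * (fderiv ℝ f x).det) : ∀ x, f x ≠ 0 := by
  by_contra! hz
  obtain ⟨z, hz⟩ := hz
  have hzB : z ∈ ball (0 : H) R := by
    by_contra hn
    exact h₁ z (by rw [← hff z hn, hz])
  have hdetc : Continuous fun x => (fderiv ℝ f x).det :=
    ContinuousLinearMap.continuous_det.comp (hf.continuous_fderiv (by norm_num))
  have hdetc1 : Continuous fun x => (fderiv ℝ f₁ x).det :=
    ContinuousLinearMap.continuous_det.comp (hf₁.continuous_fderiv (by norm_num))
  have hK := isCompact_closedBall (0 : H) R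
  -- lower bound for f₁
  obtain ⟨δ₁, hδ₁, hb1⟩ : ∃ δ > 0, ∀ x ∈ closedBall (0 : H) R, δ ≤ ‖f₁ x‖ ^ 2 := by
    obtain ⟨x0, -, hx0⟩ := hK.exists_isMinOn ⟨z, ball_subset_closedBall hzB⟩
      ((hf₁.continuous.norm.pow 2).continuousOn)
    refine ⟨‖f₁ x0‖ ^ 2, by have := norm_pos_iff.2 (h₁ x0); positivity, fun x hx => hx0 hx⟩
  obtain ⟨δ₂, hδ₂, hb2⟩ : ∃ δ > 0, ∀ x ∈ closedBall (0 : H) R,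
      ‖f x‖ ^ 2 < δ → 0 < τ * (fderiv ℝ f x).det := by
    have hK2 : IsCompact (closedBall (0 : H) R ∩ {x | τ * (fderiv ℝ f x).det ≤ 0}) :=
      hK.inter_right (isClosed_le (by fun_prop) continuous_const)
    rcases (closedBall (0 : H) R ∩ {x | τ * (fderiv ℝ f x).det ≤ 0}).eq_empty_or_nonempty with he | hne
    · refine ⟨1, one_pos, fun x hx _ => ?_⟩
      by_contra hcon
      have : x ∈ (∅ : Set H) := he ▸ ⟨hx, not_lt.1 hcon⟩
      exact this
    · obtain ⟨x0, hx0m, hx0⟩ := hK2.exists_isMinOn hne ((hf.continuous.norm.pow 2).continuousOn)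
      refine ⟨‖f x0‖ ^ 2, ?_, fun x hx hlt => ?_⟩
      · have : f x0 ≠ 0 := fun h0 => absurd (hpos x0 h0) (not_lt.2 hx0m.2)
        have := norm_pos_iff.2 this; positivity
      · by_contra hcon
        exact absurd (hx0 (show x ∈ _ from ⟨hx, not_lt.1 hcon⟩)) (not_le.2 hlt)
  set δ := min δ₁ δ₂ with hδ
  have hδpos : 0 < δ := lt_min hδ₁ hδ₂
  let ψ : ℝ → ℝ := fun s => max 0 (δ - s)
  have hψc : Continuous ψ := by fun_prop
  have hψ0 : ∀ s, 0 ≤ ψ s := fun s => le_max_left _ _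
  have hψz : ∀ s, δ ≤ s → ψ s = 0 := fun s hs => max_eq_left (by linarith)
  have int_of : ∀ g : H → ℝ, Continuous g → IntegrableOn g (ball (0 : H) R) := fun g hg =>
    (hg.continuousOn.integrableOn_compact hK).mono_set ball_subset_closedBall
  -- integral of f positive
  have hIpos : 0 < ∫ x in ball (0 : H) R, τ * (fderiv ℝ f x).det * ψ (‖f x‖ ^ 2) := by
    have hc : Continuous fun x => τ * (fderiv ℝ f x).det * ψ (‖f x‖ ^ 2) := by
      have := hf.continuous
      fun_prop
    have hnn : ∀ x ∈ ball (0 : H) R, 0 ≤ τ * (fderiv ℝ f x).det * ψ (‖f x‖ ^ 2) := by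
      intro x hx
      rcases lt_or_ge (‖f x‖ ^ 2) δ with hlt | hge
      · exact mul_nonneg (hb2 x (ball_subset_closedBall hx) (hlt.trans_le (min_le_right _ _))).le
          (hψ0 _)
      · rw [hψz _ hge, mul_zero]
    rw [setIntegral_pos_iff_support_of_nonneg_ae]
    · have ho : IsOpen (Function.support (fun x => τ * (fderiv ℝ f x).det * ψ (‖f x‖ ^ 2)) ∩ ball (0 : H) R) :=
        (hc.isOpen_support).inter isOpen_ball
      refine ho.measure_pos volume ⟨z, ?_, hzB⟩
      have : ψ (‖f z‖ ^ 2) = δ := by simp [ψ, hz, hδpos.le]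
      simp only [Function.mem_support, this]
      exact (mul_pos (hpos z hz) hδpos).ne'
    · exact (ae_restrict_iff' measurableSet_ball).2 (Eventually.of_forall hnn)
    · exact int_of _ hc
  have hI1 : ∫ x in ball (0 : H) R, (fderiv ℝ f₁ x).det * ψ (‖f₁ x‖ ^ 2) = 0 := by
    rw [setIntegral_congr_fun (g := fun _ => (0:ℝ)) measurableSet_ball]
    · simp
    · intro x hx
      simp only
      rw [hψz _ ((min_le_left _ _).trans (hb1 x (ball_subset_closedBall hx))), mul_zero]
  have hIeq : ∫ x in ball (0 : H) R, (fderiv ℝ f x).det * ψ (‖f x‖ ^ 2) =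
      ∫ x in ball (0 : H) R, (fderiv ℝ f₁ x).det * ψ (‖f₁ x‖ ^ 2) := by
    obtain ⟨M, hM⟩ : ∃ M, ∀ x ∈ closedBall (0 : H) R, ‖f x‖ ^ 2 ≤ M ∧ ‖f₁ x‖ ^ 2 ≤ M := by
      obtain ⟨M1, h1⟩ := hK.exists_bound_of_continuousOn ((hf.continuous.norm.pow 2).continuousOn)
      obtain ⟨M2, h2⟩ := hK.exists_bound_of_continuousOn ((hf₁.continuous.norm.pow 2).continuousOn)
      refine ⟨max M1 M2, fun x hx => ⟨?_, ?_⟩⟩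
      · exact (le_abs_self _).trans ((h1 x hx).trans (le_max_left _ _))
      · exact (le_abs_self _).trans ((h2 x hx).trans (le_max_right _ _))
    set A : ℝ := ∫ x in ball (0 : H) R, |(fderiv ℝ f x).det| with hA
    set A1 : ℝ := ∫ x in ball (0 : H) R, |(fderiv ℝ f₁ x).det| with hA1
    have hest : ∀ w : H → H, ContDiff ℝ 1 w → (∀ x ∈ closedBall (0 : H) R, ‖w x‖ ^ 2 ≤ M) →
        ∀ ε > 0, ∀ q : Polynomial ℝ, (∀ s ∈ Icc 0 M, |q.eval s - ψ s| < ε) →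
        |(∫ x in ball (0 : H) R, (fderiv ℝ w x).det * q.eval (‖w x‖ ^ 2)) -
          (∫ x in ball (0 : H) R, (fderiv ℝ w x).det * ψ (‖w x‖ ^ 2))| ≤
          (∫ x in ball (0 : H) R, |(fderiv ℝ w x).det|) * ε := by
      intro w hw hwM ε hε q hq
      have hwc : Continuous fun x => (fderiv ℝ w x).det :=
        ContinuousLinearMap.continuous_det.comp (hw.continuous_fderiv (by norm_num))
      have hw' := hw.continuous
      rw [← integral_sub (int_of _ (by fun_prop)) (int_of _ (by fun_prop)), ← integral_mul_const,
        ← Real.norm_eq_abs]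
      apply norm_integral_le_of_norm_le (int_of _ (by fun_prop))
      refine (ae_restrict_iff' measurableSet_ball).2 (Eventually.of_forall fun x hx => ?_)
      rw [← mul_sub, norm_mul, Real.norm_eq_abs, Real.norm_eq_abs]
      exact mul_le_mul_of_nonneg_left
        (hq _ ⟨by positivity, hwM x (ball_subset_closedBall hx)⟩).le (abs_nonneg _)
    apply eq_of_forall_dist_le
    intro ε hε
    have hA0 : 0 ≤ A := integral_nonneg fun x => abs_nonneg _
    have hA10 : 0 ≤ A1 := integral_nonneg fun x => abs_nonneg _
    have hη : 0 < ε / (A + A1 + 1) := by positivity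
    obtain ⟨q, hq⟩ := exists_polynomial_near_of_continuousOn 0 M ψ hψc.continuousOn _ hη
    have e1 := hest f hf (fun x hx => (hM x hx).1) _ hη q hq
    have e2 := hest f₁ hf₁ (fun x hx => (hM x hx).2) _ hη q hq
    rw [degree_poly' hf hf₁ R hff q] at e1
    rw [← hA] at e1
    rw [← hA1] at e2
    have e3 : A * (ε / (A + A1 + 1)) + A1 * (ε / (A + A1 + 1)) ≤ ε := by
      rw [← add_mul, mul_div_assoc', div_le_iff₀ (by positivity)]
      nlinarith
    rw [Real.dist_eq]
    rw [abs_le] at e1 e2 ⊢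
    constructor <;> linarith [e1.1, e1.2, e2.1, e2.2]
  simp only [mul_assoc, integral_const_mul] at hIpos
  rw [hIeq, hI1] at hIpos
  simp at hIpos

end Tools

end EqVF

open Set unitInterval
open PaperTC Manifold

namespace EqVF

open Topology Filter MeasureTheory Metric

section Chain

variable {m : ℕ}

/-- segment in GL -/
def MStep (A B : Matrix (Fin m) (Fin m) ℝ) : Prop :=
  ∀ t ∈ Icc (0:ℝ) 1, ((1 - t) • A + t • B).det ≠ 0

/-- chain of segments -/
def MChain (A B : Matrix (Fin m) (Fin m) ℝ) : Prop := Relation.ReflTransGen MStep A B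

lemma MStep.symm {A B : Matrix (Fin m) (Fin m) ℝ} (h : MStep A B) : MStep B A := by
  intro t ht
  have := h (1 - t) ⟨by linarith [ht.2], by linarith [ht.1]⟩
  rwa [sub_sub_cancel, add_comm] at this

lemma MChain.symm {A B : Matrix (Fin m) (Fin m) ℝ} (h : MChain A B) : MChain B A :=
  haveI : Std.Symm (MStep (m := m)) := ⟨fun _ _ h => MStep.symm h⟩
  (Relation.ReflTransGen.stdSymm (r := MStep (m := m))).symm _ _ h

lemma MChain.mulLeft {A B : Matrix (Fin m) (Fin m) ℝ} (h : MChain A B)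
    (Q : Matrix (Fin m) (Fin m) ℝ) (hQ : Q.det ≠ 0) : MChain (Q * A) (Q * B) := by
  refine Relation.ReflTransGen.lift (fun X => Q * X) ?_ _ _ h
  intro X Y hXY t ht
  have := mul_ne_zero hQ (hXY t ht)
  rwa [← Matrix.det_mul, mul_add, Matrix.mul_smul, Matrix.mul_smul] at this

lemma MChain.mulRight {A B : Matrix (Fin m) (Fin m) ℝ} (h : MChain A B)
    (Q : Matrix (Fin m) (Fin m) ℝ) (hQ : Q.det ≠ 0) : MChain (A * Q) (B * Q) := by
  refine Relation.ReflTransGen.lift (fun X => X * Q) ?_ _ _ h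
  intro X Y hXY t ht
  have := mul_ne_zero (hXY t ht) hQ
  rwa [← Matrix.det_mul, add_mul, Matrix.smul_mul, Matrix.smul_mul] at this

/-- rank one perturbation -/
def rk (u v : Fin m → ℝ) : Matrix (Fin m) (Fin m) ℝ := 1 + Matrix.vecMulVec u v

lemma det_rk (u v : Fin m → ℝ) : (rk u v).det = 1 + v ⬝ᵥ u := by
  rw [rk, Matrix.vecMulVec_eq Unit, Matrix.det_one_add_replicateCol_mul_replicateRow]

lemma conv_ne {a b t : ℝ} (h : 0 < a * b) (ht : t ∈ Icc (0:ℝ) 1) : (1 - t) * a + t * b ≠ 0 := by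
  obtain ⟨h0, h1⟩ := ht
  rcases pos_and_pos_or_neg_and_neg_of_mul_pos h with ⟨ha, hb⟩ | ⟨ha, hb⟩
  · rcases h0.eq_or_lt with rfl | h0
    · simpa using ha.ne'
    · nlinarith [mul_pos h0 hb, mul_nonneg (sub_nonneg.2 h1) ha.le]
  · rcases h0.eq_or_lt with rfl | h0
    · simpa using ha.ne
    · nlinarith [mul_pos_of_neg_of_neg (neg_neg_of_pos h0) hb,
        mul_nonneg_of_nonpos_of_nonpos (sub_nonpos.2 h1) ha.le]

lemma mstep_rk_right {u v w : Fin m → ℝ} (h : 0 < (1 + v ⬝ᵥ u) * (1 + w ⬝ᵥ u)) :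
    MStep (rk u v) (rk u w) := by
  intro t ht
  have : (1 - t) • rk u v + t • rk u w = rk u ((1 - t) • v + t • w) := by
    simp only [rk, Matrix.vecMulVec_add, Matrix.vecMulVec_smul, smul_add]
    module
  rw [this, det_rk, add_dotProduct, smul_dotProduct, smul_dotProduct]
  have := conv_ne h ht
  simp only [smul_eq_mul]
  intro h'; apply this; linarith

lemma mstep_rk_left {u v w : Fin m → ℝ} (h : 0 < (1 + v ⬝ᵥ u) * (1 + v ⬝ᵥ w)) :
    MStep (rk u v) (rk w v) := by
  intro t ht
  have : (1 - t) • rk u v + t • rk w v = rk ((1 - t) • u + t • w) v := by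
    simp only [rk, Matrix.add_vecMulVec, Matrix.smul_vecMulVec, smul_add]
    module
  rw [this, det_rk, dotProduct_add, dotProduct_smul, dotProduct_smul]
  have := conv_ne h ht
  simp only [smul_eq_mul]
  intro h'; apply this; linarith

lemma mchain_dich (i0 : Fin m) (M : Matrix (Fin m) (Fin m) ℝ) (hM : M.det ≠ 0) :
    MChain M 1 ∨ MChain M (rk (Pi.single i0 1) (Pi.single i0 (-2))) := by
  set r : Matrix (Fin m) (Fin m) ℝ := rk (Pi.single i0 1) (Pi.single i0 (-2)) with hr
  have hrr : r * r = 1 := by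
    have : Matrix.vecMulVec (Pi.single i0 (1:ℝ)) (Pi.single i0 (-2)) *
       Matrix.vecMulVec (Pi.single i0 (1:ℝ)) (Pi.single i0 (-2)) = (-2 : ℝ) •
       Matrix.vecMulVec (Pi.single i0 (1:ℝ)) (Pi.single i0 (-2)) := by
      rw [Matrix.vecMulVec_mul_vecMulVec]
      simp [Matrix.smul_vecMulVec]
    rw [hr, rk, mul_add, add_mul, add_mul, this]
    simp only [mul_one, one_mul]
    module
  have hrdet : r.det ≠ 0 := by
    rw [hr, det_rk]; simp; norm_num
  have hone : ∀ u v : Fin m → ℝ, 0 < 1 + v ⬝ᵥ u → MChain (rk u v) 1 := by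
    intro u v h
    have h1 : MStep (rk u v) (rk u 0) := mstep_rk_right (by simpa using h)
    have h2 : rk u (0 : Fin m → ℝ) = 1 := by simp [rk]
    rw [h2] at h1
    exact Relation.ReflTransGen.single h1
  apply Matrix.diagonal_transvection_induction_of_det_ne_zero
    (fun M => MChain M 1 ∨ MChain M r) M hM
  · intro D hD
    have hD' : ∀ i, D i ≠ 0 := by
      rw [Matrix.det_diagonal] at hD
      exact fun i => Finset.prod_ne_zero_iff.1 hD i (Finset.mem_univ i)
    suffices h : ∀ s : Finset (Fin m), MChain (Matrix.diagonal fun i => if i ∈ s then D i else 1) 1 ∨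
        MChain (Matrix.diagonal fun i => if i ∈ s then D i else 1) r by
      simpa using h Finset.univ
    intro s
    induction s using Finset.induction_on with
    | empty => left; simp only [Finset.notMem_empty, if_false, Matrix.diagonal_one]; exact Relation.ReflTransGen.refl
    | insert j s hj ih =>
      have e : (Matrix.diagonal fun i => if i ∈ insert j s then D i else 1) =
          (Matrix.diagonal fun i => if i ∈ s then D i else 1) *
            rk (Pi.single j 1) (Pi.single j (D j - 1)) := by
        have : rk (Pi.single j 1) (Pi.single j (D j - 1)) =
            Matrix.diagonal (fun i => if i = j then D j else 1) := by
          ext a b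
          simp only [rk, Matrix.add_apply, Matrix.vecMulVec_apply, Matrix.diagonal_apply,
            Matrix.one_apply, Pi.single_apply]
          split_ifs <;> simp_all
        rw [this, Matrix.diagonal_mul_diagonal]
        congr 1
        ext i
        by_cases hi : i = j
        · subst hi; simp [hj]
        · simp [hi]
      have hdet : (Matrix.diagonal fun i => if i ∈ s then D i else 1).det ≠ 0 := by
        rw [Matrix.det_diagonal]
        refine Finset.prod_ne_zero_iff.2 fun i _ => ?_
        split_ifs
        · exact hD' i
        · exact one_ne_zero
      have key : MChain (rk (Pi.single j 1) (Pi.single j (D j - 1))) 1 ∨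
          MChain (rk (Pi.single j 1) (Pi.single j (D j - 1))) r := by
        rcases lt_or_gt_of_ne (hD' j) with h | h
        · right
          set w : Fin m → ℝ := Pi.single j (-2) + Pi.single i0 (-2) with hw
          have w1 : 1 + w ⬝ᵥ Pi.single j 1 < 0 := by
            simp only [hw, add_dotProduct, single_dotProduct, Pi.single_apply]
            split_ifs <;> norm_num
          have w2 : 1 + w ⬝ᵥ Pi.single i0 1 < 0 := by
            simp only [hw, add_dotProduct, single_dotProduct, Pi.single_apply]
            split_ifs <;> norm_num
          refine (Relation.ReflTransGen.single (mstep_rk_right (w := w) ?_)).trans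
            ((Relation.ReflTransGen.single (mstep_rk_left (w := Pi.single i0 1) ?_)).trans
            (Relation.ReflTransGen.single (mstep_rk_right ?_)))
          · apply mul_pos_of_neg_of_neg _ w1
            simpa using h
          · exact mul_pos_of_neg_of_neg w1 w2
          · apply mul_pos_of_neg_of_neg w2
            simp
        · left
          apply hone
          simpa using h
      rw [e]
      have hpd : (rk (Pi.single j 1) (Pi.single j (D j - 1))).det ≠ 0 := by
        rw [det_rk]; simpa using hD' j
      rcases ih with ih | ih
      · have := ih.mulRight _ hpd
        rw [one_mul] at this
        exact key.imp this.trans this.trans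
      · have := ih.mulRight _ hpd
        rcases key with k | k
        · right
          have k2 := k.mulLeft r hrdet
          rw [mul_one] at k2
          exact this.trans k2
        · left
          have k2 := k.mulLeft r hrdet
          rw [hrr] at k2
          exact this.trans k2
  · intro t
    left
    have : t.toMatrix = rk (Pi.single t.i 1) (Pi.single t.j t.c) := by
      ext a b
      simp only [Matrix.TransvectionStruct.toMatrix, Matrix.transvection, rk, Matrix.add_apply,
        Matrix.vecMulVec_apply, Matrix.single_apply, Pi.single_apply]
      split_ifs <;> simp_all
    rw [this]
    apply hone
    have := t.hij
    simp [Pi.single_apply, this]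
  · intro A B hA hB ha hb
    rcases ha with ha | ha
    · have := ha.mulRight _ hB
      rw [one_mul] at this
      exact hb.imp this.trans this.trans
    · have := ha.mulRight _ hB
      rcases hb with k | k
      · right
        have k2 := k.mulLeft r hrdet
        rw [mul_one] at k2
        exact this.trans k2
      · left
        have k2 := k.mulLeft r hrdet
        rw [hrr] at k2
        exact this.trans k2

lemma MStep.sign {A B : Matrix (Fin m) (Fin m) ℝ} (h : MStep A B) (hA : 0 < A.det) :
    0 < B.det := by
  by_contra hB
  push Not at hB
  have hc : ContinuousOn (fun t : ℝ => ((1 - t) • A + t • B).det) (Icc 0 1) := by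
    apply Continuous.continuousOn
    apply Continuous.matrix_det
    fun_prop
  have := intermediate_value_Icc' zero_le_one hc
  obtain ⟨t, ht, h0⟩ := this (show (0:ℝ) ∈ Icc _ _ by simpa using ⟨hB, hA.le⟩)
  exact h t ht h0

lemma MChain.sign {A B : Matrix (Fin m) (Fin m) ℝ} (h : MChain A B) (hA : 0 < A.det) :
    0 < B.det := by
  induction h with
  | refl => exact hA
  | tail _ h ih => exact h.sign ih

lemma mchain_one (M : Matrix (Fin m) (Fin m) ℝ) (hM : 0 < M.det) : MChain M 1 := by
  rcases m with _ | m
  · have : M = 1 := Subsingleton.elim _ _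
    rw [this]; exact Relation.ReflTransGen.refl
  · rcases mchain_dich 0 M hM.ne' with h | h
    · exact h
    · have := h.sign hM
      rw [det_rk] at this
      simp at this

variable {H : Type*} [NormedAddCommGroup H] [InnerProductSpace ℝ H] [FiniteDimensional ℝ H]

/-- segment in GL -/
def LStep (A B : H →L[ℝ] H) : Prop :=
  ∀ t ∈ Icc (0:ℝ) 1, ((1 - t) • A + t • B).det ≠ 0

/-- chain -/
def LChain (A B : H →L[ℝ] H) : Prop := Relation.ReflTransGen LStep A B

lemma lchain_one (T : H →L[ℝ] H) (hT : 0 < T.det) : LChain T (ContinuousLinearMap.id ℝ H) := by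
  classical
  set b := Module.finBasis ℝ H
  have h : MChain (LinearMap.toMatrix b b (T : H →ₗ[ℝ] H)) 1 := by
    apply mchain_one
    rw [LinearMap.det_toMatrix]
    exact hT
  have := Relation.ReflTransGen.lift (p := LStep)
    (fun M => LinearMap.toContinuousLinearMap (Matrix.toLin b b M)) ?_ _ _ h
  · have e1 : LinearMap.toContinuousLinearMap (Matrix.toLin b b
        (LinearMap.toMatrix b b (T : H →ₗ[ℝ] H))) = T := by ext x; simp
    have e2 : LinearMap.toContinuousLinearMap (Matrix.toLin b b 1) =
        ContinuousLinearMap.id ℝ H := by ext x; simp [Matrix.toLin_one]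
    simp only [Function.onFun, e1, e2] at this
    exact this
  · intro X Y hXY t ht
    have := hXY t ht
    rw [← LinearMap.det_toLin b] at this
    convert this using 1
    simp only [ContinuousLinearMap.det]
    congr 1
    ext x
    simp

/-- reflection in the unit vector `e` -/
noncomputable def refl (e : H) : H →L[ℝ] H :=
  ContinuousLinearMap.id ℝ H - (2:ℝ) • (innerSL ℝ e).smulRight e

lemma refl_apply (e x : H) : refl e x = x - (2 * inner ℝ e x) • e := by
  simp [refl, smul_smul]

lemma refl_refl (e x : H) (he : ‖e‖ = 1) : refl e (refl e x) = x := by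
  simp only [refl_apply, inner_sub_right, inner_smul_right, real_inner_self_eq_norm_sq, he]
  module

lemma refl_det (e : H) (he : ‖e‖ = 1) : (refl e).det = -1 := by
  have : ((refl e : H →L[ℝ] H) : H →ₗ[ℝ] H) =
      LinearMap.transvection ((-2 : ℝ) • (innerSL ℝ e : H →L[ℝ] ℝ).toLinearMap) e := by
    ext x
    simp [LinearMap.transvection, refl_apply, sub_eq_add_neg]
  rw [ContinuousLinearMap.det, this, LinearMap.transvection.det]
  simp [he]
  norm_num

lemma lchain_refl (T : H →L[ℝ] H) (hT : T.det < 0) (e : H) (he : ‖e‖ = 1) :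
    LChain T (refl e) := by
  have hd : 0 < (T ∘L refl e).det := by
    have : (T ∘L refl e).det = T.det * (refl e).det := by
      simp only [ContinuousLinearMap.det]
      exact LinearMap.det_comp _ _
    rw [this, refl_det e he]; linarith
  have := Relation.ReflTransGen.lift (p := LStep) (fun X => X ∘L refl e) ?_ _ _ (lchain_one _ hd)
  · have e1 : (T ∘L refl e) ∘L refl e = T := by ext x; simp [refl_refl _ _ he]
    have e2 : ContinuousLinearMap.id ℝ H ∘L refl e = refl e := by ext x; simp
    simp only [Function.onFun, e1, e2] at this
    exact this
  · intro X Y hXY t ht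
    have e1 : ((1 - t) • X ∘L refl e + t • Y ∘L refl e) = ((1 - t) • X + t • Y) ∘L refl e := by
      ext x; simp
    have : (((1 - t) • X + t • Y) ∘L refl e).det = ((1 - t) • X + t • Y).det * (refl e).det := by
      simp only [ContinuousLinearMap.det]
      exact LinearMap.det_comp _ _
    rw [e1, this, refl_det e he]
    simpa using hXY t ht

end Chain

end EqVF

open Set unitInterval
open PaperTC Manifold

namespace EqVF

open Topology Filter MeasureTheory Metric

section Cancel

variable {H : Type*} [NormedAddCommGroup H] [InnerProductSpace ℝ H] [FiniteDimensional ℝ H]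

/-- `f'` agrees with `f` off a compact subset of `O` -/
def Mod (O : Set H) (f f' : H → H) : Prop := ∃ K, IsCompact K ∧ K ⊆ O ∧ ∀ x, x ∉ K → f' x = f x

lemma Mod.refl (O : Set H) (f : H → H) : Mod O f f :=
  ⟨∅, isCompact_empty, empty_subset _, fun _ _ => rfl⟩

lemma Mod.trans {O : Set H} {f g h : H → H} (h1 : Mod O f g) (h2 : Mod O g h) : Mod O f h := by
  obtain ⟨K, a, b, c⟩ := h1
  obtain ⟨K', a', b', c'⟩ := h2
  refine ⟨K ∪ K', a.union a', union_subset b b', fun x hx => ?_⟩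
  rw [c' x fun h => hx (Or.inr h), c x fun h => hx (Or.inl h)]

lemma Mod.mono {O O' : Set H} {f g : H → H} (h1 : Mod O f g) (h : O ⊆ O') : Mod O' f g := by
  obtain ⟨K, a, b, c⟩ := h1
  exact ⟨K, a, b.trans h, c⟩

lemma Mod.eq {O : Set H} {f g : H → H} (h1 : Mod O f g) {x : H} (hx : x ∉ O) : g x = f x := by
  obtain ⟨K, a, b, c⟩ := h1
  exact c x fun h => hx (b h)

lemma mod_cutoff {O : Set H} (f w : H → H) {χ : H → ℝ} (hχ : HasCompactSupport χ)
    (hs : tsupport χ ⊆ O) : Mod O f (fun x => f x + χ x • w x) :=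
  ⟨tsupport χ, hχ, hs, fun x hx => by simp [image_eq_zero_of_notMem_tsupport hx]⟩

lemma inj_of_det {A : H →L[ℝ] H} (h : A.det ≠ 0) {v : H} (hv : v ≠ 0) : A v ≠ 0 := by
  intro h0
  have := LinearMap.bot_lt_ker_of_det_eq_zero (f := (A : H →ₗ[ℝ] H))
  have hk : LinearMap.ker (A : H →ₗ[ℝ] H) = ⊥ := by
    have hu : IsUnit (A : H →ₗ[ℝ] H) := by
      rw [LinearMap.isUnit_iff_isUnit_det]; exact isUnit_iff_ne_zero.2 h
    exact (LinearMap.isUnit_iff_ker_eq_bot _).1 hu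
  have : v ∈ LinearMap.ker (A : H →ₗ[ℝ] H) := h0
  rw [hk] at this
  exact hv (by simpa using this)

lemma bound_of_det {A : H →L[ℝ] H} (h : A.det ≠ 0) : ∃ c > 0, ∀ v, c * ‖v‖ ≤ ‖A v‖ := by
  have hinj : Function.Injective A := by
    rw [injective_iff_map_eq_zero]
    intro v hv
    by_contra hne
    exact inj_of_det h hne hv
  obtain ⟨K, hK, hA⟩ := (A : H →ₗ[ℝ] H).exists_antilipschitzWith (LinearMap.ker_eq_bot.2 hinj)
  refine ⟨(K:ℝ)⁻¹, by positivity, fun v => ?_⟩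
  have := hA.le_mul_dist v 0
  simp only [dist_zero_right, map_zero] at this
  rw [inv_mul_le_iff₀ (by positivity)]
  exact this

lemma norm_lin {f : H → H} (hf : ContDiff ℝ 1 f) {a : H} {O : Set H} (hO : IsOpen O) (ha : a ∈ O)
    (h0 : f a = 0) (hne : ∀ x ∈ O, x ≠ a → f x ≠ 0) (hd : (fderiv ℝ f a).det ≠ 0) :
    ∃ f', ContDiff ℝ 1 f' ∧ Mod O f f' ∧ (∀ x ∈ O, x ≠ a → f' x ≠ 0) ∧
      ∃ ρ > 0, ball a ρ ⊆ O ∧ ∀ x ∈ ball a ρ, f' x = fderiv ℝ f a (x - a) := by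
  obtain ⟨c, hc, hcA⟩ := bound_of_det hd
  set A := fderiv ℝ f a
  have hder : HasFDerivAt f A a := (hf.differentiable (by norm_num) a).hasFDerivAt
  have hlo := hder.isLittleO.bound (show 0 < c / 2 by positivity)
  rw [Metric.eventually_nhds_iff_ball] at hlo
  obtain ⟨r, hr, hlo⟩ := hlo
  obtain ⟨r', hr', hrO⟩ := Metric.isOpen_iff.1 hO a ha
  obtain ⟨χ, c1, c2, c3, c4, c5, O', o1, o2, o3, o4⟩ := exists_cutoff (isCompact_singleton (x := a))
    (isOpen_ball (x := a) (ε := min r r')) (by simp [hr, hr'])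
  refine ⟨fun x => f x + χ x • (A (x - a) - f x), by fun_prop,
    (mod_cutoff _ _ c4 c5).mono ((ball_subset_ball (min_le_right _ _)).trans hrO), ?_, ?_⟩
  · intro x hx hxa
    by_cases hb : x ∈ ball a (min r r')
    · have h1 := hlo x (ball_subset_ball (min_le_left _ _) hb)
      rw [h0, sub_zero] at h1
      have h2 := hcA (x - a)
      intro h
      have h3 : A (x - a) = -((1 - χ x) • (f x - A (x - a))) := by
        rw [← sub_eq_zero, ← h]; module
      have h4 : ‖A (x - a)‖ ≤ 1 * (c / 2 * ‖x - a‖) := by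
        rw [h3, norm_neg, norm_smul]
        apply mul_le_mul _ h1 (norm_nonneg _) zero_le_one
        rw [Real.norm_eq_abs, abs_le]
        constructor <;> linarith [c2 x, c3 x]
      have : 0 < ‖x - a‖ := norm_pos_iff.2 (sub_ne_zero.2 hxa)
      nlinarith
    · have : χ x = 0 := image_eq_zero_of_notMem_tsupport fun h => hb (c5 h)
      simpa [this] using hne x hx hxa
  · obtain ⟨ρ, hρ, hρO⟩ := Metric.isOpen_iff.1 o1 a (by simpa using o2)
    refine ⟨ρ, hρ, (hρO.trans o3).trans ((ball_subset_ball (min_le_right _ _)).trans hrO), ?_⟩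
    intro x hx
    simp [o4 x (hρO hx)]

lemma norm_chain {f : H → H} (hf : ContDiff ℝ 1 f) {a : H} {O : Set H} {A B : H →L[ℝ] H}
    (hne : ∀ x ∈ O, x ≠ a → f x ≠ 0) (hAB : LChain A B)
    (hfA : ∃ ρ > 0, ball a ρ ⊆ O ∧ ∀ x ∈ ball a ρ, f x = A (x - a)) :
    ∃ f', ContDiff ℝ 1 f' ∧ Mod O f f' ∧ (∀ x ∈ O, x ≠ a → f' x ≠ 0) ∧
      ∃ ρ > 0, ball a ρ ⊆ O ∧ ∀ x ∈ ball a ρ, f' x = B (x - a) := by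
  induction hAB with
  | refl => exact ⟨f, hf, Mod.refl _ _, hne, hfA⟩
  | @tail B C _ hs ih =>
    obtain ⟨f', g1, g2, g3, ρ, hρ, hρO, g4⟩ := ih
    obtain ⟨χ, c1, c2, c3, c4, c5, O', o1, o2, o3, o4⟩ :=
      exists_cutoff (isCompact_singleton (x := a)) (isOpen_ball (x := a) (ε := ρ)) (by simp [hρ])
    refine ⟨fun x => f' x + χ x • (C - B) (x - a), by fun_prop,
      g2.trans ((mod_cutoff _ _ c4 c5).mono hρO), ?_, ?_⟩
    · intro x hx hxa
      by_cases hb : x ∈ ball a ρ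
      · have := inj_of_det (hs (χ x) ⟨c2 x, c3 x⟩) (sub_ne_zero.2 hxa)
        convert this using 1
        show f' x + χ x • (C - B) (x - a) = _
        rw [g4 x hb]
        simp only [ContinuousLinearMap.sub_apply, ContinuousLinearMap.add_apply,
          ContinuousLinearMap.smul_apply]
        module
      · have : χ x = 0 := image_eq_zero_of_notMem_tsupport fun h => hb (c5 h)
        simpa [this] using g3 x hx hxa
    · obtain ⟨ρ', hρ', hρO'⟩ := Metric.isOpen_iff.1 o1 a (by simpa using o2)
      refine ⟨ρ', hρ', (hρO'.trans o3).trans hρO, ?_⟩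
      intro x hx
      show f' x + χ x • (C - B) (x - a) = _
      rw [o4 x (hρO' hx), g4 x (o3 (hρO' hx))]
      simp

/-- moving a zero -/
lemma move_zero (z : H) {r : ℝ} (hr : 0 < r) : ∃ ε > 0, ε ≤ r ∧ ∀ y ∈ ball z ε, ∀ y' ∈ ball z ε,
    ∀ f : H → H, ContDiff ℝ 1 f → f y = 0 → (∀ x ∈ ball z r, x ≠ y → f x ≠ 0) →
    ∃ f', ContDiff ℝ 1 f' ∧ Mod (ball z r) f f' ∧ f' y' = 0 ∧
      (∀ x ∈ ball z r, x ≠ y' → f' x ≠ 0) ∧ fderiv ℝ f' y' = fderiv ℝ f y := by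
  obtain ⟨χ, c1, c2, c3, c4, c5, O', o1, o2, o3, o4⟩ :=
    exists_cutoff (isCompact_singleton (x := z)) (isOpen_ball (x := z) (ε := r / 2)) (by simp [hr])
  obtain ⟨ρ, hρ, hρO⟩ := Metric.isOpen_iff.1 o1 z (by simpa using o2)
  obtain ⟨L, hL⟩ := c1.lipschitzWith_of_hasCompactSupport c4 (by norm_num)
  set ε := min (min ρ (r / 4)) (1 / (4 * (L + 1))) with hε
  have hεpos : 0 < ε := by positivity
  have e1 : ε ≤ ρ := (min_le_left _ _).trans (min_le_left _ _)
  have e2 : ε ≤ r / 4 := (min_le_left _ _).trans (min_le_right _ _)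
  have e3 : ε ≤ 1 / (4 * (L + 1)) := min_le_right _ _
  refine ⟨ε, hεpos, by linarith, ?_⟩
  intro y hy y' hy' f hf hfy hne
  have hyy : ‖y - y'‖ < 2 * ε := by
    rw [← dist_eq_norm]
    rw [mem_ball] at hy hy'
    linarith [dist_triangle_right y y' z]
  have hsmall : L * ‖y - y'‖ < 1 := by
    have h1 : (L : ℝ) * ‖y - y'‖ ≤ L * (2 * ε) := by gcongr
    have h2 : (L : ℝ) * (2 * ε) ≤ L * (2 * (1 / (4 * (L + 1)))) := by gcongr
    have h3 : (L : ℝ) * (2 * (1 / (4 * (L + 1)))) < 1 := by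
      rw [mul_one_div, mul_div_assoc', div_lt_one (by positivity)]
      have : (0:ℝ) ≤ L := L.2
      linarith
    linarith
  set Φ : H → H := fun x => x + χ x • (y - y') with hΦ
  have hχ1 : ∀ x ∈ ball z ρ, χ x = 1 := fun x hx => o4 x (hρO hx)
  have hy1 : y' ∈ ball z ρ := ball_subset_ball e1 hy'
  have hΦy : Φ y' = y := by simp [hΦ, hχ1 y' hy1]
  have hinj : ∀ x, Φ x = y → x = y' := by
    intro x hx
    have h1 : x - y' = (χ y' - χ x) • (y - y') := by
      rw [← sub_eq_zero]
      rw [← hΦy, hΦ] at hx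
      rw [← sub_eq_zero] at hx
      rw [← hx]; module
    have h2 : ‖x - y'‖ ≤ L * ‖y - y'‖ * ‖x - y'‖ := by
      conv_lhs => rw [h1]
      rw [norm_smul]
      have := hL.dist_le_mul y' x
      rw [dist_comm y' x, dist_eq_norm, dist_eq_norm] at this
      nlinarith [norm_nonneg (y - y')]
    by_contra hne
    have : 0 < ‖x - y'‖ := norm_pos_iff.2 (sub_ne_zero.2 hne)
    nlinarith
  refine ⟨fun x => f (Φ x), by fun_prop, ⟨tsupport χ, c4, c5.trans (ball_subset_ball (by linarith)), ?_⟩,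
    by simp only [hΦy, hfy], ?_, ?_⟩
  · intro x hx
    simp [hΦ, image_eq_zero_of_notMem_tsupport hx]
  · intro x hx hxy
    apply hne
    · by_cases hs : x ∈ tsupport χ
      · have := c5 hs
        rw [mem_ball, dist_eq_norm] at this ⊢
        have h1 : ‖χ x • (y - y')‖ ≤ 1 * (2 * ε) := by
          rw [norm_smul]
          apply mul_le_mul _ hyy.le (norm_nonneg _) zero_le_one
          rw [Real.norm_eq_abs, abs_le]
          constructor <;> linarith [c2 x, c3 x]
        have h2 : Φ x - z = (x - z) + χ x • (y - y') := by simp only [hΦ]; abel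
        rw [h2]
        have := norm_add_le (x - z) (χ x • (y - y'))
        linarith
      · simpa [hΦ, image_eq_zero_of_notMem_tsupport hs] using hx
    · exact fun h => hxy (hinj x h)
  · have h1 : HasFDerivAt Φ (ContinuousLinearMap.id ℝ H) y' := by
      have : (fun x => x + (y - y')) =ᶠ[𝓝 y'] Φ := by
        filter_upwards [isOpen_ball.mem_nhds hy1] with x hx
        simp [hΦ, hχ1 x hx]
      exact ((hasFDerivAt_id y').add_const _).congr_of_eventuallyEq this.symm
    have h2 : HasFDerivAt f (fderiv ℝ f y) (Φ y') := by
      rw [hΦy]; exact (hf.differentiable (by norm_num) y).hasFDerivAt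
    have := (h2.comp y' h1).fderiv
    simpa [Function.comp_def] using this

end Cancel

end EqVF

open Set unitInterval
open PaperTC Manifold

namespace EqVF

open Topology Filter MeasureTheory Metric

section Cancel2

variable {H : Type*} [NormedAddCommGroup H] [InnerProductSpace ℝ H] [FiniteDimensional ℝ H]

lemma Mod.eventually {O : Set H} {f g : H → H} (h : Mod O f g) {x : H} (hx : x ∉ O) :
    g =ᶠ[𝓝 x] f := by
  obtain ⟨K, a, b, c⟩ := h
  filter_upwards [a.isClosed.isOpen_compl.mem_nhds (fun h => hx (b h))] with y hy
  exact c y hy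

lemma seg_param {a u x : H} {l : ℝ} (hx : x ∈ segment ℝ a (a + l • u)) :
    ∃ s ∈ Icc (0:ℝ) 1, x = a + (s * l) • u := by
  rw [segment_eq_image'] at hx
  obtain ⟨s, hs, rfl⟩ := hx
  exact ⟨s, hs, by simp [smul_smul]⟩

lemma isCompact_segment' (a b : H) : IsCompact (segment ℝ a b) := by
  rw [segment_eq_image]
  exact isCompact_Icc.image (by fun_prop)

lemma refl_smul_self {u : H} (hu : ‖u‖ = 1) (t : ℝ) : refl u (t • u) = (-t) • u := by
  rw [refl_apply, inner_smul_right, real_inner_self_eq_norm_sq, hu]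
  module

/-- last part of the cancellation -/
lemma cancel3 {g : H → H} (hg : ContDiff ℝ 1 g) {a u : H} {l : ℝ} (hu : ‖u‖ = 1) (hl : 0 < l)
    {O : Set H} (hO : IsOpen O) (hseg : segment ℝ a (a + l • u) ⊆ O)
    (hne : ∀ x ∈ O, x ≠ a → x ≠ a + l • u → g x ≠ 0) {ρ : ℝ} (hρ : 0 < ρ)
    (ha : ∀ x ∈ ball a ρ, g x = x - a)
    (hb : ∀ x ∈ ball (a + l • u) ρ, g x = refl u (x - (a + l • u)))
    (hpos : ∀ t, 0 < t → t < l → 0 < inner ℝ u (g (a + t • u))) :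
    ∃ f', ContDiff ℝ 1 f' ∧ Mod O g f' ∧ ∀ x ∈ O, f' x ≠ 0 := by
  set b := a + l • u with hbdef
  have huu : inner ℝ u u = 1 := by rw [real_inner_self_eq_norm_sq, hu]; norm_num
  have hC := isCompact_segment' a b
  set q : H → H := fun v => v - (inner ℝ u v) • u with hq
  have hqu : ∀ v, inner ℝ u (q v) = 0 := by
    intro v; simp [hq, inner_sub_right, inner_smul_right, hu]
  have hqsmul : ∀ t : ℝ, q (t • u) = 0 := by
    intro t; simp [hq, inner_smul_right, hu]
  have hqadd : ∀ v w, q (v + w) = q v + q w := by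
    intro v w; simp only [hq, inner_add_right]; module
  set O3 := O ∩ ({x | 0 < inner ℝ u (g x)} ∪ (ball a ρ ∪ ball b ρ)) with hO3
  have hO3o : IsOpen O3 := by
    apply hO.inter (IsOpen.union _ (isOpen_ball.union isOpen_ball))
    exact isOpen_lt continuous_const (continuous_const.inner hg.continuous)
  have hsegt : ∀ x ∈ segment ℝ a b, x = a ∨ x = b ∨ ∃ t, 0 < t ∧ t < l ∧ x = a + t • u := by
    intro x hx
    obtain ⟨s, hs, rfl⟩ := seg_param hx
    rcases hs.1.eq_or_lt with rfl | h0
    · left; simp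
    rcases hs.2.eq_or_lt with rfl | h1
    · right; left; simp [hbdef]
    · right; right
      exact ⟨s * l, by positivity, by nlinarith, rfl⟩
  have hsegO3 : segment ℝ a b ⊆ O3 := by
    intro x hx
    refine ⟨hseg hx, ?_⟩
    rcases hsegt x hx with rfl | rfl | ⟨t, h0, h1, rfl⟩
    · right; left; exact mem_ball_self hρ
    · right; right; exact mem_ball_self hρ
    · left; exact hpos t h0 h1
  obtain ⟨ψ, c1, c2, c3, c4, c5, O', o1, o2, o3, o4⟩ := exists_cutoff hC hO3o hsegO3
  set g3 : H → H := fun x => g x + ψ x • (q (x - a) - q (g x)) with hg3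
  have hqc : ContDiff ℝ 1 q := by
    simp only [hq]
    exact contDiff_id.sub ((contDiff_const.inner ℝ contDiff_id).smul contDiff_const)
  have hg3c : ContDiff ℝ 1 g3 := by
    simp only [hg3]
    fun_prop
  have hg3i : ∀ x, inner ℝ u (g3 x) = inner ℝ u (g x) := by
    intro x
    simp only [hg3, inner_add_right, inner_smul_right, inner_sub_right, hqu]
    ring
  have hrefl : ∀ v, q (refl u v) = q v := by
    intro v
    rw [refl_apply, sub_eq_add_neg, ← neg_smul, hqadd, hqsmul, add_zero]
  have hg3a : ∀ x ∈ ball a ρ, g3 x = x - a := by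
    intro x hx
    simp only [hg3, ha x hx]
    simp
  have hg3b : ∀ x ∈ ball b ρ, g3 x = refl u (x - b) := by
    intro x hx
    simp only [hg3, hb x hx, hrefl]
    have : x - a = (x - b) + l • u := by rw [hbdef]; abel
    rw [this, hqadd, hqsmul]
    simp
  have hg3ne : ∀ x ∈ O, x ≠ a → x ≠ b → g3 x ≠ 0 := by
    intro x hx hxa hxb
    by_cases hs : x ∈ tsupport ψ
    · rcases c5 hs with ⟨_, h | h | h⟩
      · intro h0
        have := hg3i x
        rw [h0, inner_zero_right] at this
        rw [mem_ofPred_eq, ← this] at h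
        exact lt_irrefl _ h
      · rw [hg3a x h]; exact sub_ne_zero.2 hxa
      · rw [hg3b x h]
        exact inj_of_det (by rw [refl_det u hu]; norm_num) (sub_ne_zero.2 hxb)
    · have := hne x hx hxa hxb
      simpa [hg3, image_eq_zero_of_notMem_tsupport hs] using this
  set O4 := O' ∩ ({x | 0 < inner ℝ u (x - a) ∧ inner ℝ u (x - a) < l} ∪ (ball a ρ ∪ ball b ρ))
    with hO4
  have hO4o : IsOpen O4 := by
    apply o1.inter (IsOpen.union (IsOpen.and _ _) (isOpen_ball.union isOpen_ball))
    · exact isOpen_lt continuous_const (by fun_prop)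
    · exact isOpen_lt (by fun_prop) continuous_const
  have hsegO4 : segment ℝ a b ⊆ O4 := by
    intro x hx
    refine ⟨o2 hx, ?_⟩
    rcases hsegt x hx with rfl | rfl | ⟨t, h0, h1, rfl⟩
    · right; left; exact mem_ball_self hρ
    · right; right; exact mem_ball_self hρ
    · left; simp [inner_smul_right, hu, h0, h1]
  obtain ⟨ξ, d1, d2, d3, d4, d5, O'', p1, p2, p3, p4⟩ := exists_cutoff hC hO4o hsegO4
  obtain ⟨M, hM⟩ := hC.exists_bound_of_continuousOn
    (f := fun x => inner ℝ u (g x)) (continuous_const.inner hg.continuous).continuousOn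
  have hM0 : 0 ≤ M := (norm_nonneg _).trans (hM a (left_mem_segment _ _ _))
  refine ⟨fun x => g3 x + ξ x • (-(M + 1)) • u, by fun_prop,
    ((mod_cutoff g _ c4 c5).mono inter_subset_left).trans
      ((mod_cutoff g3 _ d4 d5).mono (inter_subset_left.trans (o3.trans inter_subset_left))), ?_⟩
  intro x hx h0
  by_cases hs : x ∈ tsupport ξ
  · obtain ⟨hxO', hx4⟩ := d5 hs
    have e1 : g3 x = (inner ℝ u (g x)) • u + q (x - a) := by
      simp only [hg3, o4 x hxO', one_smul]
      simp only [hq]; module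
    -- inner with u
    have e2 : inner ℝ u (g x) = ξ x * (M + 1) := by
      have := congrArg (fun v => inner ℝ u v) h0
      simp only [inner_add_right, hg3i, inner_smul_right, huu, inner_zero_right] at this
      linarith
    have e3 : q (x - a) = 0 := by
      have h0' := h0
      simp only at h0'
      rw [e1, e2] at h0'
      rw [← h0']; module
    set t := inner ℝ u (x - a) with ht
    have e4 : x = a + t • u := by
      have : x - a - t • u = 0 := e3
      rw [← sub_eq_zero, ← this]; abel
    have hin : 0 ≤ t → t ≤ l → False := by
      intro h1 h2
      have hxs : x ∈ segment ℝ a b := by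
        rw [segment_eq_image']
        refine ⟨t / l, ⟨by positivity, (div_le_one hl).2 h2⟩, ?_⟩
        simp only [hbdef, add_sub_cancel_left, smul_smul]
        rw [div_mul_cancel₀ _ hl.ne', ← e4]
      have h3 := hM x hxs
      rw [e2, p4 x (p2 hxs), Real.norm_eq_abs, one_mul, abs_of_pos (by linarith)] at h3
      linarith
    have hξ := mul_nonneg (d2 x) (by linarith : 0 ≤ M + 1)
    rcases hx4 with h | h | h
    · exact hin h.1.le h.2.le
    · rcases le_or_gt 0 t with h1 | h1
      · rcases le_or_gt t l with h2 | h2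
        · exact hin h1 h2
        · -- t > l, then also b... 
          rw [ha x h, ← ht] at e2
          have hbx : b ∈ ball a ρ := by
            rw [mem_ball, dist_eq_norm] at h ⊢
            rw [e4, add_sub_cancel_left, norm_smul, hu, Real.norm_eq_abs, abs_of_pos (by linarith)] at h
            rw [hbdef, add_sub_cancel_left, norm_smul, hu, Real.norm_eq_abs, abs_of_pos hl]
            linarith
          have h5 := ha b hbx
          rw [hb b (mem_ball_self hρ), sub_self, map_zero] at h5
          have : l • u = 0 := by rw [h5, hbdef]; abel
          have hu0 : u ≠ 0 := by intro h; rw [h] at hu; simp at hu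
          exact (smul_ne_zero hl.ne' hu0) this
      · rw [ha x h, ← ht] at e2
        linarith
    · have e5 : x - b = (t - l) • u := by rw [e4, hbdef]; module
      rw [hb x h, e5, refl_smul_self hu, inner_smul_right, huu] at e2
      rcases le_or_gt t l with h2 | h2
      · rcases le_or_gt 0 t with h1 | h1
        · exact hin h1 h2
        · have hax : a ∈ ball b ρ := by
            rw [mem_ball, dist_eq_norm] at h ⊢
            rw [e5, norm_smul, hu, Real.norm_eq_abs, abs_of_neg (by linarith)] at h
            rw [hbdef, ← norm_neg, neg_sub, add_sub_cancel_left, norm_smul, hu, Real.norm_eq_abs, abs_of_pos hl]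
            linarith
          have h5 := hb a hax
          rw [ha a (mem_ball_self hρ), sub_self] at h5
          have h6 : a - b ≠ 0 := by
            rw [hbdef]
            simp only [sub_add_cancel_left, ne_eq, neg_eq_zero, smul_eq_zero, not_or]
            refine ⟨hl.ne', ?_⟩
            intro h; rw [h] at hu; simp at hu
          exact inj_of_det (by rw [refl_det u hu]; norm_num) h6 h5.symm
      · linarith
  · have hξ0 := image_eq_zero_of_notMem_tsupport hs
    simp only [hξ0, zero_smul, add_zero] at h0
    have hxs : x ∉ segment ℝ a b := by
      intro h
      have := p4 x (p2 h)
      rw [hξ0] at this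
      norm_num at this
    exact hg3ne x hx (fun h => hxs (h ▸ left_mem_segment _ _ _))
      (fun h => hxs (h ▸ right_mem_segment _ _ _)) h0

lemma push {f : H → H} (hf : ContDiff ℝ 1 f) {O M : Set H} (hO : IsOpen O) (e : H)
    (hM : IsCompact M) (hMO : M ⊆ O) (hMe : ∀ x ∈ M, ∀ t : ℝ, t ≤ 0 → f x ≠ t • e) :
    ∃ χ : H → ℝ, ContDiff ℝ 1 χ ∧ (∀ x, 0 ≤ χ x) ∧ (∀ x ∈ M, χ x = 1) ∧
      (∀ x, f x = 0 → χ =ᶠ[𝓝 x] 0) ∧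
      ∀ s : ℝ, 0 ≤ s → ContDiff ℝ 1 (fun x => f x + χ x • (s • e)) ∧
        Mod O f (fun x => f x + χ x • (s • e)) ∧
        ∀ x ∈ O, f x ≠ 0 → f x + χ x • (s • e) ≠ 0 := by
  have hcl : IsClosed ((fun t : ℝ => t • e) '' Iic 0) := (isClosedMap_smul_left e) _ isClosed_Iic
  set O1 := O ∩ f ⁻¹' ((fun t : ℝ => t • e) '' Iic 0)ᶜ with hO1
  have ho : IsOpen O1 := hO.inter (hcl.isOpen_compl.preimage hf.continuous)
  have hM1 : M ⊆ O1 := by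
    intro x hx
    refine ⟨hMO hx, ?_⟩
    rintro ⟨t, ht, h⟩
    exact hMe x hx t ht h.symm
  obtain ⟨χ, c1, c2, c3, c4, c5, O', o1, o2, o3, o4⟩ := exists_cutoff hM ho hM1
  refine ⟨χ, c1, c2, fun x hx => o4 x (o2 hx), ?_, ?_⟩
  · intro x hx
    rw [← notMem_tsupport_iff_eventuallyEq]
    intro h
    exact (c5 h).2 ⟨0, by simp, by simp [hx]⟩
  · intro s hs
    refine ⟨by fun_prop, (mod_cutoff _ _ c4 c5).mono inter_subset_left, ?_⟩
    intro x hx hne h0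
    by_cases h : x ∈ tsupport χ
    · refine (c5 h).2 ⟨-(χ x * s), ?_, ?_⟩
      · have := mul_nonneg (c2 x) hs
        simpa using this
      · simp only
        rw [← sub_eq_zero, ← neg_eq_zero, ← h0]; module
    · rw [image_eq_zero_of_notMem_tsupport h] at h0
      simp at h0
      exact hne h0

lemma cancel2 (hdim : 2 < Module.finrank ℝ H) {f : H → H} (hf : ContDiff ℝ 1 f) {a u : H} {l : ℝ}
    (hu : ‖u‖ = 1) (hl : 0 < l)
    {O : Set H} (hO : IsOpen O) (hseg : segment ℝ a (a + l • u) ⊆ O)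
    (hne : ∀ x ∈ O, x ≠ a → x ≠ a + l • u → f x ≠ 0) {ρ : ℝ} (hρ : 0 < ρ)
    (ha : ∀ x ∈ ball a ρ, f x = x - a)
    (hb : ∀ x ∈ ball (a + l • u) ρ, f x = refl u (x - (a + l • u))) :
    ∃ f', ContDiff ℝ 1 f' ∧ Mod O f f' ∧ ∀ x ∈ O, f' x ≠ 0 := by
  set b := a + l • u with hbdef
  have huu : inner ℝ u u = 1 := by rw [real_inner_self_eq_norm_sq, hu]; norm_num
  have hu0 : u ≠ 0 := by intro h; rw [h] at hu; simp at hu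
  set q : H → H := fun v => v - (inner ℝ u v) • u with hq
  have hqsmul : ∀ t : ℝ, q (t • u) = 0 := by
    intro t; simp [hq, inner_smul_right, hu]
  have hqadd : ∀ v w, q (v + w) = q v + q w := by
    intro v w; simp only [hq, inner_add_right]; module
  have hqs : ∀ (t : ℝ) v, q (t • v) = t • q v := by
    intro t v; simp only [hq, inner_smul_right]; module
  have hqc : Continuous q := by
    simp only [hq]
    exact continuous_id.sub ((continuous_const.inner continuous_id).smul continuous_const)
  obtain ⟨e, he1, he2, he3⟩ : ∃ e : H, (∀ s t : ℝ, e ≠ s • f (a + t • u)) ∧ q e ≠ 0 ∧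
      0 ≤ inner ℝ u e := by
    have hd : Dense (range (fun w : ℝ × ℝ => w.1 • f (a + w.2 • u)))ᶜ := by
      apply ContDiff.dense_compl_range_of_finrank_lt_finrank
      · fun_prop
      · simpa using hdim
    have ho : IsOpen {e | q e ≠ 0} := isOpen_ne_fun hqc continuous_const
    have hnn : ({e | q e ≠ 0} : Set H).Nonempty := by
      by_contra hcon
      rw [not_nonempty_iff_eq_empty] at hcon
      have hall : ∀ e, q e = 0 := by
        intro e
        by_contra h
        have : e ∈ ({e | q e ≠ 0} : Set H) := h
        rw [hcon] at this
        exact this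
      have : Module.finrank ℝ H ≤ 1 := finrank_le_one u fun w => ⟨inner ℝ u w, by
        have := hall w
        simp only [hq, sub_eq_zero] at this
        exact this.symm⟩
      omega
    obtain ⟨e, h1, h2⟩ := hd.inter_open_nonempty _ ho hnn
    have h3 : ∀ s t : ℝ, e ≠ s • f (a + t • u) := fun s t h => h2 ⟨(s, t), h.symm⟩
    rcases le_or_gt 0 (inner ℝ u e) with h | h
    · exact ⟨e, h3, h1, h⟩
    · refine ⟨-e, ?_, ?_, ?_⟩
      · intro s t h'
        apply h3 (-s) t
        rw [neg_smul, ← h', neg_neg]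
      · have := hqs (-1) e
        rw [neg_one_smul] at this
        rw [this]
        simpa using h1
      · rw [inner_neg_right]; linarith
  set δ := min ρ l / 2 with hδ
  have hδ0 : 0 < δ := by positivity
  have hδρ : δ < ρ := by have := min_le_left ρ l; linarith
  have hδl : δ ≤ l / 2 := by have := min_le_right ρ l; linarith
  set Mid : Set H := (fun t : ℝ => a + t • u) '' Icc δ (l - δ) with hMid
  have hMc : IsCompact Mid := isCompact_Icc.image (by fun_prop)
  have hMO : Mid ⊆ O := by
    rintro _ ⟨t, ht, rfl⟩
    apply hseg
    rw [segment_eq_image']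
    refine ⟨t / l, ⟨div_nonneg (hδ0.le.trans ht.1) hl.le, (div_le_one hl).2 (by linarith [ht.2])⟩, ?_⟩
    simp only [hbdef, add_sub_cancel_left, smul_smul]
    rw [div_mul_cancel₀ _ hl.ne']
  have hends : ∀ t, 0 < t → t < l → a + t • u ∉ Mid → ∃ m : ℝ, 0 < m ∧ f (a + t • u) = m • u := by
    intro t h0 h1 hM
    rcases lt_or_ge t δ with h | h
    · refine ⟨t, h0, ?_⟩
      rw [ha, add_sub_cancel_left]
      rw [mem_ball, dist_eq_norm, add_sub_cancel_left, norm_smul, hu, Real.norm_eq_abs, abs_of_pos h0]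
      linarith
    · rcases le_or_gt t (l - δ) with h' | h'
      · exact absurd ⟨t, ⟨h, h'⟩, rfl⟩ hM
      · have e5 : a + t • u - b = (t - l) • u := by rw [hbdef]; module
        refine ⟨l - t, by linarith, ?_⟩
        rw [hb, e5, refl_smul_self hu]
        · congr 1; ring
        · rw [mem_ball, dist_eq_norm, e5, norm_smul, hu, Real.norm_eq_abs, abs_of_neg (by linarith)]
          linarith
  have hinj : ∀ t : ℝ, a + t • u = a → t = 0 := by
    intro t h
    have : t • u = 0 := by simpa using h
    exact (smul_eq_zero.1 this).resolve_right hu0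
  have hinj2 : ∀ t : ℝ, a + t • u = b → t = l := by
    intro t h
    rw [hbdef] at h
    exact smul_left_injective ℝ hu0 (add_left_cancel h)
  have hM1 : ∀ x ∈ Mid, ∀ t : ℝ, t ≤ 0 → f x ≠ t • e := by
    rintro x ⟨t, ht, rfl⟩ s _ h
    have hfx : f (a + t • u) ≠ 0 := by
      apply hne _ (hMO ⟨t, ht, rfl⟩)
      · intro h; have := hinj t h; linarith [ht.1]
      · intro h; have := hinj2 t h; linarith [ht.2]
    have hs : s ≠ 0 := by
      rintro rfl
      simp only [zero_smul] at h
      exact hfx h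
    apply he1 s⁻¹ t
    simp only at h
    rw [h, smul_smul, inv_mul_cancel₀ hs, one_smul]
  have hfa : f a = 0 := by rw [ha a (mem_ball_self hρ), sub_self]
  have hfb : f b = 0 := by rw [hb b (mem_ball_self hρ), sub_self, map_zero]
  obtain ⟨χ, c1, c2, c3, c4, c5⟩ := push hf hO e hMc hMO hM1
  obtain ⟨M, hM⟩ := hMc.exists_bound_of_continuousOn
    (f := fun x => q (f x)) (hqc.comp hf.continuous).continuousOn
  have hqe : 0 < ‖q e‖ := norm_pos_iff.2 he2
  set s1 := (|M| + 1) / ‖q e‖ with hs1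
  have hs1p : 0 < s1 := by positivity
  obtain ⟨g1, g2, g3⟩ := c5 s1 hs1p.le
  set g : H → H := fun x => f x + χ x • (s1 • e) with hg
  have hline : ∀ t, 0 < t → t < l → ∀ s : ℝ, s ≤ 0 → g (a + t • u) ≠ s • u := by
    intro t h0 h1 s hs h
    have hqg : q (f (a + t • u)) + (χ (a + t • u) * s1) • q e = 0 := by
      have := congrArg q h
      simp only [hg] at this
      rw [hqsmul, hqadd, smul_smul, hqs] at this
      exact this
    by_cases hmid : a + t • u ∈ Mid
    · rw [c3 _ hmid, one_mul] at hqg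
      have h2 := hM _ hmid
      rw [eq_neg_of_add_eq_zero_left hqg, norm_neg, norm_smul, Real.norm_eq_abs, abs_of_pos hs1p,
        hs1, div_mul_cancel₀ _ hqe.ne'] at h2
      linarith [le_abs_self M]
    · obtain ⟨m, hm, hfm⟩ := hends t h0 h1 hmid
      rw [hfm, hqsmul, zero_add] at hqg
      have hz := (smul_eq_zero.1 hqg).resolve_right he2
      simp only [hg, hfm, smul_smul, hz, zero_smul, add_zero] at h
      have := smul_left_injective ℝ hu0 h
      linarith
  have hM2 : ∀ x ∈ Mid, ∀ t : ℝ, t ≤ 0 → g x ≠ t • u := by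
    rintro x ⟨t, ht, rfl⟩
    exact hline t (by linarith [ht.1]) (by linarith [ht.2])
  obtain ⟨χ', d1, d2, d3, d4, d5⟩ := push g1 hO u hMc hMO hM2
  obtain ⟨M', hM'⟩ := hMc.exists_bound_of_continuousOn
    (f := fun x => inner ℝ u (g x)) (continuous_const.inner g1.continuous).continuousOn
  obtain ⟨k1, k2, k3⟩ := d5 (|M'| + 1) (by positivity)
  have hga : g =ᶠ[𝓝 a] f := by
    filter_upwards [c4 a hfa] with x hx
    simp [hg, hx]
  have hgb : g =ᶠ[𝓝 b] f := by
    filter_upwards [c4 b hfb] with x hx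
    simp [hg, hx]
  have hka : (fun x => g x + χ' x • (|M'| + 1) • u) =ᶠ[𝓝 a] f := by
    filter_upwards [hga, d4 a (hga.self_of_nhds.trans hfa)] with x hx hx'
    simp [hx, hx']
  have hkb : (fun x => g x + χ' x • (|M'| + 1) • u) =ᶠ[𝓝 b] f := by
    filter_upwards [hgb, d4 b (hgb.self_of_nhds.trans hfb)] with x hx hx'
    simp [hx, hx']
  obtain ⟨ρ1, hρ1, hr1⟩ := Metric.eventually_nhds_iff_ball.1 hka
  obtain ⟨ρ2, hρ2, hr2⟩ := Metric.eventually_nhds_iff_ball.1 hkb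
  obtain ⟨f', r1, r2, r3⟩ := cancel3 k1 hu hl hO hseg
    (fun x hx hxa hxb => k3 x hx (g3 x hx (hne x hx hxa hxb)))
    (ρ := min ρ (min ρ1 ρ2)) (by positivity)
    (fun x hx => by
      refine (hr1 x (ball_subset_ball ((min_le_right _ _).trans (min_le_left _ _)) hx)).trans ?_
      exact ha x (ball_subset_ball (min_le_left _ _) hx))
    (fun x hx => by
      refine (hr2 x (ball_subset_ball ((min_le_right _ _).trans (min_le_right _ _)) hx)).trans ?_
      exact hb x (ball_subset_ball (min_le_left _ _) hx))
    (by
      intro t h0 h1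
      rw [inner_add_right, inner_smul_right, inner_smul_right, huu]
      by_cases hmid : a + t • u ∈ Mid
      · rw [d3 _ hmid]
        have := hM' _ hmid
        rw [Real.norm_eq_abs, abs_le] at this
        linarith [this.1, le_abs_self M']
      · obtain ⟨m, hm, hfm⟩ := hends t h0 h1 hmid
        simp only [hg, hfm, inner_add_right, inner_smul_right, huu]
        have := mul_nonneg (c2 (a + t • u)) (mul_nonneg hs1p.le he3)
        have := mul_nonneg (d2 (a + t • u)) (by positivity : 0 ≤ (|M'| + 1) * 1)
        linarith)
  exact ⟨f', r1, (g2.trans k2).trans r2, r3⟩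

/-- cancellation of two zeros of opposite sign -/
lemma cancel (hdim : 2 < Module.finrank ℝ H) {f : H → H} (hf : ContDiff ℝ 1 f) {a b : H}
    (hab : a ≠ b) {O : Set H} (hO : IsOpen O) (hseg : segment ℝ a b ⊆ O)
    (hfa : f a = 0) (hfb : f b = 0)
    (hne : ∀ x ∈ O, x ≠ a → x ≠ b → f x ≠ 0) (hda : 0 < (fderiv ℝ f a).det)
    (hdb : (fderiv ℝ f b).det < 0) :
    ∃ f', ContDiff ℝ 1 f' ∧ Mod O f f' ∧ ∀ x ∈ O, f' x ≠ 0 := by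
  set l := ‖b - a‖ with hl
  have hl0 : 0 < l := norm_pos_iff.2 (sub_ne_zero.2 hab.symm)
  set u := l⁻¹ • (b - a) with hu
  have hb : b = a + l • u := by
    rw [hu, smul_smul, mul_inv_cancel₀ hl0.ne', one_smul]; abel
  have hu1 : ‖u‖ = 1 := by
    rw [hu, norm_smul, norm_inv, norm_norm, inv_mul_cancel₀ hl0.ne']
  have hOb : IsOpen (O \ {b}) := hO.sdiff isClosed_singleton
  have hOa : IsOpen (O \ {a}) := hO.sdiff isClosed_singleton
  have haO : a ∈ O := hseg (left_mem_segment _ _ _)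
  have hbO : b ∈ O := hseg (right_mem_segment _ _ _)
  obtain ⟨f1, x1, x2, x3, x4⟩ := norm_lin hf hOb (a := a) ⟨haO, hab⟩ hfa
    (fun x hx hxa => hne x hx.1 hxa hx.2) hda.ne'
  obtain ⟨f2, y1, y2, y3, ρ, hρ, y4, y5⟩ := norm_chain x1 x3 (lchain_one _ hda) x4
  have hm2 := x2.trans y2
  have hev : f2 =ᶠ[𝓝 b] f := hm2.eventually (by simp)
  have hf2a : f2 a = 0 := by rw [y5 a (mem_ball_self hρ)]; simp
  have hne2 : ∀ x ∈ O \ {a}, x ≠ b → f2 x ≠ 0 := fun x hx hxb => y3 x ⟨hx.1, hxb⟩ hx.2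
  have hder : fderiv ℝ f2 b = fderiv ℝ f b := hev.fderiv_eq
  obtain ⟨f3, z1, z2, z3, z4⟩ := norm_lin y1 hOa (a := b) ⟨hbO, hab.symm⟩
    (hev.self_of_nhds.trans hfb) hne2 (by rw [hder]; exact hdb.ne)
  rw [hder] at z4
  obtain ⟨f4, w1, w2, w3, ρ', hρ', w4, w5⟩ := norm_chain z1 z3 (lchain_refl _ hdb u hu1) z4
  have hev2 : f4 =ᶠ[𝓝 a] f2 := (z2.trans w2).eventually (by simp)
  obtain ⟨ρ1, hρ1, hr1⟩ := Metric.eventually_nhds_iff_ball.1 hev2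
  rw [hb] at hseg w3 w5
  obtain ⟨f', r1, r2, r3⟩ := cancel2 hdim w1 hu1 hl0 hO hseg
    (fun x hx hxa hxb => w3 x ⟨hx, hxa⟩ hxb) (ρ := min ρ' (min ρ ρ1)) (by positivity)
    (fun x hx => by
      rw [hr1 x (ball_subset_ball ((min_le_right _ _).trans (min_le_right _ _)) hx),
        y5 x (ball_subset_ball ((min_le_right _ _).trans (min_le_left _ _)) hx)]
      simp)
    (fun x hx => w5 x (ball_subset_ball (min_le_left _ _) hx))
  exact ⟨f', r1, ((hm2.mono sdiff_subset).trans ((z2.trans w2).mono sdiff_subset)).trans r2, r3⟩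

end Cancel2

end EqVF

open Set unitInterval
open PaperTC Manifold

namespace EqVF

open Topology Filter MeasureTheory Metric

/-- a smooth flat action -/
structure Act (G H : Type*) [AddCommGroup G] [NormedAddCommGroup H] [NormedSpace ℝ H] where
  /-- the maps -/
  α : G → H → H
  zero : ∀ x, α 0 x = x
  add : ∀ g h x, α (g + h) x = α g (α h x)
  smooth : ∀ g, ContDiff ℝ 2 (α g)

section Flat

variable {H : Type*} [NormedAddCommGroup H] [InnerProductSpace ℝ H] [FiniteDimensional ℝ H]
variable {G : Type*} [AddCommGroup G] [Fintype G]

namespace Act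

variable (A : Act G H)

/-- derivative -/
noncomputable def D (g : G) (x : H) : H →L[ℝ] H := fderiv ℝ (A.α g) x

/-- fixed set -/
def F : Set H := {x | ∀ g, A.α g x = x}

/-- equivariance -/
def Eqv (f : H → H) : Prop := ∀ g x, f (A.α g x) = A.D g x (f x)

lemma neg_cancel (g : G) (x : H) : A.α (-g) (A.α g x) = x := by
  rw [← A.add, neg_add_cancel, A.zero]

lemma cancel_neg (g : G) (x : H) : A.α g (A.α (-g) x) = x := by
  rw [← A.add, add_neg_cancel, A.zero]

lemma cont (g : G) : Continuous (A.α g) := (A.smooth g).continuous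

lemma hasD (g : G) (x : H) : HasFDerivAt (A.α g) (A.D g x) x :=
  ((A.smooth g).differentiable (by norm_num) x).hasFDerivAt

lemma D_zero (x : H) : A.D 0 x = ContinuousLinearMap.id ℝ H := by
  have : A.α 0 = id := funext A.zero
  rw [D, this, fderiv_id]

lemma D_add (g h : G) (x : H) : A.D (g + h) x = (A.D g (A.α h x)) ∘L (A.D h x) := by
  have h1 := (A.hasD g (A.α h x)).comp x (A.hasD h x)
  have h2 : A.α (g + h) = A.α g ∘ A.α h := funext (A.add g h)
  rw [D, h2]
  exact h1.fderiv

lemma D_neg (g : G) (x v : H) : A.D (-g) (A.α g x) (A.D g x v) = v := by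
  have := congrArg (fun L => L v) (A.D_add (-g) g x)
  simpa [A.D_zero] using this.symm

lemma D_neg' (g : G) (x v : H) : A.D g x (A.D (-g) (A.α g x) v) = v := by
  have := A.D_neg (-g) (A.α g x) v
  rwa [neg_neg, A.neg_cancel] at this

lemma D_smooth (g : G) : ContDiff ℝ 1 (A.D g) :=
  (A.smooth g).fderiv_right (by norm_num)

lemma F_closed : IsClosed A.F := by
  have : A.F = ⋂ g, {x | A.α g x = x} := by ext x; simp [F]
  rw [this]
  exact isClosed_iInter fun g => isClosed_eq (A.cont g) continuous_id

lemma F_inv {x : H} (g : G) : A.α g x ∈ A.F ↔ x ∈ A.F := by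
  constructor
  · intro h k
    have e1 := h (-g)
    rw [A.neg_cancel] at e1
    have := h k
    rw [← e1] at this
    exact this
  · intro h; rw [h g]; exact h

/-- spreading -/
noncomputable def spread (φ : H → H) (x : H) : H :=
  ∑ g, A.D g (A.α (-g) x) (φ (A.α (-g) x))

lemma spread_eqv (φ : H → H) : A.Eqv (A.spread φ) := by
  intro h x
  simp only [spread]
  rw [map_sum, ← Equiv.sum_comp (Equiv.addLeft h)]
  refine Finset.sum_congr rfl fun g _ => ?_
  have e1 : A.α (-(h + g)) (A.α h x) = A.α (-g) x := by
    rw [← A.add]; congr 1; abel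
  simp only [Equiv.coe_addLeft, e1]
  rw [A.D_add]
  simp [A.cancel_neg]

lemma spread_smooth {φ : H → H} (hφ : ContDiff ℝ 1 φ) : ContDiff ℝ 1 (A.spread φ) := by
  unfold spread
  apply ContDiff.sum
  intro g _
  have h1 : ContDiff ℝ 1 (A.α (-g)) := (A.smooth (-g)).of_le (by norm_num)
  exact ((A.D_smooth g).comp h1).clm_apply (hφ.comp h1)

lemma Eqv.add {f f' : H → H} (h : A.Eqv f) (h' : A.Eqv f') : A.Eqv (fun x => f x + f' x) := by
  intro g x
  simp [h g x, h' g x]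

lemma Eqv.zero_iff {f : H → H} (h : A.Eqv f) (g : G) (x : H) : f (A.α g x) = 0 ↔ f x = 0 := by
  constructor
  · intro h0
    rw [h g x] at h0
    rw [← A.D_neg g x (f x), h0, map_zero]
  · intro h0; rw [h g x, h0, map_zero]

lemma Eqv.det {f : H → H} (hf : ContDiff ℝ 1 f) (h : A.Eqv f) (g : G) {x : H} (h0 : f x = 0) :
    (fderiv ℝ f (A.α g x)).det = (fderiv ℝ f x).det := by
  have d1 : ∀ y, HasFDerivAt f (fderiv ℝ f y) y := fun y =>
    (hf.differentiable (by norm_num) y).hasFDerivAt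
  have e1 := (d1 (A.α g x)).comp x (A.hasD g x)
  have e2 : HasFDerivAt (fun y => A.D g y (f y)) ((A.D g x) ∘L (fderiv ℝ f x)) x := by
    have hD : HasFDerivAt (A.D g) (fderiv ℝ (A.D g) x) x :=
      ((A.D_smooth g).differentiable (by norm_num) x).hasFDerivAt
    have := hD.clm_apply (d1 x)
    simpa [h0] using this
  have e3 : f ∘ A.α g = fun y => A.D g y (f y) := funext (h g)
  rw [e3] at e1
  have e4 := e1.unique e2
  have e5 := congrArg ContinuousLinearMap.det e4
  have dd : ∀ S T : H →L[ℝ] H, (S ∘L T).det = S.det * T.det := by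
    intro S T
    simp only [ContinuousLinearMap.det]
    exact LinearMap.det_comp _ _
  rw [dd, dd, mul_comm] at e5
  have hne : (A.D g x).det ≠ 0 := by
    have : (A.D (-g) (A.α g x)) ∘L (A.D g x) = ContinuousLinearMap.id ℝ H := by
      ext v; simp [A.D_neg]
    have h2 := congrArg ContinuousLinearMap.det this
    rw [dd] at h2
    intro h3
    rw [h3, mul_zero] at h2
    simp [ContinuousLinearMap.det] at h2
  exact mul_left_cancel₀ hne e5

end Act

open Act

variable (A : Act G H)

/-- local modification principle -/
lemma lmp {f f' : H → H} (hf : ContDiff ℝ 1 f) (hf' : ContDiff ℝ 1 f') (he : A.Eqv f) {B : Set H}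
    (hB : ∀ x ∈ B, ∀ g, g ≠ 0 → A.α g x ∉ B) (hBU : B ⊆ A.Fᶜ) (hm : Mod B f f') :
    ∃ k, ContDiff ℝ 1 k ∧ A.Eqv k ∧ Mod A.Fᶜ f k ∧ (∀ x ∈ B, k x = f' x) ∧
      ∀ x, (∀ g, A.α g x ∉ B) → k =ᶠ[𝓝 x] f := by
  classical
  obtain ⟨K, hK, hKB, hKe⟩ := hm
  set k : H → H := fun x => f x + A.spread (fun y => f' y - f y) x with hk
  set Q : Set H := ⋃ g, A.α g '' K with hQ
  have hQc : IsCompact Q := isCompact_iUnion fun g => hK.image (A.cont g)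
  have hoff : ∀ x, x ∉ Q → k x = f x := by
    intro x hx
    simp only [hk, spread]
    rw [Finset.sum_eq_zero, add_zero]
    intro g _
    rw [hKe (A.α (-g) x), sub_self, map_zero]
    intro h
    exact hx (mem_iUnion.2 ⟨g, _, h, A.cancel_neg g x⟩)
  refine ⟨k, hf.add (A.spread_smooth (hf'.sub hf)), Eqv.add A he (A.spread_eqv _),
    ⟨Q, hQc, ?_, hoff⟩, ?_, ?_⟩
  · intro x hx
    obtain ⟨g, y, hy, rfl⟩ := mem_iUnion.1 hx
    intro h
    exact hBU (hKB hy) ((A.F_inv g).1 h)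
  · intro x hx
    simp only [hk, spread]
    rw [Finset.sum_eq_single (0 : G)]
    · simp [A.D_zero, A.zero]
    · intro g _ hg
      rw [hKe (A.α (-g) x), sub_self, map_zero]
      intro h
      exact hB x hx (-g) (neg_ne_zero.2 hg) (hKB h)
    · simp
  · intro x hx
    filter_upwards [hQc.isClosed.isOpen_compl.mem_nhds (x := x) (by
      intro h
      obtain ⟨g, y, hy, rfl⟩ := mem_iUnion.1 h
      have := hx (-g)
      rw [A.neg_cancel] at this
      exact this (hKB hy))] with y hy
    exact hoff y hy

/-- good fields -/
def Good (f0 f : H → H) : Prop :=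
  ContDiff ℝ 1 f ∧ A.Eqv f ∧ Mod A.Fᶜ f0 f ∧ ∀ x, f x = 0 → (fderiv ℝ f x).det ≠ 0

lemma lmp_good {f0 f f' : H → H} (hf : Good A f0 f) (hf' : ContDiff ℝ 1 f') {B : Set H}
    (hBo : IsOpen B)
    (hB : ∀ x ∈ B, ∀ g, g ≠ 0 → A.α g x ∉ B) (hBU : B ⊆ A.Fᶜ) (hm : Mod B f f')
    (hd : ∀ x ∈ B, f' x = 0 → (fderiv ℝ f' x).det ≠ 0) :
    ∃ k, Good A f0 k ∧ (∀ x ∈ B, k x = f' x) ∧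
      ∀ x, (∀ g, A.α g x ∉ B) → k =ᶠ[𝓝 x] f := by
  obtain ⟨h1, h2, h3, h4⟩ := hf
  obtain ⟨k, k1, k2, k3, k4, k5⟩ := lmp A h1 hf' h2 hB hBU hm
  refine ⟨k, ⟨k1, k2, h3.trans k3, ?_⟩, k4, k5⟩
  intro x hx
  by_cases h : ∀ g, A.α g x ∉ B
  · have e := k5 x h
    rw [e.fderiv_eq]
    exact h4 x (e.self_of_nhds ▸ hx)
  · push Not at h
    obtain ⟨g, hg⟩ := h
    have hz : k (A.α g x) = 0 := (Eqv.zero_iff A k2 g x).2 hx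
    rw [← Eqv.det A k1 k2 g hx]
    have e : k =ᶠ[𝓝 (A.α g x)] f' := by
      filter_upwards [hBo.mem_nhds hg] with y hy using k4 y hy
    rw [e.fderiv_eq]
    exact hd _ hg (e.self_of_nhds ▸ hz)

/-- small balls with disjoint translates -/
lemma small_ball (hfree : ∀ x, x ∉ A.F → ∀ g, g ≠ 0 → A.α g x ≠ x) {z : H} (hz : z ∉ A.F)
    {W : Set H} (hW : W ∈ 𝓝 z) :
    ∃ r > 0, ball z r ⊆ W ∧ ball z r ⊆ A.Fᶜ ∧ ∀ x ∈ ball z r, ∀ g, g ≠ 0 → A.α g x ∉ ball z r := by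
  have h1 : ∀ g : G, ∀ᶠ r in 𝓝[>] (0:ℝ), g ≠ 0 → ∀ x ∈ ball z r, A.α g x ∉ ball z r := by
    intro g
    by_cases hg : g = 0
    · simp [hg]
    · obtain ⟨V, V', hV, hV', hzV, hzV', hd⟩ := t2_separation (hfree z hz g hg)
      have hn : V' ∩ (A.α g) ⁻¹' V ∈ 𝓝 z :=
        (hV'.inter (hV.preimage (A.cont g))).mem_nhds ⟨hzV', hzV⟩
      obtain ⟨ε, hε, hb⟩ := Metric.mem_nhds_iff.1 hn
      filter_upwards [Ioo_mem_nhdsGT hε] with r hr _ x hx hx'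
      have e1 := hb (ball_subset_ball hr.2.le hx)
      have e2 := hb (ball_subset_ball hr.2.le hx')
      exact Set.disjoint_left.1 hd e1.2 e2.1
  have h2 : ∀ᶠ r in 𝓝[>] (0:ℝ), ball z r ⊆ W ∩ A.Fᶜ := by
    have : W ∩ A.Fᶜ ∈ 𝓝 z := inter_mem hW (A.F_closed.isOpen_compl.mem_nhds hz)
    obtain ⟨ε, hε, hb⟩ := Metric.mem_nhds_iff.1 this
    filter_upwards [Ioo_mem_nhdsGT hε] with r hr
    exact (ball_subset_ball hr.2.le).trans hb
  obtain ⟨r, ⟨hr1, hr2⟩, hr3⟩ := (((eventually_all.2 h1).and h2).and self_mem_nhdsWithin).exists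
  exact ⟨r, hr3, hr2.trans inter_subset_left, hr2.trans inter_subset_right,
    fun x hx g hg => hr1 g hg x hx⟩

/-- Sard -/
lemma sard {f : H → H} (hf : ContDiff ℝ 1 f) :
    Dense {c : H | ∀ x, f x = c → (fderiv ℝ f x).det ≠ 0} := by
  borelize H
  have h := addHaar_image_eq_zero_of_det_fderivWithin_eq_zero (volume : Measure H)
    (s := {x | (fderiv ℝ f x).det = 0}) (f := f) (f' := fderiv ℝ f)
    (fun x _ => ((hf.differentiable (by norm_num) x).hasFDerivAt).hasFDerivWithinAt)
    (fun x hx => hx)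
  have h2 : {c : H | ∀ x, f x = c → (fderiv ℝ f x).det ≠ 0} = (f '' {x | (fderiv ℝ f x).det = 0})ᶜ := by
    ext c
    simp only [mem_ofPred_eq, mem_compl_iff, mem_image, not_exists, not_and]
    exact ⟨fun h x hx hc => h x hc hx, fun h x hc hx => h x hx hc⟩
  rw [h2]
  have := (volume : Measure H).dense_of_ae (p := fun c => c ∈ (f '' {x | (fderiv ℝ f x).det = 0})ᶜ)
    (compl_mem_ae_iff.2 h)
  exact this

lemma gen_step {f : H → H} (hf : ContDiff ℝ 1 f) (he : A.Eqv f)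
    {z : H} {r : ℝ} (hr : 0 < r) (hBU : ball z r ⊆ A.Fᶜ)
    (hB : ∀ x ∈ ball z r, ∀ g, g ≠ 0 → A.α g x ∉ ball z r)
    {W C : Set H} (hW : IsOpen W) (hC : IsCompact C) (hzW : ∀ x, f x = 0 → x ∈ W)
    (hnd : ∀ x ∈ C, f x = 0 → (fderiv ℝ f x).det ≠ 0) :
    ∃ f', ContDiff ℝ 1 f' ∧ A.Eqv f' ∧ Mod A.Fᶜ f f' ∧ (∀ x, f' x = 0 → x ∈ W) ∧
      ∀ x ∈ C ∪ closedBall z (r / 2), f' x = 0 → (fderiv ℝ f' x).det ≠ 0 := by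
  classical
  obtain ⟨χ, c1, c2, c3, c4, c5, O', o1, o2, o3, o4⟩ :=
    exists_cutoff (isCompact_closedBall z (r / 2)) (isOpen_ball (x := z) (ε := r))
      (closedBall_subset_ball (by linarith))
  set P : H → H → H := fun c => A.spread (fun y => χ y • c) with hP
  have hPc : ContDiff ℝ 1 (fun p : H × H => P p.1 p.2) := by
    simp only [hP, spread]
    apply ContDiff.sum
    intro g _
    have h1 : ContDiff ℝ 1 (A.α (-g)) := (A.smooth (-g)).of_le (by norm_num)
    have h2 : ContDiff ℝ 1 (fun p : H × H => A.α (-g) p.2) := h1.comp contDiff_snd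
    exact ((A.D_smooth g).comp h2).clm_apply ((c1.comp h2).smul contDiff_fst)
  set Φ : H → H → H := fun c x => f x + P c x with hΦ
  have hΦc : ContDiff ℝ 1 (Function.uncurry Φ) := by
    have : Function.uncurry Φ = fun p : H × H => f p.2 + P p.1 p.2 := rfl
    rw [this]
    exact (hf.comp contDiff_snd).add hPc
  have hΦ0 : Φ 0 = f := by
    ext x; simp [hΦ, hP, spread]
  have hdc : Continuous (fun p : H × H => (fderiv ℝ (Φ p.1) p.2).det) := by
    apply ContinuousLinearMap.continuous_det.comp
    have : ContDiff ℝ 0 (fun p : H × H => fderiv ℝ (Φ p.1) p.2) := by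
      apply ContDiff.fderiv (m := 1) (f := fun p : H × H => Φ p.1) _ contDiff_snd (by norm_num)
      exact hΦc.comp ((contDiff_fst.comp contDiff_fst).prodMk contDiff_snd)
    exact this.continuous
  set Q : Set H := ⋃ g, A.α g '' tsupport χ with hQ
  have hQc : IsCompact Q := isCompact_iUnion fun g => IsCompact.image c4 (A.cont g)
  have hoff : ∀ c x, x ∉ Q → Φ c x = f x := by
    intro c x hx
    simp only [hΦ, hP, spread]
    rw [Finset.sum_eq_zero, add_zero]
    intro g _
    rw [image_eq_zero_of_notMem_tsupport (f := χ), zero_smul, map_zero]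
    intro h
    exact hx (mem_iUnion.2 ⟨g, _, h, A.cancel_neg g x⟩)
  have hon : ∀ c, ∀ x ∈ O', Φ c x = f x + c := by
    intro c x hx
    simp only [hΦ, hP, spread]
    rw [Finset.sum_eq_single (0 : G)]
    · simp [A.D_zero, A.zero, o4 x hx]
    · intro g _ hg
      rw [image_eq_zero_of_notMem_tsupport (f := χ), zero_smul, map_zero]
      intro h
      exact hB x (o3 hx) (-g) (neg_ne_zero.2 hg) (c5 h)
    · simp
  have hev1 : ∀ᶠ c in 𝓝 (0 : H), ∀ x ∈ Q \ W, Φ c x ≠ 0 := by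
    apply (hQc.diff hW).eventually_forall_of_forall_eventually
    intro x hx
    have : Continuous (fun p : H × H => Φ p.1 p.2) := hΦc.continuous
    refine this.continuousAt.eventually_ne ?_
    simp only [hΦ0]
    exact fun h => hx.2 (hzW x h)
  have hev2 : ∀ᶠ c in 𝓝 (0 : H), ∀ x ∈ C, ‖Φ c x‖ + |(fderiv ℝ (Φ c) x).det| ≠ 0 := by
    apply hC.eventually_forall_of_forall_eventually
    intro x hx
    have h1 : Continuous (fun p : H × H => Φ p.1 p.2) := hΦc.continuous
    have h2 : Continuous (fun p : H × H => ‖Φ p.1 p.2‖ + |(fderiv ℝ (Φ p.1) p.2).det|) :=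
      h1.norm.add hdc.abs
    refine h2.continuousAt.eventually_ne ?_
    simp only [hΦ0]
    by_cases h : f x = 0
    · have := hnd x hx h
      positivity
    · positivity
  obtain ⟨c, hcr, hc1, hc2⟩ : ∃ c, (∀ x, f x = -c → (fderiv ℝ f x).det ≠ 0) ∧
      (∀ x ∈ Q \ W, Φ c x ≠ 0) ∧ ∀ x ∈ C, ‖Φ c x‖ + |(fderiv ℝ (Φ c) x).det| ≠ 0 := by
    have hev := hev1.and hev2
    have hneg : Tendsto (fun c : H => -c) (𝓝 0) (𝓝 0) := by
      have := (continuous_neg (G := H)).tendsto 0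
      simpa using this
    obtain ⟨c, hc, hc'⟩ := (mem_closure_iff_frequently.1 (sard hf 0)).and_eventually (hneg.eventually hev) |>.exists
    exact ⟨-c, by simpa using hc, hc'.1, hc'.2⟩
  have hcd : ContDiff ℝ 1 (Φ c) := hΦc.comp (contDiff_const.prodMk contDiff_id)
  refine ⟨Φ c, hcd, Eqv.add A he (A.spread_eqv _), ⟨Q, hQc, ?_, hoff c⟩, ?_, ?_⟩
  · intro x hx
    obtain ⟨g, y, hy, rfl⟩ := mem_iUnion.1 hx
    intro h
    exact hBU (c5 hy) ((A.F_inv g).1 h)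
  · intro x hx
    by_contra hxW
    by_cases hxQ : x ∈ Q
    · exact hc1 x ⟨hxQ, hxW⟩ hx
    · rw [hoff c x hxQ] at hx
      exact hxW (hzW x hx)
  · rintro x (hx | hx) h0
    · have := hc2 x hx
      rw [h0] at this
      simpa using this
    · have e : Φ c =ᶠ[𝓝 x] fun y => f y + c := by
        filter_upwards [o1.mem_nhds (o2 hx)] with y hy using hon c y hy
      rw [e.fderiv_eq, fderiv_add_const]
      apply hcr
      rw [hon c x (o2 hx)] at h0
      exact eq_neg_of_add_eq_zero_left h0

lemma exists_good (hfree : ∀ x, x ∉ A.F → ∀ g, g ≠ 0 → A.α g x ≠ x) {f0 : H → H}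
    (hf : ContDiff ℝ 1 f0) (he : A.Eqv f0) {K : Set H} (hK : IsCompact K) (hKU : K ⊆ A.Fᶜ)
    (hz : ∀ x, f0 x = 0 → x ∈ K) : ∃ f, Good A f0 f := by
  classical
  have hch : ∀ z : H, ∃ r : ℝ, z ∈ K → 0 < r ∧ ball z r ⊆ A.Fᶜ ∧
      ∀ x ∈ ball z r, ∀ g, g ≠ 0 → A.α g x ∉ ball z r := by
    intro z
    by_cases hz : z ∈ K
    · obtain ⟨r, hr, _, h2, h3⟩ := small_ball A hfree (hKU hz) univ_mem
      exact ⟨r, fun _ => ⟨hr, h2, h3⟩⟩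
    · exact ⟨0, fun h => absurd h hz⟩
  choose r hr using hch
  obtain ⟨t, hcov⟩ := hK.elim_nhds_subcover' (fun z _ => ball z (r z / 2))
    (fun z hz => ball_mem_nhds z (half_pos (hr z hz).1))
  set W : Set H := ⋃ z ∈ t, ball (z : H) (r z / 2) with hW
  have hWo : IsOpen W := isOpen_biUnion fun _ _ => isOpen_ball
  suffices h : ∀ s : Finset K, ∃ f, ContDiff ℝ 1 f ∧ A.Eqv f ∧ Mod A.Fᶜ f0 f ∧
      (∀ x, f x = 0 → x ∈ W) ∧
      ∀ x ∈ ⋃ z ∈ s, closedBall (z : H) (r z / 2), f x = 0 → (fderiv ℝ f x).det ≠ 0 by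
    obtain ⟨f, h1, h2, h3, h4, h5⟩ := h t
    refine ⟨f, h1, h2, h3, fun x hx => h5 x ?_ hx⟩
    have := h4 x hx
    simp only [hW, mem_iUnion] at this ⊢
    obtain ⟨z, hz, hxz⟩ := this
    exact ⟨z, hz, ball_subset_closedBall hxz⟩
  intro s
  induction s using Finset.induction_on with
  | empty => exact ⟨f0, hf, he, Mod.refl _ _, fun x hx => hcov (hz x hx), by simp⟩
  | insert z s hzs ih =>
    obtain ⟨f, h1, h2, h3, h4, h5⟩ := ih
    obtain ⟨f', g1, g2, g3, g4, g5⟩ := gen_step A h1 h2 (hr z z.2).1 (hr z z.2).2.1 (hr z z.2).2.2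
      hWo (s.isCompact_biUnion fun z _ => isCompact_closedBall (z : H) (r z / 2)) h4 h5
    refine ⟨f', g1, g2, h3.trans g3, g4, fun x hx => g5 x ?_⟩
    rw [Finset.set_biUnion_insert] at hx
    exact hx.symm

lemma good_finite {f0 f : H → H} (hf : Good A f0 f) {K : Set H} (hK : IsCompact K)
    (hz : ∀ x, f0 x = 0 → x ∈ K) : {x | f x = 0}.Finite := by
  obtain ⟨h1, h2, ⟨K', hK', _, h3⟩, h4⟩ := hf
  have hc : IsCompact {x | f x = 0} := by
    apply (hK.union hK').of_isClosed_subset (isClosed_eq h1.continuous continuous_const)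
    intro x hx
    by_cases h : x ∈ K'
    · exact Or.inr h
    · left; apply hz; rw [← h3 x h]; exact hx
  apply hc.finite
  rw [isDiscrete_iff_nhdsNE]
  intro x hx
  obtain ⟨c, hc, hcb⟩ := bound_of_det (h4 x hx)
  have := (h1.differentiable (by norm_num) x).hasFDerivAt.eventually_ne (c := (0:H))
    ⟨⟨c⁻¹, by positivity⟩, by
      refine AddMonoidHomClass.antilipschitz_of_bound (fderiv ℝ f x) fun v => ?_
      show ‖v‖ ≤ c⁻¹ * _
      rw [inv_mul_eq_div, le_div_iff₀ hc, mul_comm]; exact hcb v⟩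
  rw [← disjoint_iff, Filter.disjoint_principal_right]
  exact this

end Flat

end EqVF

open Set unitInterval
open PaperTC Manifold

namespace EqVF

open Topology Filter MeasureTheory Metric

section Flat2

variable {H : Type*} [NormedAddCommGroup H] [InnerProductSpace ℝ H] [FiniteDimensional ℝ H]
variable {G : Type*} [AddCommGroup G] [Fintype G]

open Act

lemma rep_segment (M : G → H →L[ℝ] H) (M0 : ∀ v, M 0 v = v) (Ma : ∀ g h v, M (g + h) v = M g (M h v))
    {v w : H} (hv : ∃ g, M g v ≠ v) (hw : ∃ g, M g w ≠ w) :
    ∃ g, ∀ u ∈ segment ℝ v (M g w), ∃ h, M h u ≠ u := by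
  classical
  by_contra hcon
  push Not at hcon
  set Q : H →L[ℝ] H := (Fintype.card G : ℝ) • ContinuousLinearMap.id ℝ H - ∑ g, M g with hQ
  have Qa : ∀ u, Q u = (Fintype.card G : ℝ) • u - ∑ g, M g u := by
    intro u; simp [hQ]
  have hN : (Fintype.card G : ℝ) ≠ 0 := by
    exact_mod_cast Fintype.card_ne_zero
  have sumM : ∀ h u, M h (∑ g, M g u) = ∑ g, M g u := by
    intro h u
    rw [map_sum, ← Equiv.sum_comp (Equiv.addLeft h) (fun g => M g u)]
    simp [Ma]
  have sumM' : ∀ h u, ∑ g, M g (M h u) = ∑ g, M g u := by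
    intro h u
    rw [← Equiv.sum_comp (Equiv.addRight h) (fun g => M g u)]
    simp [Ma]
  have Q0 : ∀ u, Q u = 0 → ∀ g, M g u = u := by
    intro u hu g
    rw [Qa, sub_eq_zero] at hu
    have := sumM g u
    rw [← hu, map_smul] at this
    exact smul_right_injective _ hN this
  have Q1 : ∀ u, (∀ g, M g u = u) → Q u = 0 := by
    intro u hu
    rw [Qa]
    simp [hu, Nat.cast_smul_eq_nsmul]
  have Qc : ∀ g u, Q (M g u) = M g (Q u) := by
    intro g u
    rw [Qa, Qa, map_sub, map_smul, sumM, sumM']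
  have hs : ∑ g, M g (Q w) = 0 := by
    have : ∀ g, M g (Q w) = (Fintype.card G : ℝ) • M g w - ∑ g, M g w := by
      intro g; rw [Qa, map_sub, map_smul, sumM]
    simp only [this]
    rw [Finset.sum_sub_distrib, ← Finset.smul_sum]
    simp [Nat.cast_smul_eq_nsmul]
  have hQv : Q v ≠ 0 := fun h => by
    obtain ⟨g, hg⟩ := hv; exact hg (Q0 v h g)
  have hQw : Q w ≠ 0 := fun h => by
    obtain ⟨g, hg⟩ := hw; exact hg (Q0 w h g)
  have hc : ∀ g, ∃ c : ℝ, 0 ≤ c ∧ M g (Q w) = -(c • Q v) := by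
    intro g
    obtain ⟨u, ⟨s, t, hs, ht, hst, rfl⟩, hu⟩ := hcon g
    have e := Q1 _ hu
    rw [map_add, map_smul, map_smul, Qc] at e
    have ht0 : t ≠ 0 := by
      rintro rfl
      have : s = 1 := by linarith
      rw [this] at e
      simp at e
      exact hQv e
    refine ⟨s / t, by positivity, ?_⟩
    have e2 : t • M g (Q w) = -(s • Q v) := by
      rw [eq_neg_iff_add_eq_zero, add_comm]; exact e
    rw [div_eq_inv_mul, mul_smul, ← smul_neg, ← e2, smul_smul, inv_mul_cancel₀ ht0, one_smul]
  choose c hc0 hc1 using hc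
  simp only [hc1] at hs
  rw [Finset.sum_neg_distrib, neg_eq_zero, ← Finset.sum_smul, smul_eq_zero] at hs
  rcases hs with hs | hs
  · rw [Finset.sum_eq_zero_iff_of_nonneg (fun g _ => hc0 g)] at hs
    have := hc1 0
    rw [hs 0 (Finset.mem_univ _), M0] at this
    simp at this
    exact hQw this
  · exact hQv hs

variable (A : Act G H)

lemma linearize {x : H} (hx : x ∈ A.F) {W : Set H} (hW : IsOpen W) (hxW : x ∈ W) :
    ∃ (e : OpenPartialHomeomorph H H) (M : G → H →L[ℝ] H), x ∈ e.source ∧ e.source ⊆ W ∧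
      e x = 0 ∧ (∀ v, M 0 v = v) ∧ (∀ g h v, M (g + h) v = M g (M h v)) ∧
      (∀ g y, e (A.α g y) = M g (e y)) ∧ Continuous e ∧ ∀ g, M g = A.D g x := by
  classical
  set M : G → H →L[ℝ] H := fun g => A.D g x with hM
  have M0 : ∀ v, M 0 v = v := by intro v; simp [hM, A.D_zero]
  have Ma : ∀ g h v, M (g + h) v = M g (M h v) := by
    intro g h v
    simp [hM, A.D_add, hx h]
  have hN : (Fintype.card G : ℝ) ≠ 0 := by
    exact_mod_cast Fintype.card_ne_zero
  set Lf : H → H := fun y => (Fintype.card G : ℝ)⁻¹ • ∑ g, M (-g) (A.α g y - x) with hL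
  have hLs : ContDiff ℝ 1 Lf := by
    apply ContDiff.const_smul
    apply ContDiff.sum
    intro g _
    exact (M (-g)).contDiff.comp (((A.smooth g).of_le (by norm_num)).sub contDiff_const)
  have hLe : ∀ g y, Lf (A.α g y) = M g (Lf y) := by
    intro g y
    simp only [hL]
    rw [map_smul, map_sum, ← Equiv.sum_comp (Equiv.addRight g) (fun h => M g (M (-h) (A.α h y - x)))]
    congr 1
    refine Finset.sum_congr rfl fun h _ => ?_
    simp only [Equiv.coe_addRight]
    rw [← Ma, A.add]
    congr 2
    abel
  have hL0 : Lf x = 0 := by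
    simp only [hL]
    rw [Finset.sum_eq_zero, smul_zero]
    intro g _
    rw [hx g, sub_self, map_zero]
  have hd : HasFDerivAt Lf ((ContinuousLinearEquiv.refl ℝ H : H ≃L[ℝ] H) : H →L[ℝ] H) x := by
    have h1 : HasFDerivAt Lf ((Fintype.card G : ℝ)⁻¹ • ∑ g, (M (-g)) ∘L (M g)) x := by
      apply HasFDerivAt.const_smul
      apply HasFDerivAt.fun_sum
      intro g _
      exact (M (-g)).hasFDerivAt.comp x ((A.hasD g x).sub_const x)
    convert h1
    ext v
    have : ∀ g, M (-g) (M g v) = v := by intro g; rw [← Ma, neg_add_cancel, M0]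
    simp [this, ← Nat.cast_smul_eq_nsmul ℝ, hN]
  have hst := hLs.contDiffAt.hasStrictFDerivAt' hd (by norm_num)
  refine ⟨(hst.toOpenPartialHomeomorph Lf).restrOpen W hW, M, ?_, ?_, ?_, M0, Ma, ?_, ?_, fun _ => rfl⟩
  · exact ⟨hst.mem_toOpenPartialHomeomorph_source, hxW⟩
  · intro y hy; exact hy.2
  · exact hL0
  · exact hLe
  · exact hLs.continuous

lemma lin_nhds {x : H} {e : OpenPartialHomeomorph H H} {M : G → H →L[ℝ] H} (hx : x ∈ A.F)
    (hxe : x ∈ e.source) (h0 : e x = 0) (hec : Continuous e) {ε : ℝ} (hε : 0 < ε) :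
    {y | (∀ g, A.α g y ∈ e.source) ∧ ∀ g, M g (e y) ∈ ball (0:H) ε} ∈ 𝓝 x := by
  have h1 : ∀ g, ∀ᶠ y in 𝓝 x, A.α g y ∈ e.source := fun g =>
    (A.cont g).continuousAt.eventually_mem (e.open_source.mem_nhds (by rwa [hx g]))
  have h2 : ∀ g, ∀ᶠ y in 𝓝 x, M g (e y) ∈ ball (0:H) ε := fun g => by
    have : Continuous fun y => M g (e y) := (M g).continuous.comp hec
    exact this.continuousAt.eventually_mem (isOpen_ball.mem_nhds (by simp [h0, hε]))
  exact (eventually_all.2 h1).and (eventually_all.2 h2)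

lemma lin_path {x : H} (hx : x ∈ A.F) {W : Set H} (hW : IsOpen W) (hxW : x ∈ W) :
    ∃ V ∈ 𝓝 x, ∀ y ∈ V, y ∉ A.F → ∀ y' ∈ V, y' ∉ A.F → ∃ g, ∃ C, IsPreconnected C ∧ C ⊆ W ∧
      C ⊆ A.Fᶜ ∧ y ∈ C ∧ A.α g y' ∈ C := by
  obtain ⟨e, M, e1, e2, e3, M0, Ma, e4, e5, _⟩ := linearize A hx hW hxW
  obtain ⟨ε, hε, hb⟩ := Metric.mem_nhds_iff.1 (e.open_target.mem_nhds (e.map_source e1))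
  rw [e3] at hb
  refine ⟨_, lin_nhds A (M := M) hx e1 e3 e5 hε, ?_⟩
  have key : ∀ y, (∀ g, A.α g y ∈ e.source) → y ∉ A.F → ∃ g, M g (e y) ≠ e y := by
    intro y hy hyF
    by_contra hcon
    push Not at hcon
    apply hyF
    intro g
    apply e.injOn (hy g) (by simpa [A.zero] using hy 0)
    rw [e4, hcon g]
  rintro y ⟨hy1, hy2⟩ hyF y' ⟨hy1', hy2'⟩ hyF'
  obtain ⟨g, hg⟩ := rep_segment M M0 Ma (key y hy1 hyF) (key y' hy1' hyF')
  have hsub : segment ℝ (e y) (M g (e y')) ⊆ e.target := by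
    refine ((convex_ball (0:H) ε).segment_subset ?_ (hy2' g)).trans hb
    simpa [M0] using hy2 0
  refine ⟨g, e.symm '' segment ℝ (e y) (M g (e y')), ?_, ?_, ?_, ?_, ?_⟩
  · exact (convex_segment _ _).isPreconnected.image _ (e.continuousOn_symm.mono hsub)
  · rintro _ ⟨u, hu, rfl⟩
    exact e2 (e.map_target (hsub hu))
  · rintro _ ⟨u, hu, rfl⟩ hF
    obtain ⟨h, hh⟩ := hg u hu
    apply hh
    have := e4 h (e.symm u)
    rw [hF h, e.right_inv (hsub hu)] at this
    exact this.symm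
  · exact ⟨e y, left_mem_segment _ _ _, e.left_inv (by simpa [A.zero] using hy1 0)⟩
  · exact ⟨M g (e y'), right_mem_segment _ _ _, by rw [← e4]; exact e.left_inv (hy1' g)⟩

lemma F_interior (hF : A.F ≠ univ) : interior A.F = ∅ := by
  by_contra hne
  have hcl : IsClosed (interior A.F) := by
    rw [← closure_subset_iff_isClosed]
    intro x hx
    have hxF : x ∈ A.F := A.F_closed.closure_subset_iff.2 interior_subset hx
    obtain ⟨e, M, e1, e2, e3, M0, Ma, e4, e5, _⟩ := linearize A hxF isOpen_univ (mem_univ x)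
    obtain ⟨y, hy1, hy2⟩ := mem_closure_iff.1 hx e.source e.open_source e1
    set S : Submodule ℝ H :=
      { carrier := {v | ∀ g, M g v = v}
        add_mem' := by intro a b ha hb g; rw [map_add, ha g, hb g]
        zero_mem' := by intro g; simp
        smul_mem' := by intro c a ha g; rw [map_smul, ha g] } with hS
    have hO : IsOpen (e '' (e.source ∩ interior A.F)) :=
      e.isOpen_image_of_subset_source (e.open_source.inter isOpen_interior) inter_subset_left
    have hsub : e '' (e.source ∩ interior A.F) ⊆ (S : Set H) := by
      rintro _ ⟨z, hz, rfl⟩ g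
      rw [← e4, interior_subset hz.2 g]
    have htop : S = ⊤ := by
      apply Submodule.eq_top_of_nonempty_interior'
      exact ⟨e y, interior_maximal hsub hO ⟨y, ⟨hy1, hy2⟩, rfl⟩⟩
    rw [mem_interior_iff_mem_nhds]
    filter_upwards [lin_nhds A (M := M) hxF e1 e3 e5 one_pos] with z hz g
    apply e.injOn (hz.1 g) (by simpa [A.zero] using hz.1 0)
    rw [e4]
    have : e z ∈ S := by rw [htop]; trivial
    exact this g
  have : IsClopen (interior A.F) := ⟨hcl, isOpen_interior⟩
  rcases isClopen_iff.1 this with h | h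
  · exact hne h
  · exact hF (univ_subset_iff.1 (h ▸ interior_subset))

lemma punctured_preconnected (hdim : 2 < Module.finrank ℝ H) (z : H) {r : ℝ} (hr : 0 < r) :
    IsPreconnected (ball z r \ {z}) := by
  have hrk : 1 < Module.rank ℝ H := by
    rw [← Module.finrank_eq_rank]
    exact_mod_cast (by omega : 1 < Module.finrank ℝ H)
  have h1 := (isConnected_compl_singleton_of_one_lt_rank hrk (0:H)).isPreconnected
  set e := OpenPartialHomeomorph.univBall z r
  have h2 := h1.image e (OpenPartialHomeomorph.continuous_univBall z r).continuousOn
  convert h2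
  have hz : e 0 = z := OpenPartialHomeomorph.univBall_apply_zero z r
  have hs : e.source = univ := OpenPartialHomeomorph.univBall_source z r
  have ht : e.target = ball z r := OpenPartialHomeomorph.univBall_target z hr
  ext x
  constructor
  · rintro ⟨hx, hxz⟩
    refine ⟨e.symm x, ?_, e.right_inv (ht ▸ hx)⟩
    intro h
    apply hxz
    rw [mem_singleton_iff] at h ⊢
    have e1 : e (e.symm x) = x := e.right_inv (by rw [ht]; exact hx)
    rw [← e1, h, hz]
  · rintro ⟨y, hy, rfl⟩
    refine ⟨ht ▸ e.map_source (hs ▸ mem_univ y), fun h => hy ?_⟩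
    rw [mem_singleton_iff] at h
    rw [← hz] at h
    exact e.injOn (hs ▸ mem_univ _) (hs ▸ mem_univ _) h

/-- reachable predicate -/
def Reach (f0 : H → H) (Z : Set H) (b y : H) : Prop :=
  ∃ f, Good A f0 f ∧ (∀ x, f x = 0 → x ∈ Z ∨ ∃ g, x = A.α g y) ∧ f y = 0 ∧
    0 < (fderiv ℝ f y).det ∧ f b = 0 ∧ (fderiv ℝ f b).det < 0

variable {A}

lemma Reach.orbit {f0 : H → H} {Z : Set H} {b y : H} (g : G) (h : Reach A f0 Z b (A.α g y)) :
    Reach A f0 Z b y := by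
  obtain ⟨f, h1, h2, h3, h4, h5, h6⟩ := h
  have h0 := (Eqv.zero_iff A h1.2.1 g y).1 h3
  refine ⟨f, h1, ?_, h0, ?_, h5, h6⟩
  · intro x hx
    rcases h2 x hx with h | ⟨k, hk⟩
    · exact Or.inl h
    · exact Or.inr ⟨k + g, by rw [hk, A.add]⟩
  · rw [← Eqv.det A h1.1 h1.2.1 g h0]; exact h4

lemma reach_local (hfree : ∀ x, x ∉ A.F → ∀ g, g ≠ 0 → A.α g x ≠ x) {f0 : H → H} {Z : Set H}
    (hZ : Z.Finite) (hZi : ∀ g, ∀ x ∈ Z, A.α g x ∈ Z) {b z : H} (hb : b ∈ Z) (hz : z ∉ A.F)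
    (hzZ : z ∉ Z) : ∃ V ∈ 𝓝 z, ∀ y ∈ V, ∀ y' ∈ V, Reach A f0 Z b y → Reach A f0 Z b y' := by
  obtain ⟨r, hr, r1, r2, r3⟩ := small_ball A hfree hz (hZ.isClosed.isOpen_compl.mem_nhds hzZ)
  obtain ⟨ε, hε, hεr, hmv⟩ := move_zero z hr
  refine ⟨ball z ε, ball_mem_nhds z hε, ?_⟩
  rintro y hy y' hy' ⟨f, h1, h2, h3, h4, h5, h6⟩
  have hyr := ball_subset_ball hεr hy
  have hyr' := ball_subset_ball hεr hy'
  obtain ⟨f', m1, m2, m3, m4, m5⟩ := hmv y hy y' hy' f h1.1 h3 (by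
    intro x hx hxy h0
    rcases h2 x h0 with h | ⟨g, rfl⟩
    · exact r1 hx h
    · by_cases hg : g = 0
      · exact hxy (by rw [hg, A.zero])
      · exact r3 y hyr g hg hx)
  have hdet : 0 < (fderiv ℝ f' y').det := by rw [m5]; exact h4
  obtain ⟨k, k1, k2, k3⟩ := lmp_good A h1 m1 isOpen_ball r3 r2 m2 (by
    intro x hx h0
    by_cases h : x = y'
    · rw [h]; exact hdet.ne'
    · exact absurd h0 (m4 x hx h))
  have ey : k =ᶠ[𝓝 y'] f' := by
    filter_upwards [isOpen_ball.mem_nhds hyr'] with u hu using k2 u hu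
  have eb : k =ᶠ[𝓝 b] f := k3 b fun g hg => r1 hg (hZi g b hb)
  refine ⟨k, k1, ?_, ?_, ?_, ?_, ?_⟩
  · intro x hx
    by_cases h : ∀ g, A.α g x ∉ ball z r
    · have e := (k3 x h).self_of_nhds
      rcases h2 x (e ▸ hx) with h' | ⟨g, rfl⟩
      · exact Or.inl h'
      · exact absurd (by rw [A.neg_cancel]; exact hyr) (h (-g))
    · push Not at h
      obtain ⟨g, hg⟩ := h
      right
      have h0 := (Eqv.zero_iff A k1.2.1 g x).2 hx
      rw [k2 _ hg] at h0
      have : A.α g x = y' := by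
        by_contra hne
        exact m4 _ hg hne h0
      exact ⟨-g, by rw [← this, A.neg_cancel]⟩
  · rw [ey.self_of_nhds]; exact m3
  · rw [ey.fderiv_eq]; exact hdet
  · rw [eb.self_of_nhds]; exact h5
  · rw [eb.fderiv_eq]; exact h6

lemma reach_nhds (hdim : 2 < Module.finrank ℝ H)
    (hfree : ∀ x, x ∉ A.F → ∀ g, g ≠ 0 → A.α g x ≠ x) {f0 : H → H} {Z : Set H}
    (hZ : Z.Finite) (hZi : ∀ g, ∀ x ∈ Z, A.α g x ∈ Z) (hZF : Z ⊆ A.Fᶜ) {b : H} (hb : b ∈ Z)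
    (x : H) : ∃ V ∈ 𝓝 x, ∀ y ∈ V, y ∉ A.F → y ∉ Z → ∀ y' ∈ V, y' ∉ A.F → y' ∉ Z →
      Reach A f0 Z b y → Reach A f0 Z b y' := by
  have hpre : ∀ C : Set H, IsPreconnected C → C ⊆ A.Fᶜ → C ⊆ Zᶜ → ∀ y ∈ C, ∀ y' ∈ C,
      Reach A f0 Z b y → Reach A f0 Z b y' := by
    intro C hC h1 h2 y hy y' hy'
    refine hC.induction₂' (fun y y' => Reach A f0 Z b y → Reach A f0 Z b y') ?_ ?_ hy hy'
    · intro z hz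
      obtain ⟨V, hV, hVr⟩ := reach_local (f0 := f0) hfree hZ hZi hb (h1 hz) (h2 hz)
      filter_upwards [mem_nhdsWithin_of_mem_nhds hV] with u hu
      exact ⟨hVr z (mem_of_mem_nhds hV) u hu, hVr u hu z (mem_of_mem_nhds hV)⟩
    · intro u v w _ _ _ h h'
      exact h' ∘ h
  by_cases hxF : x ∈ A.F
  · have hxZ : x ∈ Zᶜ := fun h => hZF h hxF
    obtain ⟨V, hV, hp⟩ := lin_path A hxF hZ.isClosed.isOpen_compl hxZ
    refine ⟨V, hV, ?_⟩
    intro y hy hyF hyZ y' hy' hyF' hyZ' hR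
    obtain ⟨g, C, c1, c2, c3, c4, c5⟩ := hp y hy hyF y' hy' hyF'
    exact Reach.orbit g (hpre C c1 c3 c2 y c4 _ c5 hR)
  · by_cases hxZ : x ∈ Z
    · obtain ⟨r, hr, r1, r2, r3⟩ := small_ball A hfree hxF
        ((hZ.subset (sdiff_subset (t := {x}))).isClosed.isOpen_compl.mem_nhds (x := x) (by simp))
      refine ⟨ball x r, ball_mem_nhds x hr, ?_⟩
      intro y hy _ hyZ y' hy' _ hyZ' hR
      refine hpre _ (punctured_preconnected hdim x hr) (sdiff_subset.trans r2) ?_ y ?_ y' ?_ hR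
      · intro u hu huZ
        exact r1 hu.1 ⟨huZ, hu.2⟩
      · exact ⟨hy, fun h => hyZ (by rw [mem_singleton_iff.1 h]; exact hxZ)⟩
      · exact ⟨hy', fun h => hyZ' (by rw [mem_singleton_iff.1 h]; exact hxZ)⟩
    · obtain ⟨V, hV, hVr⟩ := reach_local (f0 := f0) hfree hZ hZi hb hxF hxZ
      exact ⟨V, hV, fun y hy _ _ y' hy' _ _ => hVr y hy y' hy'⟩

lemma reach_all (hdim : 2 < Module.finrank ℝ H)
    (hfree : ∀ x, x ∉ A.F → ∀ g, g ≠ 0 → A.α g x ≠ x) {f0 : H → H} {Z : Set H}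
    (hZ : Z.Finite) (hZi : ∀ g, ∀ x ∈ Z, A.α g x ∈ Z) (hZF : Z ⊆ A.Fᶜ) {b a : H} (hb : b ∈ Z)
    (haF : a ∉ A.F) (haZ : a ∉ Z) (ha : Reach A f0 Z b a) :
    ∃ V ∈ 𝓝 b, ∀ y ∈ V, y ∉ A.F → y ∉ Z → Reach A f0 Z b y := by
  have hnt : Nontrivial H := by
    apply Module.nontrivial_of_finrank_pos (R := ℝ); omega
  have hdense : ∀ x : H, ∀ V ∈ 𝓝 x, ∃ y ∈ V, y ∉ A.F ∧ y ∉ Z := by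
    intro x V hV
    have h1 : Dense A.Fᶜ := by
      rw [← interior_eq_empty_iff_dense_compl]
      exact F_interior A (fun h => haF (h ▸ mem_univ a))
    have h2 : Dense (A.Fᶜ ∩ Zᶜ) :=
      h1.inter_of_isOpen_right (hZ.countable.dense_compl ℝ) hZ.isClosed.isOpen_compl
    obtain ⟨y, hy, hyV⟩ := mem_closure_iff_nhds.1 (h2 x) V hV
    exact ⟨y, hy, hyV⟩
  set t : H → Prop := fun x => ∃ V ∈ 𝓝 x, ∀ y ∈ V, y ∉ A.F → y ∉ Z → Reach A f0 Z b y with ht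
  have hnb := reach_nhds (f0 := f0) hdim hfree hZ hZi hZF hb
  have hstep : ∀ x, ∀ᶠ y in 𝓝 x, (t x → t y) ∧ (t y → t x) := by
    intro x
    obtain ⟨V, hV, hVr⟩ := hnb x
    have key : ∀ y, V ∈ 𝓝 y → ∀ y', V ∈ 𝓝 y' → t y → t y' := by
      rintro y hy y' hy' ⟨V', hV', hR⟩
      obtain ⟨u, hu, huF, huZ⟩ := hdense y _ (inter_mem hy hV')
      exact ⟨V, hy', fun w hw hwF hwZ => hVr u hu.1 huF huZ w hw hwF hwZ (hR u hu.2 huF huZ)⟩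
    filter_upwards [eventually_mem_nhds_iff.2 hV] with y hy
    exact ⟨key x hV y hy, key y hy x hV⟩
  have hta : t a := by
    obtain ⟨V, hV, hVr⟩ := hnb a
    exact ⟨V, hV, fun y hy hyF hyZ => hVr a (mem_of_mem_nhds hV) haF haZ y hy hyF hyZ ha⟩
  have := PreconnectedSpace.induction₂' (fun x y => t x → t y) hstep
    ⟨fun u v w h h' => h' ∘ h⟩ a b
  exact this hta

lemma reduce (hdim : 2 < Module.finrank ℝ H)
    (hfree : ∀ x, x ∉ A.F → ∀ g, g ≠ 0 → A.α g x ≠ x) {f0 f : H → H} {K : Set H}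
    (hK : IsCompact K) (hKU : K ⊆ A.Fᶜ) (hz : ∀ x, f0 x = 0 → x ∈ K) (hf : Good A f0 f)
    {a b : H} (ha : f a = 0) (hb : f b = 0) (hda : 0 < (fderiv ℝ f a).det)
    (hdb : (fderiv ℝ f b).det < 0) :
    ∃ k, Good A f0 k ∧ {x | k x = 0}.ncard < {x | f x = 0}.ncard := by
  have hfin := good_finite A hf hK hz
  have hZF0 : ∀ x, f x = 0 → x ∉ A.F := by
    intro x hx hxF
    obtain ⟨K', _, hK2, hK3⟩ := hf.2.2.1
    have : x ∉ K' := fun h => hK2 h hxF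
    rw [hK3 x this] at hx
    exact hKU (hz x hx) hxF
  set Z : Set H := {x | f x = 0} \ {x | ∃ g, x = A.α g a} with hZdef
  have hZ : Z.Finite := hfin.subset sdiff_subset
  have hZi : ∀ g, ∀ x ∈ Z, A.α g x ∈ Z := by
    rintro g x ⟨h1, h2⟩
    refine ⟨(Eqv.zero_iff A hf.2.1 g x).2 h1, ?_⟩
    rintro ⟨h, hh⟩
    exact h2 ⟨-g + h, by rw [A.add, ← hh, A.neg_cancel]⟩
  have hbZ : b ∈ Z := by
    refine ⟨hb, ?_⟩
    rintro ⟨g, rfl⟩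
    rw [Eqv.det A hf.1 hf.2.1 g ha] at hdb
    linarith
  have haZ : a ∉ Z := fun h => h.2 ⟨0, (A.zero a).symm⟩
  have hra : Reach A f0 Z b a := by
    refine ⟨f, hf, ?_, ha, hda, hb, hdb⟩
    intro x hx
    by_cases h : ∃ g, x = A.α g a
    · exact Or.inr h
    · exact Or.inl ⟨hx, h⟩
  have hZF : Z ⊆ A.Fᶜ := fun x hx => hZF0 x hx.1
  obtain ⟨V, hV, hVr⟩ := reach_all hdim hfree hZ hZi hZF hbZ (hZF0 a ha) haZ hra
  obtain ⟨r, hr, r1, r2, r3⟩ := small_ball A hfree (hZF hbZ) (inter_mem hV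
    ((hZ.subset (sdiff_subset (t := {b}))).isClosed.isOpen_compl.mem_nhds (x := b) (by simp)))
  have hnt : Nontrivial H := by
    apply Module.nontrivial_of_finrank_pos (R := ℝ); omega
  obtain ⟨y, hy, hyb⟩ : ∃ y ∈ ball b r, y ≠ b := by
    have hne : (𝓝[≠] b).NeBot := inferInstance
    have := hne.nonempty_of_mem (inter_mem (mem_nhdsWithin_of_mem_nhds (ball_mem_nhds b hr))
      self_mem_nhdsWithin)
    obtain ⟨y, h1, h2⟩ := this
    exact ⟨y, h1, h2⟩
  have hyZ : y ∉ Z := fun h => (r1 hy).2 ⟨h, hyb⟩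
  obtain ⟨f', h1, h2, h3, h4, h5, h6⟩ := hVr y (r1 hy).1 (r2 hy) hyZ
  obtain ⟨f'', m1, m2, m3⟩ := cancel hdim h1.1 hyb isOpen_ball
    ((convex_ball b r).segment_subset hy (mem_ball_self hr)) h3 h5 (by
      intro x hx hxy hxb h0
      rcases h2 x h0 with h | ⟨g, rfl⟩
      · exact (r1 hx).2 ⟨h, hxb⟩
      · by_cases hg : g = 0
        · exact hxy (by rw [hg, A.zero])
        · exact r3 y hy g hg hx) h4 h6
  obtain ⟨k, k1, k2, k3⟩ := lmp_good A h1 m1 isOpen_ball r3 r2 m2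
    (fun x hx h0 => absurd h0 (m3 x hx))
  refine ⟨k, k1, Set.ncard_lt_ncard ?_ hfin⟩
  have hk : ∀ x, k x = 0 → x ∈ Z ∧ x ≠ b := by
    intro x hx
    by_cases h : ∀ g, A.α g x ∉ ball b r
    · have e := (k3 x h).self_of_nhds
      rcases h2 x (e ▸ hx) with h' | ⟨g, rfl⟩
      · refine ⟨h', ?_⟩
        rintro rfl
        exact h 0 (by rw [A.zero]; exact mem_ball_self hr)
      · exact absurd (by rw [A.neg_cancel]; exact hy) (h (-g))
    · push Not at h
      obtain ⟨g, hg⟩ := h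
      have h0 := (Eqv.zero_iff A k1.2.1 g x).2 hx
      rw [k2 _ hg] at h0
      exact absurd h0 (m3 _ hg)
  refine ⟨fun x hx => (hk x hx).1.1, fun hsub => (hk b (hsub hb)).2 rfl⟩

theorem flat_core (hdim : 2 < Module.finrank ℝ H)
    (hfree : ∀ x, x ∉ A.F → ∀ g, g ≠ 0 → A.α g x ≠ x) {f0 f1 : H → H}
    (hf0 : ContDiff ℝ 1 f0) (he : A.Eqv f0) {K : Set H}
    (hK : IsCompact K) (hKU : K ⊆ A.Fᶜ) (hz : ∀ x, f0 x = 0 → x ∈ K)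
    (hf1 : ContDiff ℝ 1 f1) (h1 : ∀ x, f1 x ≠ 0) {K1 : Set H} (hK1 : IsCompact K1)
    (hff : ∀ x, x ∉ K1 → f0 x = f1 x) :
    ∃ f, ContDiff ℝ 1 f ∧ A.Eqv f ∧ (∃ K2, IsCompact K2 ∧ ∀ x, x ∉ K2 → f x = f0 x) ∧
      ∀ x, f x ≠ 0 := by
  classical
  borelize H
  have hex : ∃ m, ∃ f, Good A f0 f ∧ {x | f x = 0}.ncard = m := by
    obtain ⟨f, hf⟩ := exists_good A hfree hf0 he hK hKU hz
    exact ⟨_, f, hf, rfl⟩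
  obtain ⟨f, hf, hm⟩ := Nat.find_spec hex
  have hmin : ∀ k, Good A f0 k → {x | f x = 0}.ncard ≤ {x | k x = 0}.ncard := by
    intro k hk
    rw [hm]
    exact Nat.find_min' hex ⟨k, hk, rfl⟩
  obtain ⟨K2, hK2, _, hK2e⟩ := hf.2.2.1
  obtain ⟨R, hR⟩ := (hK1.union hK2).isBounded.subset_ball 0
  have hoff : ∀ x ∉ ball (0:H) R, f x = f1 x := by
    intro x hx
    rw [hK2e x (fun h => hx (hR (Or.inr h))), hff x (fun h => hx (hR (Or.inl h)))]
  refine ⟨f, hf.1, hf.2.1, ⟨K2, hK2, hK2e⟩, ?_⟩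
  by_cases hpos : ∃ a, f a = 0 ∧ 0 < (fderiv ℝ f a).det
  · obtain ⟨a, ha, hda⟩ := hpos
    refine no_zero_of_pos hf.1 hf1 R hoff h1 (τ := 1) ?_
    intro b hb
    rw [one_mul]
    by_contra hcon
    have hdb := lt_of_le_of_ne (not_lt.1 hcon) (hf.2.2.2 b hb)
    obtain ⟨k, hk, hlt⟩ := reduce hdim hfree hK hKU hz hf ha hb hda hdb
    exact absurd (hmin k hk) (not_le.2 hlt)
  · push Not at hpos
    refine no_zero_of_pos hf.1 hf1 R hoff h1 (τ := -1) ?_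
    intro b hb
    have := lt_of_le_of_ne (hpos b hb) (hf.2.2.2 b hb)
    linarith

lemma flat_dim1 (hdim : Module.finrank ℝ H = 1) {f0 : H → H} (he : A.Eqv f0) {x : H}
    (hx : x ∈ A.F) (hfx : f0 x ≠ 0) : A.F = univ := by
  by_contra hF
  have hi := F_interior A hF
  obtain ⟨e, M, e1, e2, e3, M0, Ma, e4, e5, e6⟩ := linearize A hx isOpen_univ (mem_univ x)
  have hM : ∀ g v, M g v = v := by
    intro g v
    obtain ⟨c, rfl⟩ := (finrank_eq_one_iff_of_nonzero' (f0 x) hfx).1 hdim v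
    rw [map_smul, e6]
    have := he g x
    rw [hx g] at this
    rw [← this]
  have : x ∈ interior A.F := by
    rw [mem_interior_iff_mem_nhds]
    filter_upwards [lin_nhds A (M := M) hx e1 e3 e5 one_pos] with z hz g
    apply e.injOn (hz.1 g) (by simpa [A.zero] using hz.1 0)
    rw [e4, hM]
  rw [hi] at this
  exact this

theorem flat_core' (hdim : 2 < Module.finrank ℝ H ∨ Module.finrank ℝ H = 1 ∧ A.F.Nonempty)
    (hfree : ∀ x, x ∉ A.F → ∀ g, g ≠ 0 → A.α g x ≠ x) {f0 f1 : H → H}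
    (hf0 : ContDiff ℝ 1 f0) (he : A.Eqv f0) {K : Set H}
    (hK : IsCompact K) (hKU : K ⊆ A.Fᶜ) (hz : ∀ x, f0 x = 0 → x ∈ K)
    (hf1 : ContDiff ℝ 1 f1) (h1 : ∀ x, f1 x ≠ 0) {K1 : Set H} (hK1 : IsCompact K1)
    (hff : ∀ x, x ∉ K1 → f0 x = f1 x) :
    ∃ f, ContDiff ℝ 1 f ∧ A.Eqv f ∧ (∃ K2, IsCompact K2 ∧ ∀ x, x ∉ K2 → f x = f0 x) ∧
      ∀ x, f x ≠ 0 := by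
  rcases hdim with hdim | ⟨hdim, x, hx⟩
  · exact flat_core hdim hfree hf0 he hK hKU hz hf1 h1 hK1 hff
  · refine ⟨f0, hf0, he, ⟨∅, isCompact_empty, fun _ _ => rfl⟩, ?_⟩
    intro y hy
    have hF := flat_dim1 hdim he hx (fun h => hKU (hz x h) hx)
    exact hKU (hz y hy) (hF ▸ mem_univ y)

end Flat2

end EqVF

set_option linter.unusedSectionVars false
open Set unitInterval
open PaperTC Manifold

namespace EqVF

open Topology Filter MeasureTheory Metric
open scoped ContDiff

section Ambient

variable {E : Type*} [NormedAddCommGroup E] [InnerProductSpace ℝ E] [FiniteDimensional ℝ E]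
variable {G : Type*} [AddCommGroup G] [Fintype G]
variable {X : Type*} [NormedAddCommGroup X] [NormedSpace ℝ X]

lemma tangent_curve {x w : E} (hx : ‖x‖ = 1) (hw : inner ℝ x w = 0) :
    ∃ c : ℝ → E, HasDerivAt c w 0 ∧ c 0 = x ∧ ∀ t, ‖c t‖ = 1 := by
  have hsq : ∀ t : ℝ, ‖x + t • w‖ ^ 2 = 1 + t ^ 2 * ‖w‖ ^ 2 := by
    intro t
    rw [norm_add_sq_real, hx, inner_smul_right, hw, norm_smul, mul_pow, Real.norm_eq_abs, sq_abs]
    ring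
  refine ⟨fun t => (√(1 + t ^ 2 * ‖w‖ ^ 2))⁻¹ • (x + t • w), ?_, by simp, ?_⟩
  · have h1 : HasDerivAt (fun t : ℝ => 1 + t ^ 2 * ‖w‖ ^ 2) 0 0 := by
      have := ((hasDerivAt_pow 2 (0:ℝ)).mul_const (‖w‖ ^ 2)).const_add 1
      simpa using this
    have h2 := (h1.sqrt (by simp)).inv (by simp)
    have h3 : HasDerivAt (fun t : ℝ => x + t • w) w 0 := by
      have := ((hasDerivAt_id (0:ℝ)).smul_const w).const_add x
      simpa using this
    have := h2.smul h3
    convert this using 1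
    · rfl
    · simp
  · intro t
    have : ‖x + t • w‖ = √(1 + t ^ 2 * ‖w‖ ^ 2) := by
      rw [← hsq, Real.sqrt_sq (norm_nonneg _)]
    rw [norm_smul, this, norm_inv, Real.norm_of_nonneg (Real.sqrt_nonneg _)]
    exact inv_mul_cancel₀ (by positivity)

lemma tangent_eq {P Q : E → X} {x w : E} (hx : ‖x‖ = 1) (hw : inner ℝ x w = 0)
    (hP : DifferentiableAt ℝ P x) (hQ : DifferentiableAt ℝ Q x)
    (h : ∀ᶠ y in 𝓝 x, ‖y‖ = 1 → P y = Q y) : fderiv ℝ P x w = fderiv ℝ Q x w := by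
  obtain ⟨c, c1, c2, c3⟩ := tangent_curve hx hw
  subst c2
  have e1 := hP.hasFDerivAt.comp_hasDerivAt (0:ℝ) c1
  have e2 := hQ.hasFDerivAt.comp_hasDerivAt (0:ℝ) c1
  refine (e1.congr_of_eventuallyEq ?_).unique e2
  filter_upwards [c1.continuousAt.eventually h] with t ht
  exact (ht (c3 t)).symm

lemma tangent_perp {P : X → E} {x w : X} (hP : DifferentiableAt ℝ P x)
    (h : ∀ᶠ y in 𝓝 x, ‖P y‖ = 1) : inner ℝ (P x) (fderiv ℝ P x w) = 0 := by
  have e1 := hP.hasFDerivAt.norm_sq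
  have e2 : HasFDerivAt (fun y => ‖P y‖ ^ 2) (0 : X →L[ℝ] ℝ) x := by
    refine (hasFDerivAt_const (1:ℝ) x).congr_of_eventuallyEq ?_
    filter_upwards [h] with y hy
    rw [hy]; norm_num
  have := congrArg (fun L => L w) (e1.unique e2)
  simpa using this

section Stereo

variable {x0 : E}

/-- inverse stereographic -/
noncomputable def Iv (x0 : E) (y : (ℝ ∙ x0)ᗮ) : E := stereoInvFunAux x0 (y : E)

lemma Iv_norm (hv : ‖x0‖ = 1) (y : (ℝ ∙ x0)ᗮ) : ‖Iv x0 y‖ = 1 := by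
  exact mem_sphere_zero_iff_norm.1 (stereoInvFunAux_mem hv y.2)

lemma Iv_ne (hv : ‖x0‖ = 1) (y : (ℝ ∙ x0)ᗮ) : Iv x0 y ≠ x0 := fun h =>
  stereoInvFun_ne_north_pole hv y (Subtype.ext h)

lemma T_Iv (hv : ‖x0‖ = 1) (y : (ℝ ∙ x0)ᗮ) : stereoToFun x0 (Iv x0 y) = y := stereo_right_inv hv y

lemma Iv_T (hv : ‖x0‖ = 1) {x : E} (hx : ‖x‖ = 1) (hne : x ≠ x0) : Iv x0 (stereoToFun x0 x) = x := by
  have := stereo_left_inv hv (x := ⟨x, by simpa using hx⟩) hne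
  exact congrArg Subtype.val this

lemma Iv_smooth : ContDiff ℝ ∞ (Iv x0) :=
  (contDiff_stereoInvFunAux (v := x0) (m := ∞)).comp ((ℝ ∙ x0)ᗮ.subtypeL.contDiff)

lemma T_smooth (hv : ‖x0‖ = 1) {x : E} (hx : ‖x‖ = 1) (hne : x ≠ x0) : ContDiffAt ℝ ∞ (stereoToFun x0) x := by
  have ho : IsOpen {x : E | innerSL ℝ x0 x ≠ (1:ℝ)} :=
    isOpen_ne_fun (innerSL ℝ x0).continuous continuous_const
  refine (contDiffOn_stereoToFun (v := x0)).contDiffAt (ho.mem_nhds ?_)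
  show inner ℝ x0 x ≠ 1
  rw [Ne, inner_eq_one_iff_of_norm_eq_one hv hx]
  exact hne.symm

lemma Iv_diff (y : (ℝ ∙ x0)ᗮ) : DifferentiableAt ℝ (Iv x0) y :=
  Iv_smooth.differentiable (by simp) y

lemma T_diff (hv : ‖x0‖ = 1) {x : E} (hx : ‖x‖ = 1) (hne : x ≠ x0) : DifferentiableAt ℝ (stereoToFun x0) x :=
  (T_smooth hv hx hne).differentiableAt (by simp)

lemma DT_DIv (hv : ‖x0‖ = 1) (y v : (ℝ ∙ x0)ᗮ) :
    fderiv ℝ (stereoToFun x0) (Iv x0 y) (fderiv ℝ (Iv x0) y v) = v := by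
  have h := (T_diff hv (Iv_norm hv y) (Iv_ne hv y)).hasFDerivAt.comp y (Iv_diff y).hasFDerivAt
  have e : stereoToFun x0 ∘ Iv x0 = id := funext (T_Iv hv)
  rw [e] at h
  have := congrArg (fun L => L v) (h.unique (hasFDerivAt_id y))
  simpa using this

lemma DIv_DT (hv : ‖x0‖ = 1) {x w : E} (hx : ‖x‖ = 1) (hne : x ≠ x0) (hw : inner ℝ x w = 0) :
    fderiv ℝ (Iv x0) (stereoToFun x0 x) (fderiv ℝ (stereoToFun x0) x w) = w := by
  have h := (Iv_diff (stereoToFun x0 x)).hasFDerivAt.comp x (T_diff hv hx hne).hasFDerivAt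
  have e := tangent_eq (P := Iv x0 ∘ stereoToFun x0) (Q := id) hx hw h.differentiableAt
    differentiableAt_id (by
      filter_upwards [isOpen_ne.mem_nhds hne] with y hy hy1
      exact Iv_T hv hy1 hy)
  rw [h.fderiv] at e
  simpa using e

end Stereo

/-- ambient sphere action -/
structure SAct (G E : Type*) [AddCommGroup G] [NormedAddCommGroup E] [NormedSpace ℝ E] where
  /-- the maps -/
  a : G → E → E
  norm_a : ∀ g x, x ≠ 0 → ‖a g x‖ = 1
  zero : ∀ x, ‖x‖ = 1 → a 0 x = x
  add : ∀ g h x, x ≠ 0 → a (g + h) x = a g (a h x)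
  smooth : ∀ g x, x ≠ 0 → ContDiffAt ℝ ∞ (a g) x

lemma ne0 {x : E} (hx : ‖x‖ = 1) : x ≠ 0 := by
  rintro rfl; simp at hx

namespace SAct

variable (B : SAct G E)

/-- fixed set on the sphere -/
def F : Set E := {x | ‖x‖ = 1 ∧ ∀ g, B.a g x = x}

lemma neg_cancel (g : G) {x : E} (hx : ‖x‖ = 1) : B.a (-g) (B.a g x) = x := by
  rw [← B.add _ _ _ (ne0 hx), neg_add_cancel, B.zero x hx]

lemma cancel_neg (g : G) {x : E} (hx : ‖x‖ = 1) : B.a g (B.a (-g) x) = x := by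
  rw [← B.add _ _ _ (ne0 hx), add_neg_cancel, B.zero x hx]

lemma nrm (g : G) {x : E} (hx : ‖x‖ = 1) : ‖B.a g x‖ = 1 := B.norm_a g x (ne0 hx)

lemma diff (g : G) {x : E} (hx : ‖x‖ = 1) : DifferentiableAt ℝ (B.a g) x :=
  (B.smooth g x (ne0 hx)).differentiableAt (by simp)

lemma ne_fix (g : G) {x x0 : E} (hx : ‖x‖ = 1) (h0 : x0 ∈ B.F) (hne : x ≠ x0) : B.a g x ≠ x0 := by
  intro h
  apply hne
  rw [← B.neg_cancel g hx, h, h0.2]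

/-- the induced flat action -/
noncomputable def flat {x0 : E} (h0 : x0 ∈ B.F) : Act G (ℝ ∙ x0)ᗮ where
  α g y := stereoToFun x0 (B.a g (Iv x0 y))
  zero y := by rw [B.zero _ (Iv_norm h0.1 y), T_Iv h0.1]
  add g h y := by
    rw [B.add _ _ _ (ne0 (Iv_norm h0.1 y)), Iv_T h0.1 (B.nrm h (Iv_norm h0.1 y))
      (B.ne_fix h (Iv_norm h0.1 y) h0 (Iv_ne h0.1 y))]
  smooth g := by
    rw [contDiff_iff_contDiffAt]
    intro y
    have h1 := T_smooth h0.1 (B.nrm g (Iv_norm h0.1 y))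
      (B.ne_fix g (Iv_norm h0.1 y) h0 (Iv_ne h0.1 y))
    have h2 := B.smooth g _ (ne0 (Iv_norm h0.1 y))
    exact ((h1.comp (Iv x0 y) h2).comp y Iv_smooth.contDiffAt).of_le (by norm_cast)

lemma Iv_flat {x0 : E} (h0 : x0 ∈ B.F) (g : G) (y : (ℝ ∙ x0)ᗮ) :
    Iv x0 ((B.flat h0).α g y) = B.a g (Iv x0 y) :=
  Iv_T h0.1 (B.nrm g (Iv_norm h0.1 y)) (B.ne_fix g (Iv_norm h0.1 y) h0 (Iv_ne h0.1 y))

lemma flat_F {x0 : E} (h0 : x0 ∈ B.F) (y : (ℝ ∙ x0)ᗮ) : y ∈ (B.flat h0).F ↔ Iv x0 y ∈ B.F := by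
  constructor
  · intro h
    refine ⟨Iv_norm h0.1 y, fun g => ?_⟩
    rw [← B.Iv_flat h0, h g]
  · intro h g
    show stereoToFun x0 (B.a g (Iv x0 y)) = y
    rw [h.2 g, T_Iv h0.1]

lemma flat_D {x0 : E} (h0 : x0 ∈ B.F) (g : G) (y v : (ℝ ∙ x0)ᗮ) :
    (B.flat h0).D g y v = fderiv ℝ (stereoToFun x0) (B.a g (Iv x0 y))
      (fderiv ℝ (B.a g) (Iv x0 y) (fderiv ℝ (Iv x0) y v)) := by
  have h1 := T_diff h0.1 (B.nrm g (Iv_norm h0.1 y))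
      (B.ne_fix g (Iv_norm h0.1 y) h0 (Iv_ne h0.1 y))
  have h2 := B.diff g (Iv_norm h0.1 y)
  have := (h1.hasFDerivAt.comp (Iv x0 y) h2.hasFDerivAt).comp y (Iv_diff y).hasFDerivAt
  rw [Act.D]
  have e : (B.flat h0).α g = (stereoToFun x0 ∘ B.a g) ∘ Iv x0 := rfl
  rw [e, this.fderiv]
  rfl

lemma flat_DIv {x0 : E} (h0 : x0 ∈ B.F) (g : G) (y v : (ℝ ∙ x0)ᗮ) :
    fderiv ℝ (Iv x0) ((B.flat h0).α g y) ((B.flat h0).D g y v) =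
      fderiv ℝ (B.a g) (Iv x0 y) (fderiv ℝ (Iv x0) y v) := by
  have h1 := (Iv_diff ((B.flat h0).α g y)).hasFDerivAt.comp y ((B.flat h0).hasD g y)
  have h2 := (B.diff g (Iv_norm h0.1 y)).hasFDerivAt.comp y (Iv_diff y).hasFDerivAt
  have e : Iv x0 ∘ (B.flat h0).α g = B.a g ∘ Iv x0 := funext (B.Iv_flat h0 g)
  rw [e] at h1
  exact congrArg (fun L => L v) (h1.unique h2)

/-- pulled back field -/
noncomputable def pull (x0 : E) (V : E → E) (y : (ℝ ∙ x0)ᗮ) : (ℝ ∙ x0)ᗮ :=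
  fderiv ℝ (stereoToFun x0) (Iv x0 y) (V (Iv x0 y))

lemma pull_smooth {x0 : E} (hv : ‖x0‖ = 1) {V : E → E} (hV : ∀ x, x ≠ 0 → ContDiffAt ℝ 1 V x) :
    ContDiff ℝ 1 (pull x0 V) := by
  rw [contDiff_iff_contDiffAt]
  intro y
  have h1 : ContDiffAt ℝ 1 (fderiv ℝ (stereoToFun x0)) (Iv x0 y) :=
    (T_smooth hv (Iv_norm hv y) (Iv_ne hv y)).fderiv_right (by norm_cast)
  have h2 : ContDiffAt ℝ 1 (Iv x0) y := Iv_smooth.contDiffAt.of_le (by norm_cast)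
  exact (h1.comp y h2).clm_apply ((hV _ (ne0 (Iv_norm hv y))).comp y h2)

lemma DIv_pull {x0 : E} (hv : ‖x0‖ = 1) {V : E → E} (hT : ∀ x, ‖x‖ = 1 → inner ℝ x (V x) = 0)
    (y : (ℝ ∙ x0)ᗮ) : fderiv ℝ (Iv x0) y (pull x0 V y) = V (Iv x0 y) := by
  have := DIv_DT hv (Iv_norm hv y) (Iv_ne hv y) (hT _ (Iv_norm hv y))
  rwa [T_Iv hv] at this

lemma pull_zero {x0 : E} (hv : ‖x0‖ = 1) {V : E → E} (hT : ∀ x, ‖x‖ = 1 → inner ℝ x (V x) = 0)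
    {y : (ℝ ∙ x0)ᗮ} (h : pull x0 V y = 0) : V (Iv x0 y) = 0 := by
  rw [← DIv_pull hv hT, h, map_zero]

lemma compact_T {x0 : E} (hv : ‖x0‖ = 1) {C : Set E} (hC : IsClosed C) (hx : x0 ∉ C) :
    IsCompact (stereoToFun x0 '' (C ∩ sphere 0 1)) := by
  refine ((isCompact_sphere (0:E) 1).inter_left hC).image_of_continuousOn ?_
  intro x hx'
  refine (T_smooth hv (by simpa using hx'.2) ?_).continuousAt.continuousWithinAt
  rintro rfl
  exact hx hx'.1

theorem core (x1 : E → E) (hx1l : ContDiff ℝ 1 x1) (hx1 : ∀ x, ‖x‖ = 1 → x1 x ≠ 0)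
    (hx1t : ∀ x, ‖x‖ = 1 → inner ℝ x (x1 x) = 0)
    (hfree : ∀ x, ‖x‖ = 1 → x ∉ B.F → ∀ g, g ≠ 0 → B.a g x ≠ x)
    {x0 : E} (h0 : x0 ∈ B.F)
    (hdim : 2 < Module.finrank ℝ (ℝ ∙ x0)ᗮ ∨ Module.finrank ℝ (ℝ ∙ x0)ᗮ = 1 ∧ ∃ x ∈ B.F, x ≠ x0)
    {V0 : E → E} (hV0 : ∀ x, x ≠ 0 → ContDiffAt ℝ 1 V0 x)
    (hV0t : ∀ x, ‖x‖ = 1 → inner ℝ x (V0 x) = 0)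
    (hV0e : ∀ g x, ‖x‖ = 1 → fderiv ℝ (B.a g) x (V0 x) = V0 (B.a g x))
    (hV0F : ∀ x ∈ B.F, V0 x ≠ 0) (h01 : 0 < inner ℝ (V0 x0) (x1 x0)) :
    ∃ V : E → E, ContinuousOn V (sphere 0 1) ∧ ∀ x, ‖x‖ = 1 → inner ℝ x (V x) = 0 ∧ V x ≠ 0 ∧
      ∀ g, fderiv ℝ (B.a g) x (V x) = V (B.a g x) := by
  classical
  have hv := h0.1
  have hV0c : ContinuousOn V0 {0}ᶜ := fun x hx => (hV0 x hx).continuousAt.continuousWithinAt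
  set A := B.flat h0 with hA
  have hAfree : ∀ y, y ∉ A.F → ∀ g, g ≠ 0 → A.α g y ≠ y := by
    intro y hy g hg h
    rw [hA, B.flat_F h0] at hy
    apply hfree _ (Iv_norm hv y) hy g hg
    rw [← B.Iv_flat h0, ← hA, h]
  set f0 := pull x0 V0 with hf0
  have he : A.Eqv f0 := by
    intro g y
    rw [hA, B.flat_D, ← hA, hf0, DIv_pull hv hV0t, hV0e g _ (Iv_norm hv y)]
    simp only [pull]
    rw [hA, B.Iv_flat]
  -- zero set
  set N : Set E := {x | 0 < inner ℝ (V0 x) (x1 x)} ∩ {0}ᶜ with hN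
  have hNo : IsOpen N := by
    have hc : ContinuousOn (fun x => (inner ℝ (V0 x) (x1 x) : ℝ)) {0}ᶜ :=
      hV0c.inner hx1l.continuous.continuousOn
    have := hc.isOpen_inter_preimage isOpen_compl_singleton (isOpen_Ioi (a := (0:ℝ)))
    rw [hN, inter_comm]
    exact this
  have hx0N : x0 ∈ N := ⟨h01, ne0 hv⟩
  obtain ⟨χ, c1, c2, c3, c4, c5, O', o1, o2, o3, o4⟩ :=
    exists_cutoff (isCompact_singleton (x := x0)) hNo (singleton_subset_iff.2 hx0N)
  rw [singleton_subset_iff] at o2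
  set W : E → E := fun x => x1 x + χ x • (V0 x - x1 x) with hW
  have hWs : ∀ x, x ≠ 0 → ContDiffAt ℝ 1 W x := fun x hx =>
    hx1l.contDiffAt.add (c1.contDiffAt.smul ((hV0 x hx).sub hx1l.contDiffAt))
  have hWt : ∀ x, ‖x‖ = 1 → inner ℝ x (W x) = 0 := by
    intro x hx
    simp [hW, inner_add_right, inner_smul_right, inner_sub_right, hx1t x hx, hV0t x hx]
  have hW0 : ∀ x, ‖x‖ = 1 → W x ≠ 0 := by
    intro x hx hWx
    by_cases hxN : x ∈ N
    · have : inner ℝ (W x) (x1 x) = (1 - χ x) * ‖x1 x‖ ^ 2 + χ x * inner ℝ (V0 x) (x1 x) := by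
        simp only [hW, inner_add_left, inner_smul_left, inner_sub_left,
          real_inner_self_eq_norm_sq]
        simp
        ring
      rw [hWx, inner_zero_left] at this
      have p1 : 0 < ‖x1 x‖ ^ 2 := by have := hx1 x hx; positivity
      have p2 : 0 < inner ℝ (V0 x) (x1 x) := hxN.1
      rcases (c2 x).eq_or_lt with h | h
      · rw [← h] at this; linarith
      · have := mul_pos h p2
        have := mul_nonneg (sub_nonneg.2 (c3 x)) p1.le
        linarith
    · have : χ x = 0 := image_eq_zero_of_notMem_tsupport fun h => hxN (c5 h)
      rw [hW] at hWx
      simp only [this, zero_smul, add_zero] at hWx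
      exact hx1 x hx hWx
  -- K
  have hSc : IsClosed {x : E | V0 x = 0 ∧ ‖x‖ = 1} := by
    have hc : ContinuousOn V0 (sphere (0:E) 1) := hV0c.mono fun x hx => ne0 (by simpa using hx)
    have := hc.preimage_isClosed_of_isClosed isClosed_sphere (isClosed_singleton (x := (0:E)))
    convert this using 1
    ext x; simp [and_comm]
  have hKc := compact_T hv hSc (fun h => hV0F x0 h0 h.1)
  obtain ⟨f, k1, k2, ⟨K2, hK2, k3⟩, k4⟩ := flat_core' (A := A) (f0 := f0) (f1 := pull x0 W)
    (K := stereoToFun x0 '' ({x : E | V0 x = 0 ∧ ‖x‖ = 1} ∩ sphere 0 1))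
    (K1 := stereoToFun x0 '' (O'ᶜ ∩ sphere 0 1))
    (by
      rcases hdim with h | ⟨h, x, hx, hxne⟩
      · exact Or.inl h
      · refine Or.inr ⟨h, stereoToFun x0 x, ?_⟩
        rw [hA, B.flat_F, Iv_T hv hx.1 hxne]
        exact hx)
    hAfree (pull_smooth hv hV0) he hKc
    (by
      rintro _ ⟨x, ⟨⟨hx, hx1⟩, _⟩, rfl⟩ hF
      rw [hA, B.flat_F, Iv_T hv hx1 (by rintro rfl; exact hV0F _ h0 hx)] at hF
      exact hV0F x hF hx)
    (fun y hy => ⟨Iv x0 y, ⟨⟨pull_zero hv hV0t hy, Iv_norm hv y⟩, by simp [Iv_norm hv y]⟩,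
      T_Iv hv y⟩)
    (pull_smooth hv hWs)
    (fun y hy => hW0 _ (Iv_norm hv y) (pull_zero hv hWt hy))
    (compact_T hv o1.isClosed_compl (fun h => h o2))
    (by
      intro y hy
      have : Iv x0 y ∈ O' := by
        by_contra hcon
        exact hy ⟨Iv x0 y, ⟨hcon, by simp [Iv_norm hv y]⟩, T_Iv hv y⟩
      simp only [hf0, pull]
      congr 1
      simp [hW, o4 _ this])
  -- back
  set V : E → E := fun x => if x = x0 then V0 x0 else
    fderiv ℝ (Iv x0) (stereoToFun x0 x) (f (stereoToFun x0 x)) with hV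
  have hVne : ∀ x, x ≠ x0 → V x = fderiv ℝ (Iv x0) (stereoToFun x0 x) (f (stereoToFun x0 x)) :=
    fun x hx => by simp only [hV, if_neg hx]
  have hVIv : ∀ y, V (Iv x0 y) = fderiv ℝ (Iv x0) y (f y) := by
    intro y; rw [hVne _ (Iv_ne hv y), T_Iv hv]
  have hV0' : V x0 = V0 x0 := by simp [hV]
  have hVV0 : ∀ x, ‖x‖ = 1 → x ∉ Iv x0 '' K2 → V x = V0 x := by
    intro x hx hxK
    by_cases h : x = x0
    · rw [h, hV0']
    · rw [← Iv_T hv hx h, hVIv, k3, DIv_pull hv hV0t]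
      intro hc
      exact hxK ⟨_, hc, Iv_T hv hx h⟩
  refine ⟨V, ?_, ?_⟩
  · intro x hx
    have hx1 : ‖x‖ = 1 := by simpa using hx
    by_cases h : x = x0
    · have hO : (Iv x0 '' K2)ᶜ ∈ 𝓝 x := by
        apply (hK2.image Iv_smooth.continuous).isClosed.isOpen_compl.mem_nhds
        rintro ⟨y, _, hy⟩
        exact Iv_ne hv y (hy.trans h)
      have : ContinuousWithinAt V0 (sphere 0 1) x :=
        (hV0 x (ne0 hx1)).continuousAt.continuousWithinAt
      refine this.congr_of_eventuallyEq_of_mem ?_ hx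
      filter_upwards [mem_nhdsWithin_of_mem_nhds hO, self_mem_nhdsWithin] with z hz hz1
      exact hVV0 z (by simpa using hz1) hz
    · have hTc : ContinuousAt (stereoToFun x0) x := (T_smooth hv hx1 h).continuousAt
      have hD : Continuous (fderiv ℝ (Iv x0)) := Iv_smooth.continuous_fderiv (by simp)
      have : ContinuousAt (fun x => fderiv ℝ (Iv x0) (stereoToFun x0 x) (f (stereoToFun x0 x))) x :=
        (hD.continuousAt.comp hTc).clm_apply (k1.continuous.continuousAt.comp hTc)
      refine (this.congr ?_).continuousWithinAt
      filter_upwards [isOpen_ne.mem_nhds h] with z hz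
      exact (hVne z hz).symm
  · intro x hx
    by_cases h : x = x0
    · subst h
      rw [hV0']
      refine ⟨hV0t x hx, hV0F x h0, fun g => ?_⟩
      rw [h0.2 g, hV0', hV0e g x hx, h0.2 g]
    · obtain ⟨y, rfl⟩ : ∃ y, x = Iv x0 y := ⟨_, (Iv_T hv hx h).symm⟩
      rw [hVIv]
      refine ⟨tangent_perp (Iv_diff y) (Eventually.of_forall (Iv_norm hv)), ?_, fun g => ?_⟩
      · intro h
        apply k4 y
        rw [← DT_DIv hv y (f y), h, map_zero]
      · rw [← B.Iv_flat h0, hVIv, ← hA, k2 g y, hA, B.flat_DIv]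

end SAct

end Ambient

end EqVF

set_option linter.unusedSectionVars false
open Set unitInterval
open PaperTC Manifold

namespace EqVF

open Topology Filter MeasureTheory Metric
open scoped ContDiff

lemma exists_J {m : ℕ} (hm : Odd m) :
    ∃ J : EuclideanSpace ℝ (Fin (m + 1)) →L[ℝ] EuclideanSpace ℝ (Fin (m + 1)),
      (∀ x, ‖J x‖ = ‖x‖) ∧ ∀ x, inner ℝ x (J x) = 0 := by
  obtain ⟨r, hr⟩ := hm
  have e : Fin (m + 1) ≃ Fin (r + 1) ⊕ Fin (r + 1) :=
    (finCongr (by omega)).trans finSumFinEquiv.symm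
  set τ : Fin (m + 1) ≃ Fin (m + 1) := (e.trans (Equiv.sumComm _ _)).trans e.symm with hτ
  set ε : Fin (m + 1) → ℝ := fun i => Sum.elim (fun _ => 1) (fun _ => -1) (e i) with hε
  have h1 : ∀ i, τ (τ i) = i := by intro i; simp [hτ]
  have h2 : ∀ i, ε (τ i) = - ε i := by
    intro i
    simp only [hτ, hε, Equiv.trans_apply, Equiv.apply_symm_apply, Equiv.sumComm_apply]
    rcases e i with j | j <;> simp
  have h3 : ∀ i, ε i ^ 2 = 1 := by
    intro i
    simp only [hε]
    rcases e i with j | j <;> simp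
  let J0 : EuclideanSpace ℝ (Fin (m + 1)) →ₗ[ℝ] EuclideanSpace ℝ (Fin (m + 1)) :=
    { toFun := fun x => WithLp.toLp 2 (fun i => ε i * x (τ i))
      map_add' := by intro x y; ext i; simp [mul_add]
      map_smul' := by intro c x; ext i; simp; ring }
  have hJ : ∀ x i, J0 x i = ε i * x (τ i) := fun x i => rfl
  refine ⟨LinearMap.toContinuousLinearMap J0, fun x => ?_, fun x => ?_⟩
  · simp only [LinearMap.coe_toContinuousLinearMap', EuclideanSpace.norm_eq, hJ]
    congr 1
    simp only [norm_mul, mul_pow, Real.norm_eq_abs, sq_abs, h3, one_mul]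
    exact Equiv.sum_comp τ (fun i => x i ^ 2)
  · have e1 : inner ℝ x (J0 x) = ∑ i, ε i * x (τ i) * x i := by
      rw [PiLp.inner_apply]
      refine Finset.sum_congr rfl fun i _ => ?_
      rw [hJ]; simp
    have e2 : ∑ i, ε i * x (τ i) * x i = - ∑ i, ε i * x (τ i) * x i := by
      conv_lhs => rw [← Equiv.sum_comp τ]
      rw [← Finset.sum_neg_distrib]
      refine Finset.sum_congr rfl fun i _ => ?_
      rw [h1, h2]; ring
    simp only [LinearMap.coe_toContinuousLinearMap']
    rw [e1]; linarith

lemma exists_approx {E : Type*} [NormedAddCommGroup E] [InnerProductSpace ℝ E]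
    [FiniteDimensional ℝ E] {F : Set E} (hF : IsClosed F) {w : E → E} (hw : ContinuousOn w F)
    {η : ℝ} (hη : 0 < η) : ∃ u : E → E, ContDiff ℝ ∞ u ∧ ∀ x ∈ F, ‖u x - w x‖ < η := by
  classical
  obtain ⟨u, hu⟩ := exists_contMDiffMap_forall_mem_convex_of_local_const 𝓘(ℝ, E) (n := ⊤)
    (t := fun y => if y ∈ F then ball (w y) η else univ)
    (by intro x; split_ifs
        · exact convex_ball _ _
        · exact convex_univ)
    (by
      intro x
      by_cases hx : x ∈ F
      · refine ⟨w x, ?_⟩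
        have := hw x hx
        have := this.eventually (ball_mem_nhds (w x) hη)
        rw [eventually_nhdsWithin_iff] at this
        filter_upwards [this] with y hy
        split_ifs with h
        · rw [mem_ball_comm]; exact hy h
        · trivial
      · refine ⟨0, ?_⟩
        filter_upwards [hF.isOpen_compl.mem_nhds hx] with y hy
        rw [if_neg hy]; trivial)
  refine ⟨u, u.contMDiff.contDiff, fun x hx => ?_⟩
  have := hu x
  rw [if_pos hx] at this
  simpa [dist_eq_norm] using this

lemma exists_phi {k : ℕ} (hk : Odd k) {E : Type*} [NormedAddCommGroup E] {F : Set E}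
    (h : F ≃ₜ ↥(Sph k)) {δ : ℝ} (hδ : 0 < δ) :
    ∃ φ : E → E, ContinuousOn φ F ∧ (∀ x ∈ F, φ x ∈ F) ∧ ∀ x ∈ F, φ x ≠ x ∧ ‖φ x - x‖ < δ := by
  classical
  obtain ⟨J, j1, j2⟩ := exists_J hk
  have hn : ∀ (s : ℝ) (z : EuclideanSpace ℝ (Fin (k + 1))), ‖z‖ = 1 →
      ‖Real.cos s • z + Real.sin s • J z‖ = 1 := by
    intro s z hz
    have : ‖Real.cos s • z + Real.sin s • J z‖ ^ 2 = 1 := by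
      rw [norm_add_sq_real, inner_smul_left, inner_smul_right, j2, norm_smul, norm_smul, j1, hz]
      simp
    exact (pow_eq_one_iff_of_nonneg (norm_nonneg _) two_ne_zero).1 this
  let R : ℝ × ↥(Sph k) → ↥(Sph k) := fun q =>
    ⟨Real.cos q.1 • (q.2 : EuclideanSpace ℝ (Fin (k + 1))) + Real.sin q.1 • J q.2,
      mem_sphere_zero_iff_norm.2 (hn _ _ (mem_sphere_zero_iff_norm.1 q.2.2))⟩
  have hR : Continuous R := by
    apply Continuous.subtype_mk
    fun_prop
  have hR0 : ∀ z, R (0, z) = z := by intro z; apply Subtype.ext; simp [R]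
  have hRne : ∀ s z, Real.cos s ≠ 1 → R (s, z) ≠ z := by
    intro s z hs hc
    have hz : ‖(z : EuclideanSpace ℝ (Fin (k + 1)))‖ = 1 := mem_sphere_zero_iff_norm.1 z.2
    have := congrArg (fun q : ↥(Sph k) => inner ℝ (z : EuclideanSpace ℝ (Fin (k + 1))) (q : EuclideanSpace ℝ (Fin (k + 1)))) hc
    simp only [R, inner_add_right, inner_smul_right, j2, real_inner_self_eq_norm_sq, hz] at this
    apply hs
    simpa using this
  have hP : Continuous fun q : ℝ × ↥(Sph k) => ‖(h.symm (R q) : E) - h.symm q.2‖ := by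
    fun_prop
  have key : ∀ᶠ s in 𝓝 (0:ℝ), ∀ z ∈ (univ : Set ↥(Sph k)), ‖(h.symm (R (s, z)) : E) - h.symm z‖ < δ := by
    apply isCompact_univ.eventually_forall_of_forall_eventually
    intro z _
    refine hP.continuousAt.eventually (gt_mem_nhds ?_)
    simpa [hR0] using hδ
  have key2 : ∀ᶠ s in 𝓝[>] (0:ℝ), s < 1 := mem_nhdsWithin_of_mem_nhds (gt_mem_nhds one_pos)
  obtain ⟨s, ⟨hs1, hs2⟩, hs3⟩ :=
    (((key.filter_mono nhdsWithin_le_nhds).and key2).and self_mem_nhdsWithin).exists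
  have hs0 : (0:ℝ) < s := hs3
  have hcos : Real.cos s ≠ 1 := by
    intro hc
    have := Real.cos_lt_cos_of_nonneg_of_le_pi (le_refl (0:ℝ)) (by linarith [Real.pi_gt_three]) hs0
    rw [Real.cos_zero, hc] at this
    exact lt_irrefl _ this
  refine ⟨fun x => if hx : x ∈ F then (h.symm (R (s, h ⟨x, hx⟩)) : E) else 0, ?_, ?_, ?_⟩
  · rw [continuousOn_iff_continuous_domRestrict]
    have : Continuous fun x : F => (h.symm (R (s, h x)) : E) := by fun_prop
    convert this using 1
    ext x
    simp [x.2]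
  · intro x hx
    simp only [dif_pos hx]
    exact (h.symm _).2
  · intro x hx
    simp only [dif_pos hx]
    constructor
    · intro hc
      have : h.symm (R (s, h ⟨x, hx⟩)) = ⟨x, hx⟩ := Subtype.ext hc
      rw [Homeomorph.symm_apply_eq] at this
      exact hRne _ _ hcos this
    · have := hs1 (h ⟨x, hx⟩) (mem_univ _)
      simpa using this

end EqVF

set_option linter.unusedSectionVars false
open Set unitInterval
open PaperTC Manifold

namespace EqVF

open Topology Filter MeasureTheory Metric
open scoped ContDiff

section
variable {E : Type*} [NormedAddCommGroup E] [InnerProductSpace ℝ E] [FiniteDimensional ℝ E]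
variable {G : Type*} [AddCommGroup G] [Fintype G]

namespace SAct
variable (B : SAct G E)

lemma F_compact : IsCompact B.F := by
  have : B.F = ⋂ g, {x | x ∈ sphere (0:E) 1 ∧ B.a g x = x} := by
    ext x
    simp only [F, mem_iInter, mem_ofPred_eq, mem_sphere_zero_iff_norm]
    exact ⟨fun h g => ⟨h.1, h.2 g⟩, fun h => ⟨(h 0).1, fun g => (h g).2⟩⟩
  refine (isCompact_sphere (0:E) 1).of_isClosed_subset ?_ (fun x hx => by simpa using hx.1)
  rw [this]
  refine isClosed_iInter fun g => ?_
  have hc : ContinuousOn (fun x => B.a g x - x) (sphere (0:E) 1) := fun x hx =>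
    ((B.smooth g x (ne0 (by simpa using hx))).continuousAt.sub continuousAt_id).continuousWithinAt
  have := hc.preimage_isClosed_of_isClosed isClosed_sphere (isClosed_singleton (x := (0:E)))
  convert this using 1
  ext x; simp [sub_eq_zero]

/-- averaged field -/
noncomputable def avg (u : E → E) (x : E) : E :=
  ∑ g, fderiv ℝ (B.a g) (B.a (-g) x) (u (B.a (-g) x))

lemma fderiv_smooth (g : G) {x : E} (hx : x ≠ 0) : ContDiffAt ℝ 1 (fderiv ℝ (B.a g)) x :=
  (B.smooth g x hx).fderiv_right (by norm_cast)

lemma avg_smooth {u : E → E} (hu : ContDiff ℝ ∞ u) (x : E) (hx : x ≠ 0) :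
    ContDiffAt ℝ 1 (B.avg u) x := by
  unfold avg
  refine ContDiffAt.sum fun g _ => ?_
  have h1 : ContDiffAt ℝ 1 (B.a (-g)) x := (B.smooth (-g) x hx).of_le (by norm_cast)
  have h2 := B.fderiv_smooth g (ne0 (B.norm_a (-g) x hx))
  have h3 : ContDiff ℝ 1 u := hu.of_le (by norm_cast)
  exact (h2.comp x h1).clm_apply (h3.contDiffAt.comp x h1)

lemma avg_tangent (u : E → E) (x : E) (hx : ‖x‖ = 1) : inner ℝ x (B.avg u x) = 0 := by
  unfold avg
  rw [inner_sum]
  refine Finset.sum_eq_zero fun g _ => ?_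
  have hz := B.nrm (-g) hx
  have := tangent_perp (P := B.a g) (w := u (B.a (-g) x)) (B.diff g hz) (by
    filter_upwards [isOpen_ne.mem_nhds (ne0 hz)] with y hy
    exact B.norm_a g y hy)
  rwa [B.cancel_neg g hx] at this

lemma avg_equiv (u : E → E) (h : G) (x : E) (hx : ‖x‖ = 1) :
    fderiv ℝ (B.a h) x (B.avg u x) = B.avg u (B.a h x) := by
  unfold avg
  rw [map_sum]
  refine Fintype.sum_equiv (Equiv.addLeft h) _ _ fun g => ?_
  have hz := B.nrm (-g) hx
  have e : B.a (-(h + g)) (B.a h x) = B.a (-g) x := by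
    rw [← B.add _ _ _ (ne0 hx)]; congr 1; abel
  simp only [Equiv.coe_addLeft, e]
  have d1 : HasFDerivAt (B.a h) (fderiv ℝ (B.a h) x) (B.a g (B.a (-g) x)) := by
    rw [B.cancel_neg g hx]; exact (B.diff h hx).hasFDerivAt
  have d2 := d1.comp (B.a (-g) x) (B.diff g hz).hasFDerivAt
  have d3 : HasFDerivAt (B.a (h + g)) _ (B.a (-g) x) := d2.congr_of_eventuallyEq (by
    filter_upwards [isOpen_ne.mem_nhds (ne0 hz)] with y hy
    exact B.add h g y hy)
  rw [d3.fderiv]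
  rfl

lemma avg_F (u : E → E) {x : E} (hx : x ∈ B.F) : B.avg u x = ∑ g, fderiv ℝ (B.a g) x (u x) := by
  unfold avg
  simp only [hx.2]

lemma unif : ∃ δ > 0, ∀ x ∈ B.F, ∀ y ∈ B.F, ‖y - x‖ < δ → ∀ g,
    ‖(y - x) - fderiv ℝ (B.a g) x (y - x)‖ ≤ 2⁻¹ * ‖y - x‖ := by
  have h1 : ∀ x ∈ B.F, ∀ᶠ q in 𝓝 (x, x), ∀ g,
      ‖B.a g q.1 - B.a g q.2 - fderiv ℝ (B.a g) q.2 (q.1 - q.2)‖ ≤ 2⁻¹ * ‖q.1 - q.2‖ := by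
    intro x hx
    rw [eventually_all]
    intro g
    have s1 := (B.smooth g x (ne0 hx.1)).hasStrictFDerivAt (by simp)
    have s2 := s1.isLittleO.def (c := 4⁻¹) (by norm_num)
    have s3 := (B.fderiv_smooth g (ne0 hx.1)).continuousAt.eventually
      (ball_mem_nhds _ (show (0:ℝ) < 4⁻¹ by norm_num))
    have s4 := (continuous_snd.tendsto (x, x)).eventually s3
    filter_upwards [s2, s4] with q hq1 hq2
    have e : B.a g q.1 - B.a g q.2 - fderiv ℝ (B.a g) q.2 (q.1 - q.2) =
      (B.a g q.1 - B.a g q.2 - fderiv ℝ (B.a g) x (q.1 - q.2)) -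
        (fderiv ℝ (B.a g) q.2 - fderiv ℝ (B.a g) x) (q.1 - q.2) := by
      simp
    rw [e]
    have t1 := norm_sub_le (B.a g q.1 - B.a g q.2 - fderiv ℝ (B.a g) x (q.1 - q.2))
      ((fderiv ℝ (B.a g) q.2 - fderiv ℝ (B.a g) x) (q.1 - q.2))
    have t2 := (fderiv ℝ (B.a g) q.2 - fderiv ℝ (B.a g) x).le_opNorm (q.1 - q.2)
    rw [dist_eq_norm] at hq2
    have t3 := mul_le_mul_of_nonneg_right hq2.le (norm_nonneg (q.1 - q.2))
    linarith
  have h2 : ∀ x : B.F, ∃ ε > 0, ∀ y ∈ ball (x : E) ε, ∀ z ∈ ball (x : E) ε, ∀ g,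
      ‖B.a g y - B.a g z - fderiv ℝ (B.a g) z (y - z)‖ ≤ 2⁻¹ * ‖y - z‖ := by
    intro x
    obtain ⟨ε, he, h⟩ := Metric.eventually_nhds_iff_ball.1 (h1 x x.2)
    refine ⟨ε, he, fun y hy z hz => h (y, z) ?_⟩
    rw [← ball_prod_same]; exact ⟨hy, hz⟩
  choose ε he hε using h2
  obtain ⟨δ, hδ, hcov⟩ := lebesgue_number_lemma_of_metric (B.F_compact)
    (c := fun x : B.F => ball (x : E) (ε x)) (fun _ => isOpen_ball)
    (fun x hx => mem_iUnion.2 ⟨⟨x, hx⟩, mem_ball_self (he _)⟩)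
  refine ⟨δ, hδ, fun x hx y hy hxy g => ?_⟩
  obtain ⟨i, hi⟩ := hcov x hx
  have := hε i y (hi (by rwa [mem_ball, dist_eq_norm])) x (hi (mem_ball_self hδ)) g
  rwa [hx.2, hy.2] at this

theorem exists_V0 (hne : B.F.Nonempty)
    (hφ : ∀ δ > 0, ∃ φ : E → E, ContinuousOn φ B.F ∧ (∀ x ∈ B.F, φ x ∈ B.F) ∧
      ∀ x ∈ B.F, φ x ≠ x ∧ ‖φ x - x‖ < δ) :
    ∃ V0 : E → E, (∀ x, x ≠ 0 → ContDiffAt ℝ 1 V0 x) ∧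
    (∀ x, ‖x‖ = 1 → inner ℝ x (V0 x) = 0) ∧
    (∀ g x, ‖x‖ = 1 → fderiv ℝ (B.a g) x (V0 x) = V0 (B.a g x)) ∧
    (∀ x ∈ B.F, V0 x ≠ 0) := by
  obtain ⟨δ, hδ, hd⟩ := B.unif
  obtain ⟨φ, f1, f2, f3⟩ := hφ δ hδ
  have hwc : ContinuousOn (fun x => φ x - x) B.F := f1.sub continuousOn_id
  obtain ⟨xm, hxm, hmin⟩ := B.F_compact.exists_isMinOn hne hwc.norm
  set m := ‖φ xm - xm‖ with hm
  have hm0 : 0 < m := norm_pos_iff.2 (sub_ne_zero.2 (f3 xm hxm).1)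
  have hTc : ContinuousOn (fun x => ∑ g, fderiv ℝ (B.a g) x) B.F := by
    refine continuousOn_finset_sum _ fun g _ x hx => ?_
    exact (B.fderiv_smooth g (ne0 hx.1)).continuousAt.continuousWithinAt
  obtain ⟨C, hC⟩ := B.F_compact.exists_bound_of_continuousOn hTc
  have hC0 : 0 ≤ C := (norm_nonneg _).trans (hC xm hxm)
  set N : ℝ := (Fintype.card G : ℝ) with hN
  have hN0 : 0 < N := by rw [hN]; exact_mod_cast Fintype.card_pos
  obtain ⟨u, hu, hη⟩ := exists_approx B.F_compact.isClosed hwc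
    (η := N * m / 2 / (C + 1)) (by positivity)
  refine ⟨B.avg u, B.avg_smooth hu, B.avg_tangent u, B.avg_equiv u, fun x hx h0 => ?_⟩
  rw [B.avg_F u hx] at h0
  set w := φ x - x with hw
  have h1 : ‖∑ g, (w - fderiv ℝ (B.a g) x w)‖ ≤ N * (2⁻¹ * ‖w‖) := by
    refine (norm_sum_le_of_le _ fun g _ => hd x hx (φ x) (f2 x hx) (f3 x hx).2 g).trans ?_
    simp [hN, hw]
  have h2 : (∑ g, fderiv ℝ (B.a g) x) (u x) = 0 := by
    rw [← h0]; simp [ContinuousLinearMap.sum_apply]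
  have h3 : ∑ g, (w - fderiv ℝ (B.a g) x w) = N • w + (∑ g, fderiv ℝ (B.a g) x) (u x - w) := by
    rw [map_sub, h2, Finset.sum_sub_distrib, ContinuousLinearMap.sum_apply]
    simp only [Finset.sum_const, Finset.card_univ, hN, Nat.cast_smul_eq_nsmul]
    abel
  have h4 : ‖(∑ g, fderiv ℝ (B.a g) x) (u x - w)‖ < N * m / 2 := by
    refine ((∑ g, fderiv ℝ (B.a g) x).le_opNorm _).trans_lt ?_
    have a1 := hC x hx
    have a2 := hη x hx
    calc _ ≤ C * (N * m / 2 / (C + 1)) := by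
          apply mul_le_mul a1 a2.le (norm_nonneg _) hC0
      _ < (C + 1) * (N * m / 2 / (C + 1)) := by
          apply mul_lt_mul_of_pos_right (by linarith); positivity
      _ = _ := by field_simp
  have h5 : ‖N • w‖ = N * ‖w‖ := by rw [norm_smul, Real.norm_of_nonneg hN0.le]
  have h6 : m ≤ ‖w‖ := hmin hx
  have h7 : ‖N • w‖ ≤ ‖N • w + (∑ g, fderiv ℝ (B.a g) x) (u x - w)‖ +
      ‖(∑ g, fderiv ℝ (B.a g) x) (u x - w)‖ := by
    have := norm_sub_le (N • w + (∑ g, fderiv ℝ (B.a g) x) (u x - w))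
      ((∑ g, fderiv ℝ (B.a g) x) (u x - w))
    rwa [add_sub_cancel_right] at this
  rw [← h3, h5] at h7
  have h8 : N * m ≤ N * ‖w‖ := mul_le_mul_of_nonneg_left h6 hN0.le
  linarith

end SAct

lemma exists_x1 (J : E →L[ℝ] E) (j1 : ∀ x, ‖J x‖ = ‖x‖) (j2 : ∀ x, inner ℝ x (J x) = 0)
    {x0 w : E} (h0 : ‖x0‖ = 1) (hw : w ≠ 0) (hxw : inner ℝ x0 w = 0) :
    ∃ x1 : E → E, ContDiff ℝ 1 x1 ∧ (∀ x, ‖x‖ = 1 → x1 x ≠ 0) ∧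
      (∀ x, ‖x‖ = 1 → inner ℝ x (x1 x) = 0) ∧ 0 < inner ℝ w (x1 x0) := by
  set v : E := ‖w‖⁻¹ • w with hv
  have hw0 : ‖w‖ ≠ 0 := norm_ne_zero_iff.2 hw
  have hvn : ‖v‖ = 1 := by rw [hv, norm_smul, norm_inv, norm_norm, inv_mul_cancel₀ hw0]
  set R := (ℝ ∙ (J x0 - v))ᗮ.reflection with hR
  have r1 : R (J x0) = v := Submodule.reflection_sub (by rw [j1, h0, hvn])
  have r2 : R x0 = x0 := by
    apply Submodule.reflection_mem_subspace_eq_self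
    rw [Submodule.mem_orthogonal_singleton_iff_inner_left, inner_sub_right, j2, hv,
      inner_smul_right, hxw]
    simp
  have r3 : ∀ x, R (R x) = x := Submodule.reflection_reflection _
  refine ⟨fun x => R (J (R x)), ?_, ?_, ?_, ?_⟩
  · exact R.contDiff.comp (J.contDiff.comp R.contDiff)
  · intro x hx h
    have : ‖R (J (R x))‖ = 1 := by rw [R.norm_map, j1, R.norm_map, hx]
    rw [show R (J (R x)) = 0 from h] at this; simp at this
  · intro x _
    have := j2 (R x)
    rw [← R.inner_map_map, r3] at this
    exact this
  · simp only [r2, r1, hv, inner_smul_right, real_inner_self_eq_norm_sq]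
    positivity

end
end EqVF

set_option linter.unusedSectionVars false
open Set unitInterval
open PaperTC Manifold

namespace EqVF

open Topology Filter MeasureTheory Metric
open scoped ContDiff

section Bridge
variable {n : ℕ}

/-- normalisation, ambient -/
noncomputable def r0 (n : ℕ) (x : EuclideanSpace ℝ (Fin (n + 1))) : EuclideanSpace ℝ (Fin (n + 1)) :=
  open Classical in if x = 0 then EuclideanSpace.single 0 1 else ‖x‖⁻¹ • x

lemma r0_mem (x : EuclideanSpace ℝ (Fin (n + 1))) : r0 n x ∈ Sph n := by
  rw [mem_sphere_zero_iff_norm]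
  unfold r0
  split_ifs with h
  · simp
  · rw [norm_smul, norm_inv, norm_norm, inv_mul_cancel₀ (norm_ne_zero_iff.2 h)]

/-- normalisation -/
noncomputable def rr (n : ℕ) (x : EuclideanSpace ℝ (Fin (n + 1))) : ↥(Sph n) := ⟨r0 n x, r0_mem x⟩

lemma rr_coe (x : ↥(Sph n)) : rr n x = x := by
  have h1 := mem_sphere_zero_iff_norm.1 x.2
  apply Subtype.ext
  show r0 n x = x
  unfold r0
  rw [if_neg (ne0 h1), h1]
  simp

lemma coe_smooth : ContMDiff (𝓡 n) 𝓘(ℝ, EuclideanSpace ℝ (Fin (n + 1))) ∞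
    ((↑) : ↥(Sph n) → EuclideanSpace ℝ (Fin (n + 1))) :=
  haveI := Fact.mk (@finrank_euclideanSpace_fin ℝ _ (n + 1))
  contMDiff_coe_sphere

lemma rr_smooth {x : EuclideanSpace ℝ (Fin (n + 1))} (hx : x ≠ 0) :
    ContMDiffAt 𝓘(ℝ, EuclideanSpace ℝ (Fin (n + 1))) (𝓡 n) ∞ (rr n) x := by
  haveI := Fact.mk (@finrank_euclideanSpace_fin ℝ _ (n + 1))
  let U : TopologicalSpace.Opens (EuclideanSpace ℝ (Fin (n + 1))) := ⟨{0}ᶜ, isOpen_compl_singleton⟩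
  have h1 : ContMDiff 𝓘(ℝ, EuclideanSpace ℝ (Fin (n + 1))) 𝓘(ℝ, EuclideanSpace ℝ (Fin (n + 1))) ∞
      (fun y : U => r0 n y) := by
    intro y
    rw [contMDiffAt_subtype_iff (f := r0 n), contMDiffAt_iff_contDiffAt]
    have hy : (y : EuclideanSpace ℝ (Fin (n + 1))) ≠ 0 := y.2
    have : ContDiffAt ℝ ∞ (fun z : EuclideanSpace ℝ (Fin (n + 1)) => ‖z‖⁻¹ • z)
        (y : EuclideanSpace ℝ (Fin (n + 1))) :=
      ((contDiffAt_norm ℝ hy).inv (norm_ne_zero_iff.2 hy)).smul contDiffAt_id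
    refine this.congr_of_eventuallyEq ?_
    filter_upwards [isOpen_ne.mem_nhds hy] with z hz
    unfold r0
    rw [if_neg hz]
  have h2 := h1.codRestrict_sphere (n := n) (fun y => r0_mem _)
  exact (contMDiffAt_subtype_iff (f := rr n) (x := (⟨x, hx⟩ : U))).1 (h2 ⟨x, hx⟩)

lemma rr_mdiff {x : EuclideanSpace ℝ (Fin (n + 1))} (hx : x ≠ 0) :
    MDifferentiableAt 𝓘(ℝ, EuclideanSpace ℝ (Fin (n + 1))) (𝓡 n) (rr n) x :=
  (rr_smooth hx).mdifferentiableAt (by simp)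

/-- derivative of normalisation -/
noncomputable def LL (n : ℕ) (x : EuclideanSpace ℝ (Fin (n + 1))) :
    EuclideanSpace ℝ (Fin (n + 1)) →L[ℝ] EuclideanSpace ℝ (Fin n) :=
  mfderiv 𝓘(ℝ, EuclideanSpace ℝ (Fin (n + 1))) (𝓡 n) (rr n) x

lemma LL_ne {x w : EuclideanSpace ℝ (Fin (n + 1))} (hx : ‖x‖ = 1) (hw : inner ℝ x w = 0)
    (hw0 : w ≠ 0) : LL n x w ≠ 0 := by
  intro h
  have h1 : MDifferentiableAt (𝓡 n) 𝓘(ℝ, EuclideanSpace ℝ (Fin (n + 1)))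
      ((↑) : ↥(Sph n) → EuclideanSpace ℝ (Fin (n + 1))) (rr n x) :=
    coe_smooth.mdifferentiable (by simp) _
  have h2 := mfderiv_comp_apply x h1 (rr_mdiff (ne0 hx)) w
  have h2' : mfderiv 𝓘(ℝ, EuclideanSpace ℝ (Fin (n + 1))) 𝓘(ℝ, EuclideanSpace ℝ (Fin (n + 1)))
      (((↑) : ↥(Sph n) → EuclideanSpace ℝ (Fin (n + 1))) ∘ rr n) x w = 0 := by
    refine h2.trans ?_
    erw [show mfderiv 𝓘(ℝ, EuclideanSpace ℝ (Fin (n + 1))) (𝓡 n) (rr n) x w = 0 from h]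
    exact map_zero _
  rw [mfderiv_eq_fderiv] at h2'
  have h3 : DifferentiableAt ℝ (((↑) : ↥(Sph n) → EuclideanSpace ℝ (Fin (n + 1))) ∘ rr n) x := by
    rw [← mdifferentiableAt_iff_differentiableAt]
    exact h1.comp x (rr_mdiff (ne0 hx))
  have h4 := tangent_eq (Q := id) hx hw h3 differentiableAt_id (by
    refine Eventually.of_forall fun y hy => ?_
    exact congrArg Subtype.val (rr_coe ⟨y, mem_sphere_zero_iff_norm.2 hy⟩))
  rw [fderiv_id] at h4
  exact hw0 (h4.symm.trans h2')

lemma LL_act {f : ↥(Sph n) → ↥(Sph n)} (hf : ContMDiff (𝓡 n) (𝓡 n) ∞ f)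
    {x w : EuclideanSpace ℝ (Fin (n + 1))} (hx : x ≠ 0) {y : ↥(Sph n)} (hy : rr n x = y) :
    mfderiv (𝓡 n) (𝓡 n) f y (LL n x w) =
      LL n (f (rr n x)) (fderiv ℝ (fun z => (f (rr n z) : EuclideanSpace ℝ (Fin (n + 1)))) x w) := by
  subst hy
  have hfd := hf.mdifferentiable (by simp) (rr n x)
  have h1 := mfderiv_comp_apply x hfd (rr_mdiff hx) w
  have hc : MDifferentiableAt 𝓘(ℝ, EuclideanSpace ℝ (Fin (n + 1)))
      𝓘(ℝ, EuclideanSpace ℝ (Fin (n + 1)))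
      (fun z => (f (rr n z) : EuclideanSpace ℝ (Fin (n + 1)))) x :=
    ((coe_smooth.mdifferentiable (by simp) _).comp x (hfd.comp x (rr_mdiff hx)))
  have hne : (f (rr n x) : EuclideanSpace ℝ (Fin (n + 1))) ≠ 0 :=
    ne0 (mem_sphere_zero_iff_norm.1 (f (rr n x)).2)
  have h2 := mfderiv_comp_apply x (rr_mdiff hne) hc w
  have e : rr n ∘ (fun z => (f (rr n z) : EuclideanSpace ℝ (Fin (n + 1)))) = f ∘ rr n := by
    funext z
    exact rr_coe _
  rw [mfderiv_congr e] at h2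
  rw [mfderiv_eq_fderiv] at h2
  exact h1.symm.trans h2

lemma LL_cont {V : EuclideanSpace ℝ (Fin (n + 1)) → EuclideanSpace ℝ (Fin (n + 1))}
    (hV : ContinuousOn V (sphere 0 1)) :
    Continuous (fun x : ↥(Sph n) => (⟨x, LL n x (V x)⟩ : TangentBundle (𝓡 n) ↥(Sph n))) := by
  have h1 : ContMDiffOn 𝓘(ℝ, EuclideanSpace ℝ (Fin (n + 1))) (𝓡 n) ∞ (rr n) {0}ᶜ :=
    fun x hx => (rr_smooth hx).contMDiffWithinAt
  have h2 := h1.continuousOn_tangentMapWithin (by simp) isOpen_compl_singleton.uniqueMDiffOn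
  have h3 : Continuous (fun x : ↥(Sph n) => (⟨x, V x⟩ :
      TangentBundle 𝓘(ℝ, EuclideanSpace ℝ (Fin (n + 1))) (EuclideanSpace ℝ (Fin (n + 1))))) := by
    have : Continuous fun x : ↥(Sph n) => ((x : EuclideanSpace ℝ (Fin (n + 1))), V x) :=
      continuous_subtype_val.prodMk (continuousOn_iff_continuous_domRestrict.1 hV)
    exact (tangentBundleModelSpaceHomeomorph
      𝓘(ℝ, EuclideanSpace ℝ (Fin (n + 1)))).symm.continuous.comp this
  have h4 := h2.comp_continuous h3 (fun x => ne0 (mem_sphere_zero_iff_norm.1 x.2))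
  refine h4.congr fun x => ?_
  have hx : (x : EuclideanSpace ℝ (Fin (n + 1))) ≠ 0 := ne0 (mem_sphere_zero_iff_norm.1 x.2)
  have e : mfderivWithin 𝓘(ℝ, EuclideanSpace ℝ (Fin (n + 1))) (𝓡 n) (rr n) {0}ᶜ x =
      mfderiv 𝓘(ℝ, EuclideanSpace ℝ (Fin (n + 1))) (𝓡 n) (rr n) x :=
    mfderivWithin_of_isOpen isOpen_compl_singleton hx
  refine Bundle.TotalSpace.ext (rr_coe x) ?_
  exact heq_of_eq (congrArg (fun L : EuclideanSpace ℝ (Fin (n + 1)) →L[ℝ]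
    EuclideanSpace ℝ (Fin n) => L (V x)) e)

end Bridge

end EqVF

/-- Let `ℤ/p` act smoothly on the standard sphere `S^n` with `n` odd, and
suppose the fixed point set is homeomorphic to a sphere `S^k` of odd dimension `k`.  Then
`S^n` admits a nowhere-vanishing equivariant vector field: a continuous section `v` of the
tangent bundle with `v x ≠ 0` everywhere, such that the differential of each `g ∈ ℤ/p`
carries `v x` to `v (g · x)`. -/
theorem exists_nowhere_vanishing_equivariant_vector_field (p : ℕ) (hp : p.Prime)
    (n k : ℕ) (hn : Odd n) (hkodd : Odd k)
    (act : ZMod p → ↥(Sph n) → ↥(Sph n))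
    (act_zero : ∀ x, act 0 x = x)
    (act_add : ∀ g h x, act (g + h) x = act g (act h x))
    (act_smooth : ∀ g, ContMDiff (𝓡 n) (𝓡 n) (⊤ : ℕ∞) (act g))
    (hhomeo : Nonempty (↥(fixedSet act) ≃ₜ ↥(Sph k))) :
    ∃ v : (x : ↥(Sph n)) → TangentSpace (𝓡 n) x,
      Continuous (fun x : ↥(Sph n) => (⟨x, v x⟩ : TangentBundle (𝓡 n) ↥(Sph n))) ∧
      (∀ x, v x ≠ 0) ∧
      (∀ (g : ZMod p) (x : ↥(Sph n)),
        mfderiv (𝓡 n) (𝓡 n) (act g) x (v x) = v (act g x)) := by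

  classical
  haveI : Fact p.Prime := ⟨hp⟩
  obtain ⟨h⟩ := hhomeo
  have hnorm : ∀ x : ↥(Sph n), ‖(x : EuclideanSpace ℝ (Fin (n + 1)))‖ = 1 :=
    fun x => mem_sphere_zero_iff_norm.1 x.2
  let B : EqVF.SAct (ZMod p) (EuclideanSpace ℝ (Fin (n + 1))) :=
    { a := fun g x => act g (EqVF.rr n x)
      norm_a := fun g x _ => hnorm _
      zero := by
        intro x hx
        show ((act 0 (EqVF.rr n x) : ↥(Sph n)) : EuclideanSpace ℝ (Fin (n + 1))) = x
        rw [act_zero]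
        exact congrArg Subtype.val (EqVF.rr_coe ⟨x, mem_sphere_zero_iff_norm.2 hx⟩)
      add := by
        intro g g' x _
        show ((act (g + g') (EqVF.rr n x) : ↥(Sph n)) : EuclideanSpace ℝ (Fin (n + 1))) = _
        rw [act_add, EqVF.rr_coe]
      smooth := by
        intro g x hx
        rw [← contMDiffAt_iff_contDiffAt]
        exact EqVF.coe_smooth.contMDiffAt.comp x
          ((act_smooth g).contMDiffAt.comp x (EqVF.rr_smooth hx)) }
  have hBa : ∀ g (x : ↥(Sph n)), B.a g x = act g x := by
    intro g x
    show ((act g (EqVF.rr n x) : ↥(Sph n)) : EuclideanSpace ℝ (Fin (n + 1))) = _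
    rw [EqVF.rr_coe]
  have hBF : ∀ x : ↥(Sph n), (x : EuclideanSpace ℝ (Fin (n + 1))) ∈ B.F ↔ x ∈ fixedSet act := by
    intro x
    constructor
    · intro hx g
      apply Subtype.ext
      rw [← hBa]
      exact hx.2 g
    · intro hx
      refine ⟨hnorm x, fun g => ?_⟩
      rw [hBa, hx g]
  let hF : B.F ≃ₜ fixedSet act :=
    { toFun := fun x => ⟨⟨x, mem_sphere_zero_iff_norm.2 x.2.1⟩, (hBF _).1 x.2⟩
      invFun := fun x => ⟨x, (hBF _).2 x.2⟩
      left_inv := fun x => rfl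
      right_inv := fun x => rfl
      continuous_toFun := by fun_prop
      continuous_invFun := by fun_prop }
  let H := hF.trans h
  -- two points
  let z0 : ↥(Sph k) := ⟨EuclideanSpace.single 0 1, by simp⟩
  let z1 : ↥(Sph k) := ⟨-EuclideanSpace.single 0 1, by simp⟩
  have hz : z1 ≠ z0 := by
    intro hz
    have := congrArg (fun q : ↥(Sph k) => (q : EuclideanSpace ℝ (Fin (k + 1))) 0) hz
    simp [z0, z1] at this
    linarith
  have h0 : (H.symm z0 : EuclideanSpace ℝ (Fin (n + 1))) ∈ B.F := (H.symm z0).2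
  have hne : ∃ x ∈ B.F, x ≠ (H.symm z0 : EuclideanSpace ℝ (Fin (n + 1))) :=
    ⟨H.symm z1, (H.symm z1).2, fun hc => hz (H.symm.injective (Subtype.ext hc))⟩
  obtain ⟨V0, v1, v2, v3, v4⟩ := B.exists_V0 ⟨_, h0⟩ fun δ hδ => EqVF.exists_phi hkodd H hδ
  obtain ⟨J, j1, j2⟩ := EqVF.exists_J hn
  obtain ⟨x1, w1, w2, w3, w4⟩ := EqVF.exists_x1 J j1 j2 h0.1 (v4 _ h0) (v2 _ h0.1)
  have hdim : Module.finrank ℝ (ℝ ∙ (H.symm z0 : EuclideanSpace ℝ (Fin (n + 1))))ᗮ = n := by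
    haveI := Fact.mk (@finrank_euclideanSpace_fin ℝ _ (n + 1))
    exact Submodule.finrank_orthogonal_span_singleton (EqVF.ne0 h0.1)
  have hfree : ∀ x, ‖x‖ = 1 → x ∉ B.F → ∀ g, g ≠ 0 → B.a g x ≠ x := by
    intro x hx hxF g hg hgx
    apply hxF
    refine ⟨hx, fun g' => ?_⟩
    have hm : ∀ m : ℕ, B.a (m * g) x = x := by
      intro m
      induction m with
      | zero => simpa using B.zero x hx
      | succ m ih =>
        rw [Nat.cast_succ, add_mul, one_mul, B.add _ _ _ (EqVF.ne0 hx), hgx, ih]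
    have := hm (g' * g⁻¹).val
    rwa [ZMod.natCast_zmod_val, inv_mul_cancel_right₀ hg] at this
  obtain ⟨V, c1, c2⟩ := B.core x1 w1 w2 w3 hfree h0
    (by
      rw [hdim]
      obtain ⟨q, hq⟩ := hn
      rcases Nat.eq_zero_or_pos q with h | h
      · exact Or.inr ⟨by omega, hne⟩
      · exact Or.inl (by omega)) v1 v2 v3 v4 w4
  refine ⟨fun x => EqVF.LL n x (V x), EqVF.LL_cont c1, fun x => ?_, fun g x => ?_⟩
  · exact EqVF.LL_ne (hnorm x) (c2 x (hnorm x)).1 (c2 x (hnorm x)).2.1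
  · refine (EqVF.LL_act (act_smooth g) (EqVF.ne0 (hnorm x)) (EqVF.rr_coe x)).trans ?_
    rw [EqVF.rr_coe x]
    have := (c2 x (hnorm x)).2.2 g
    rw [hBa] at this
    exact congrArg (EqVF.LL n (act g x)) this
end

section
/- Let G be a compact Hausdorff topological group acting continuously on a topological space X, and let H ⊆ G be a closed subgroup. Then TC(X^H) ≤ TC_G(X). In particular, TC(X) ≤ TC_G(X). -/
open Set unitInterval

open PaperTC

theorem PaperTC.minCover_mono {P Q : ℕ → Prop} (h : ∀ k, P k → Q k) :
    minCover Q ≤ minCover P := by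
  apply sInf_le_sInf
  rintro k ⟨m, hk, h1, hm⟩
  exact ⟨m, hk, h1, h m hm⟩

theorem PaperTC.TCcover_fixedSetOf {G X : Type*} [TopologicalSpace X] (act : G → X → X)
    (S : Set G) (k : ℕ) (h : eqTCcover act k) : TCcover ↥(fixedSetOf act S) k := by
  classical
  obtain ⟨U, hUo, hUc, hU⟩ := h
  have hj : Continuous (fun p : ↥(fixedSetOf act S) × ↥(fixedSetOf act S) =>
      ((p.1 : X), (p.2 : X))) := by fun_prop
  refine ⟨fun i => (fun p => ((p.1 : X), (p.2 : X))) ⁻¹' U i,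
    fun i => (hUo i).preimage hj, ?_, fun i => ?_⟩
  · rw [← preimage_iUnion, hUc, preimage_univ]
  · obtain ⟨-, s, hs, hend, heq⟩ := hU i
    have hfix : ∀ p : ↥(fixedSetOf act S) × ↥(fixedSetOf act S),
        ((p.1 : X), (p.2 : X)) ∈ U i →
        ∀ t : I, s ((p.1 : X), (p.2 : X)) t ∈ fixedSetOf act S := by
      intro p hp t g hg
      have := heq g _ hp t
      simp only [p.1.2 g hg, p.2.2 g hg] at this
      exact this.symm
    refine ⟨fun p => if hp : ((p.1 : X), (p.2 : X)) ∈ U i then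
      ⟨fun t => ⟨s ((p.1 : X), (p.2 : X)) t, hfix p hp t⟩,
        (s ((p.1 : X), (p.2 : X))).continuous.subtype_mk _⟩
      else ContinuousMap.const I p.1, ?_, ?_⟩
    · rw [(ContinuousMap.isInducing_postcomp (X := I) ((⟨Subtype.val, continuous_subtype_val⟩ :
        C(↥(fixedSetOf act S), X))) Topology.IsInducing.subtypeVal).continuousOn_iff]
      refine (hs.comp hj.continuousOn (fun p hp => hp)).congr ?_
      intro p hp
      have hp' : ((p.1 : X), (p.2 : X)) ∈ U i := hp
      ext t
      simp [hp']
    · intro p hp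
      have hp' : ((p.1 : X), (p.2 : X)) ∈ U i := hp
      have := hend _ hp'
      simp only [hp', dif_pos]
      exact ⟨Subtype.ext this.1, Subtype.ext this.2⟩

/-- For a compact Hausdorff topological group `G` acting continuously on a
space `X` and a closed subgroup `H ⊆ G`, the topological complexity of the `H`-fixed point
set bounds the equivariant topological complexity from below; in particular
`TC(X) ≤ TC_G(X)`. -/
theorem TC_fixed_le_eqTC {G X : Type*} [Group G] [TopologicalSpace G]
    [IsTopologicalGroup G] [CompactSpace G] [T2Space G] [TopologicalSpace X]
    (act : G → X → X)
    (act_one : ∀ x, act 1 x = x)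
    (act_mul : ∀ g h x, act (g * h) x = act g (act h x))
    (act_cont : Continuous fun p : G × X => act p.1 p.2)
    (H : Subgroup G) (hH : IsClosed (H : Set G)) :
    TC ↥(fixedSetOf act (H : Set G)) ≤ eqTC act ∧ TC X ≤ eqTC act := by
  refine ⟨minCover_mono fun k hk => TCcover_fixedSetOf act _ k hk,
    minCover_mono fun k hk => ?_⟩
  obtain ⟨U, hUo, hUc, hU⟩ := hk
  refine ⟨U, hUo, hUc, fun i => ?_⟩
  obtain ⟨-, s, hs, hend, -⟩ := hU i
  exact ⟨s, hs, hend⟩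
end
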